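/- Let Ω ⊆ ℝⁿ be a C¹ domain, let a ∈ C¹([0,∞)) satisfy a(t) > 0 and (t·a(t))′ > 0 for all t ≥ 0, let f ∈ C¹(ℝ), and let u ∈ C²(Ω) ∩ C¹(cl Ω) be a non-constant stable weak solution of Δ_a u + f(u) = 0 in Ω. Let Ω₀ ⊆ Ω be a nonempty open connected set with ∂Ω₀ ⊆ ∂Ω ∪ crit(u), and let e ∈ ℝⁿ be such that ⟨∇u, e⟩ ≥ 0 at every point of (cl Ω₀) ∩ ∂Ω and ⟨∇u, e⟩ does not vanish identically on (cl Ω₀) ∩ ∂Ω. If u has moderate energy growth in Ω₀, then ⟨∇u, e⟩ > 0 at every point of Ω₀. -/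

import Mathlib

open MeasureTheory Set Metric Filter
open scoped RealInnerProductSpace Topology ENNReal

noncomputable section

variable {n : ℕ}

/-- The quasilinear operator matrix `A(p)` applied to a vector `v`:
`A(p)v = a(|p|) v + (a'(|p|)/|p|) ⟨p,v⟩ p` (with the second term vanishing at `p = 0`). -/
def Aop (a : ℝ → ℝ) (p v : EuclideanSpace ℝ (Fin n)) : EuclideanSpace ℝ (Fin n) :=
  a ‖p‖ • v + ((deriv a ‖p‖ / ‖p‖) * ⟪p, v⟫) • p

/-- `λ₁(t) = a(t) + t·a'(t) = (t a(t))'`. -/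
def lam1 (a : ℝ → ℝ) (t : ℝ) : ℝ := a t + t * deriv a t

/-- `λ₂(t) = a(t)`. -/
def lam2 (a : ℝ → ℝ) (t : ℝ) : ℝ := a t

/-- `λmax(t) = max{λ₁(t), λ₂(t)}`. -/
def lamMax (a : ℝ → ℝ) (t : ℝ) : ℝ := max (lam1 a t) (lam2 a t)

/-- A Lipschitz test function with compact support contained in `Ω`. -/
def IsTestOn (Ω : Set (EuclideanSpace ℝ (Fin n))) (φ : EuclideanSpace ℝ (Fin n) → ℝ) : Prop :=
  (∃ K, LipschitzWith K φ) ∧ HasCompactSupport φ ∧ tsupport φ ⊆ Ω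

/-- `u` is a weak solution of `div(a(|∇u|)∇u) + f(u) = 0` in `Ω`. -/
def IsWeakSolution (a f : ℝ → ℝ) (Ω : Set (EuclideanSpace ℝ (Fin n)))
    (u : EuclideanSpace ℝ (Fin n) → ℝ) : Prop :=
  ∀ φ : EuclideanSpace ℝ (Fin n) → ℝ, IsTestOn Ω φ →
    ∫ x in Ω, a ‖gradient u x‖ * ⟪gradient u x, gradient φ x⟫
      = ∫ x in Ω, f (u x) * φ x

/-- The stability inequality for a solution `u`. -/
def IsStable (a f : ℝ → ℝ) (Ω : Set (EuclideanSpace ℝ (Fin n)))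
    (u : EuclideanSpace ℝ (Fin n) → ℝ) : Prop :=
  ∀ φ : EuclideanSpace ℝ (Fin n) → ℝ, IsTestOn Ω φ →
    ∫ x in Ω, deriv f (u x) * φ x ^ 2
      ≤ ∫ x in Ω, ⟪Aop a (gradient u x) (gradient φ x), gradient φ x⟫

/-- `u` has moderate energy growth in `Ω₀`. -/
def ModerateEnergyGrowth (a : ℝ → ℝ) (u : EuclideanSpace ℝ (Fin n) → ℝ)
    (Ω₀ : Set (EuclideanSpace ℝ (Fin n))) : Prop :=
  ∃ φ : ℕ → EuclideanSpace ℝ (Fin n) → ℝ,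
    (∀ j, ∃ K, LipschitzWith K (φ j)) ∧
    (∀ j, HasCompactSupport (φ j)) ∧
    (∀ j x, 0 ≤ φ j x) ∧
    (∀ K : Set (EuclideanSpace ℝ (Fin n)), IsCompact K → K ⊆ closure Ω₀ →
      TendstoUniformlyOn (fun j => φ j) (fun _ => (1 : ℝ)) atTop K) ∧
    Tendsto (fun j => ∫ x in Ω₀, ‖gradient u x‖ ^ 2 *
        ⟪Aop a (gradient u x) (gradient (φ j) x), gradient (φ j) x⟫)
      atTop (nhds 0)

/-- A `C^k` domain: nonempty, open, connected, with boundary locally given by a regular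
`C^k` defining function. -/
def IsCkDomain (k : ℕ∞) (Ω : Set (EuclideanSpace ℝ (Fin n))) : Prop :=
  Ω.Nonempty ∧ IsOpen Ω ∧ IsConnected Ω ∧
    ∀ p ∈ frontier Ω, ∃ V : Set (EuclideanSpace ℝ (Fin n)),
      ∃ g : EuclideanSpace ℝ (Fin n) → ℝ,
        IsOpen V ∧ p ∈ V ∧ ContDiffOn ℝ k g V ∧ (∀ x ∈ V, gradient g x ≠ 0) ∧
        Ω ∩ V = {x ∈ V | g x < 0}

/-- A `C^k` domain together with its interior unit normal field `η`. -/
def IsCkDomainWithNormal (k : ℕ∞) (Ω : Set (EuclideanSpace ℝ (Fin n)))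
    (η : EuclideanSpace ℝ (Fin n) → EuclideanSpace ℝ (Fin n)) : Prop :=
  Ω.Nonempty ∧ IsOpen Ω ∧ IsConnected Ω ∧
    ∀ p ∈ frontier Ω, ∃ V : Set (EuclideanSpace ℝ (Fin n)),
      ∃ g : EuclideanSpace ℝ (Fin n) → ℝ,
        IsOpen V ∧ p ∈ V ∧ ContDiffOn ℝ k g V ∧ (∀ x ∈ V, gradient g x ≠ 0) ∧
        Ω ∩ V = {x ∈ V | g x < 0} ∧
        η p = -(‖gradient g p‖⁻¹ • gradient g p)

/-- `a ∈ C^{1,1}_loc([0,∞))`: `C¹` on `[0,∞)` with locally Lipschitz derivative. -/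
def C11Loc (a : ℝ → ℝ) : Prop :=
  ContDiffOn ℝ 1 a (Ici 0) ∧
    ∀ t ∈ Ici (0 : ℝ), ∃ V ∈ 𝓝[Ici (0 : ℝ)] t, ∃ K, LipschitzOnWith K (deriv a) V

/-- Sobolev-type gain, `n ≥ 2`. -/
theorem sob_ge2 (hn : 2 ≤ n) : ∃ θ : ℝ, 1 < θ ∧ ∃ C : ℝ, 0 < C ∧
    ∀ (g : EuclideanSpace ℝ (Fin n) → ℝ), ContDiff ℝ 1 g → HasCompactSupport g →
    ∀ S : Set (EuclideanSpace ℝ (Fin n)), (∀ x ∈ S, 1 ≤ g x) →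
      volume.real S ≤ C * (∫ x, ‖fderiv ℝ g x‖) ^ θ := by
  have hfr : Module.finrank ℝ (EuclideanSpace ℝ (Fin n)) = n := by simp
  have hn1 : (1 : NNReal) < (n : NNReal) := by exact_mod_cast (by omega : 1 < n)
  set p : NNReal := NNReal.conjExponent n with hp
  have hc : NNReal.HolderConjugate (n : NNReal) p := NNReal.HolderConjugate.conjExponent hn1
  have hp1 : 1 < p := hc.symm.lt
  set K : NNReal := eLpNormLESNormFDerivOneConst
    (volume : Measure (EuclideanSpace ℝ (Fin n))) p with hK
  refine ⟨p, by exact_mod_cast hp1, (K : ℝ) ^ (p : ℝ) + 1, by positivity, ?_⟩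
  intro g hg hgc S hS
  have h1 := eLpNorm_le_eLpNorm_fderiv_one (μ := (volume : Measure (EuclideanSpace ℝ (Fin n))))
    hg hgc (p := p) (by rw [hfr]; exact hc)
  have hInteg : Integrable (fun x => fderiv ℝ g x) :=
    (hg.continuous_fderiv (by simp)).integrable_of_hasCompactSupport (hgc.fderiv (𝕜 := ℝ))
  have h2 : eLpNorm (fderiv ℝ g) 1 volume = ENNReal.ofReal (∫ x, ‖fderiv ℝ g x‖) := by
    rw [eLpNorm_one_eq_lintegral_enorm, ofReal_integral_norm_eq_lintegral_enorm hInteg]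
  have hp0 : (0 : ℝ) < p := by exact_mod_cast (zero_lt_one.trans hp1)
  have h3 : volume S ≤ (eLpNorm g p volume) ^ (p : ℝ) := by
    rw [eLpNorm_eq_lintegral_rpow_enorm_toReal (by exact_mod_cast hp0.ne') (by simp)]
    simp only [ENNReal.coe_toReal]
    rw [← ENNReal.rpow_mul, one_div, inv_mul_cancel₀ hp0.ne', ENNReal.rpow_one]
    set S' := {x | 1 ≤ g x}
    have hS' : MeasurableSet S' := (isClosed_le continuous_const hg.continuous).measurableSet
    calc volume S ≤ volume S' := measure_mono hS
      _ = ∫⁻ x in S', 1 := by simp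
      _ ≤ ∫⁻ x in S', ‖g x‖ₑ ^ (p : ℝ) := by
          apply setLIntegral_mono' hS'
          intro x hx
          have : (1 : ℝ≥0∞) ≤ ‖g x‖ₑ := by
            rw [← ofReal_norm, ENNReal.one_le_ofReal]
            exact le_trans hx (le_abs_self _)
          exact ENNReal.one_le_rpow this hp0
      _ ≤ _ := setLIntegral_le_lintegral _ _
  have h4 : volume S ≤ (K * ENNReal.ofReal (∫ x, ‖fderiv ℝ g x‖)) ^ (p : ℝ) := by
    refine h3.trans ?_
    rw [h2] at h1
    exact ENNReal.rpow_le_rpow h1 hp0.le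
  have h5 : volume.real S ≤ ((K * ENNReal.ofReal (∫ x, ‖fderiv ℝ g x‖)) ^ (p : ℝ)).toReal := by
    apply ENNReal.toReal_mono _ h4
    exact ENNReal.rpow_ne_top_of_nonneg hp0.le (ENNReal.mul_ne_top (by simp) (by simp))
  have hI : 0 ≤ ∫ x, ‖fderiv ℝ g x‖ := integral_nonneg fun _ => norm_nonneg _
  refine h5.trans ?_
  rw [← ENNReal.toReal_rpow, ENNReal.toReal_mul, ENNReal.toReal_ofReal hI, ENNReal.coe_toReal,
    Real.mul_rpow (by positivity) hI]
  have : 0 ≤ (∫ x, ‖fderiv ℝ g x‖) ^ (p : ℝ) := by positivity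
  nlinarith

theorem sob_one (V : ℝ) (hV : 0 ≤ V) :
    ∀ (g : EuclideanSpace ℝ (Fin 1) → ℝ), ContDiff ℝ 1 g → HasCompactSupport g →
    ∀ S : Set (EuclideanSpace ℝ (Fin 1)), (∀ x ∈ S, 1 ≤ g x) → volume.real S ≤ V →
      volume.real S ≤ V * (∫ x, ‖fderiv ℝ g x‖) ^ (2 : ℝ) := by
  intro g hg hgc S hS hSV
  have hI : 0 ≤ ∫ x, ‖fderiv ℝ g x‖ := integral_nonneg fun _ => norm_nonneg _
  rcases S.eq_empty_or_nonempty with rfl | ⟨x, hx⟩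
  · simp; positivity
  have hInteg : Integrable (fun x => fderiv ℝ g x) :=
    (hg.continuous_fderiv (by simp)).integrable_of_hasCompactSupport (hgc.fderiv (𝕜 := ℝ))
  -- the line
  let e0 : EuclideanSpace ℝ (Fin 1) := EuclideanSpace.single 0 1
  have he0 : ‖e0‖ = 1 := by simp [e0]
  let ι : ℝ → EuclideanSpace ℝ (Fin 1) := fun t => t • e0
  have hι : MeasurePreserving ι := by
    have h1 := (volume_preserving_funUnique (Fin 1) ℝ).symm
    have h2 := (PiLp.volume_preserving_toLp (Fin 1)).comp h1
    have h3 : ι = WithLp.toLp 2 ∘ (MeasurableEquiv.funUnique (Fin 1) ℝ).symm := by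
      funext t
      ext i
      have : i = 0 := Subsingleton.elim _ _
      subst this
      simp [ι, e0, MeasurableEquiv.funUnique]
    rw [h3]
    exact h2
  have hιc : ContDiff ℝ 1 ι := contDiff_id.smul contDiff_const
  have hcl : Topology.IsClosedEmbedding ι := by
    apply Isometry.isClosedEmbedding
    apply Isometry.of_dist_eq
    intro s t
    simp only [ι, dist_eq_norm, ← sub_smul, norm_smul, he0, mul_one]
  have hxe : ι (x 0) = x := by
    ext i
    have : i = 0 := Subsingleton.elim _ _
    subst this
    simp [ι, e0]
  have h1 := HasCompactSupport.enorm_le_lintegral_Ici_deriv (hg.comp hιc)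
    (hgc.comp_isClosedEmbedding hcl) (x 0)
  have h2 : ∫⁻ y in Iic (x 0), ‖deriv (g ∘ ι) y‖ₑ ≤ ∫⁻ y, ‖fderiv ℝ g (ι y)‖ₑ := by
    refine (setLIntegral_le_lintegral _ _).trans (lintegral_mono fun y => ?_)
    have hd : HasDerivAt (g ∘ ι) (fderiv ℝ g (ι y) e0) y := by
      apply HasFDerivAt.comp_hasDerivAt
      · exact (hg.differentiable (by simp) _).hasFDerivAt
      · simpa [ι] using (hasDerivAt_id y).smul_const e0
    rw [hd.deriv]
    rw [enorm_le_iff_norm_le]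
    have := (fderiv ℝ g (ι y)).le_opNorm e0
    rwa [he0, mul_one] at this
  have hcm : Measurable (fun x => ‖fderiv ℝ g x‖ₑ) :=
    (measurable_fderiv ℝ g).enorm
  have h3 : ∫⁻ y, ‖fderiv ℝ g (ι y)‖ₑ = ∫⁻ y, ‖fderiv ℝ g y‖ₑ := by
    exact hι.lintegral_comp hcm
  have h4 : (1 : ℝ) ≤ ∫ x, ‖fderiv ℝ g x‖ := by
    have h5 : (1 : ℝ≥0∞) ≤ ‖(g ∘ ι) (x 0)‖ₑ := by
      rw [← ofReal_norm, ENNReal.one_le_ofReal]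
      simp only [Function.comp, hxe]
      exact le_trans (hS x hx) (le_abs_self _)
    have h6 := (h5.trans h1).trans (h2.trans h3.le)
    rw [← ofReal_integral_norm_eq_lintegral_enorm hInteg, ENNReal.one_le_ofReal] at h6
    exact h6
  have h5 : 1 ≤ (∫ x, ‖fderiv ℝ g x‖) ^ (2 : ℝ) := Real.one_le_rpow h4 (by norm_num)
  nlinarith

theorem sob (hn : n ≠ 0) (V : ℝ) (hV : 0 ≤ V) : ∃ θ : ℝ, 1 < θ ∧ ∃ C : ℝ, 0 < C ∧
    ∀ (g : EuclideanSpace ℝ (Fin n) → ℝ), ContDiff ℝ 1 g → HasCompactSupport g →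
    ∀ S : Set (EuclideanSpace ℝ (Fin n)), (∀ x ∈ S, 1 ≤ g x) → volume.real S ≤ V →
      volume.real S ≤ C * (∫ x, ‖fderiv ℝ g x‖) ^ θ := by
  rcases Nat.lt_or_ge 1 n with h | h
  · obtain ⟨θ, h1, C, h2, h3⟩ := sob_ge2 (n := n) h
    exact ⟨θ, h1, C, h2, fun g hg hgc S hS _ => h3 g hg hgc S hS⟩
  · obtain rfl : n = 1 := by omega
    refine ⟨2, by norm_num, V + 1, by linarith, fun g hg hgc S hS h => ?_⟩
    have := sob_one V hV g hg hgc S hS h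
    have h6 : 0 ≤ (∫ x, ‖fderiv ℝ g x‖) ^ (2 : ℝ) :=
      Real.rpow_nonneg (integral_nonneg fun _ => norm_nonneg _) _
    refine this.trans ?_
    exact mul_le_mul_of_nonneg_right (by linarith) h6

theorem st_deriv_bdd : ∃ M : ℝ, 1 ≤ M ∧ ∀ t, |deriv Real.smoothTransition t| ≤ M := by
  have hc : Continuous (deriv Real.smoothTransition) :=
    (Real.smoothTransition.contDiff (n := 1)).continuous_deriv (by simp)
  obtain ⟨M, hM⟩ := (isCompact_Icc (a := (0 : ℝ)) (b := 1)).exists_bound_of_continuousOn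
    hc.continuousOn
  refine ⟨max M 1, le_max_right _ _, fun t => ?_⟩
  by_cases h : t ∈ Icc (0 : ℝ) 1
  · exact (hM t h).trans (le_max_left _ _)
  · have : deriv Real.smoothTransition t = 0 := by
      rw [mem_Icc, not_and_or, not_le, not_le] at h
      rcases h with h | h
      · have : Real.smoothTransition =ᶠ[𝓝 t] fun _ => 0 := by
          filter_upwards [Iio_mem_nhds h] with s hs
          exact Real.smoothTransition.zero_of_nonpos (le_of_lt hs)
        rw [this.deriv_eq]; simp
      · have : Real.smoothTransition =ᶠ[𝓝 t] fun _ => 1 := by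
          filter_upwards [Ioi_mem_nhds h] with s hs
          exact Real.smoothTransition.one_of_one_le (le_of_lt hs)
        rw [this.deriv_eq]; simp
    rw [this, abs_zero]; positivity

theorem fast_conv (Y : ℕ → ℝ) (hY : ∀ i, 0 ≤ Y i) (C B θ : ℝ) (hC : 0 < C) (hB : 1 ≤ B)
    (hθ : 1 < θ) (hrec : ∀ i, Y (i + 1) ≤ C * (B ^ i * Y i) ^ θ)
    (δ σ : ℝ) (hδ : 0 < δ) (hσ : σ = B ^ (-(θ / (θ - 1)))) (hδσ : C * δ ^ (θ - 1) ≤ σ)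
    (h0 : Y 0 ≤ δ) : ∀ i, Y i ≤ δ * σ ^ i := by
  have hB0 : 0 < B := by linarith
  have hσ0 : 0 < σ := by rw [hσ]; positivity
  have hθ1 : 0 < θ - 1 := by linarith
  have key : B ^ θ * σ ^ (θ - 1) = 1 := by
    rw [hσ, ← Real.rpow_mul hB0.le, ← Real.rpow_add hB0]
    have : θ + -(θ / (θ - 1)) * (θ - 1) = 0 := by field_simp; ring
    rw [this, Real.rpow_zero]
  intro i
  induction i with
  | zero => simpa using h0
  | succ i ih =>
    refine (hrec i).trans ?_
    have h1 : (B ^ i * Y i) ^ θ ≤ (B ^ i * (δ * σ ^ i)) ^ θ := by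
      apply Real.rpow_le_rpow (mul_nonneg (by positivity) (hY i)) _ (by linarith)
      gcongr
    have h2 : (B ^ i * (δ * σ ^ i)) ^ θ = (B ^ θ * σ ^ (θ - 1)) ^ i * (δ * δ ^ (θ - 1)) * σ ^ i := by
      rw [Real.mul_rpow (by positivity) (by positivity), Real.mul_rpow (by positivity) (by positivity)]
      have e1 : (B ^ i) ^ θ = (B ^ θ) ^ i := by
        rw [← Real.rpow_natCast, ← Real.rpow_natCast, ← Real.rpow_mul hB0.le,
          ← Real.rpow_mul hB0.le, mul_comm]
      have e2 : (σ ^ i) ^ θ = (σ ^ (θ - 1)) ^ i * σ ^ i := by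
        rw [← Real.rpow_natCast, ← Real.rpow_natCast, ← Real.rpow_mul hσ0.le,
          ← Real.rpow_mul hσ0.le, ← Real.rpow_add hσ0]
        congr 1; ring
      have e3 : δ ^ θ = δ * δ ^ (θ - 1) := by
        nth_rw 2 [← Real.rpow_one δ]
        rw [← Real.rpow_add hδ]; congr 1; ring
      rw [e1, e2, e3, mul_pow]; ring
    rw [h2, key, one_pow, one_mul] at h1
    calc C * (B ^ i * Y i) ^ θ ≤ C * (δ * δ ^ (θ - 1) * σ ^ i) := by gcongr
      _ = (C * δ ^ (θ - 1)) * (δ * σ ^ i) := by ring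
      _ ≤ σ * (δ * σ ^ i) := by gcongr
      _ = _ := by ring
/-- `f` is Lipschitz near `x`. -/
def LipAt (f : EuclideanSpace ℝ (Fin n) → ℝ) (x : EuclideanSpace ℝ (Fin n)) : Prop :=
  ∃ K, ∃ t ∈ 𝓝 x, LipschitzOnWith K f t

theorem LipAt.comp {f : EuclideanSpace ℝ (Fin n) → ℝ} {x : EuclideanSpace ℝ (Fin n)}
    (hf : LipAt f x) {G : ℝ → ℝ} (hG : ContDiffAt ℝ 1 G (f x)) : LipAt (fun y => G (f y)) x := by
  obtain ⟨K, t, ht, hK⟩ := hf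
  obtain ⟨K', t', ht', hK'⟩ := hG.exists_lipschitzOnWith
  have hc : ContinuousAt f x := hK.continuousOn.continuousAt ht
  refine ⟨K' * K, t ∩ f ⁻¹' t', inter_mem ht (hc ht'), ?_⟩
  exact hK'.comp (hK.mono inter_subset_left) (fun y hy => hy.2)

theorem LipAt.mul {f g : EuclideanSpace ℝ (Fin n) → ℝ} {x : EuclideanSpace ℝ (Fin n)}
    (hf : LipAt f x) (hg : LipAt g x) : LipAt (fun y => f y * g y) x := by
  obtain ⟨K, t, ht, hK⟩ := hf
  obtain ⟨K', t', ht', hK'⟩ := hg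
  have hG : ContDiffAt ℝ 1 (fun p : ℝ × ℝ => p.1 * p.2) (f x, g x) :=
    (contDiff_fst.mul contDiff_snd).contDiffAt
  obtain ⟨K'', t'', ht'', hK''⟩ := hG.exists_lipschitzOnWith
  have hp := (hK.mono (inter_subset_left (t := t'))).prodMk (hK'.mono (inter_subset_right (s := t)))
  have hc : ContinuousAt (fun y => (f y, g y)) x :=
    hp.continuousOn.continuousAt (inter_mem ht ht')
  refine ⟨K'' * max K K', (t ∩ t') ∩ (fun y => (f y, g y)) ⁻¹' t'',
    inter_mem (inter_mem ht ht') (hc ht''), ?_⟩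
  exact hK''.comp (hp.mono inter_subset_left) (fun y hy => hy.2)

theorem LipAt.max_sub {f : EuclideanSpace ℝ (Fin n) → ℝ} {x : EuclideanSpace ℝ (Fin n)}
    (hf : LipAt f x) (s : ℝ) : LipAt (fun y => max (s - f y) 0) x := by
  obtain ⟨K, t, ht, hK⟩ := hf
  refine ⟨K, t, ht, ?_⟩
  rw [lipschitzOnWith_iff_dist_le_mul] at hK ⊢
  intro y hy z hz
  refine le_trans ?_ (hK y hy z hz)
  rw [Real.dist_eq, Real.dist_eq]
  refine (abs_max_sub_max_le_abs _ _ _).trans ?_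
  rw [abs_sub_comm (f y)]
  apply le_of_eq; congr 1; ring

theorem LipAt.of_contDiffAt {f : EuclideanSpace ℝ (Fin n) → ℝ} {x : EuclideanSpace ℝ (Fin n)}
    (hf : ContDiffAt ℝ 1 f x) : LipAt f x := hf.exists_lipschitzOnWith

theorem LipAt.of_lip {f : EuclideanSpace ℝ (Fin n) → ℝ} {x : EuclideanSpace ℝ (Fin n)} {K}
    (hf : LipschitzWith K f) : LipAt f x := ⟨K, univ, univ_mem, hf.lipschitzOnWith⟩

theorem lip_of_lipAt {f : EuclideanSpace ℝ (Fin n) → ℝ} (hc : HasCompactSupport f)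
    (h : ∀ x ∈ tsupport f, LipAt f x) : ∃ K, LipschitzWith K f := by
  have hall : ∀ x, LipAt f x := by
    intro x
    by_cases hx : x ∈ tsupport f
    · exact h x hx
    · refine ⟨0, (tsupport f)ᶜ, (isClosed_tsupport f).isOpen_compl.mem_nhds hx, ?_⟩
      rw [lipschitzOnWith_iff_dist_le_mul]
      intro y hy z hz
      rw [image_eq_zero_of_notMem_tsupport hy, image_eq_zero_of_notMem_tsupport hz]; simp
  have hcont : Continuous f := continuous_iff_continuousAt.2 fun x => by
    obtain ⟨K, t, ht, hK⟩ := hall x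
    exact hK.continuousOn.continuousAt ht
  obtain ⟨r, hr⟩ := hc.isCompact.isBounded.subset_ball (0 : EuclideanSpace ℝ (Fin n))
  obtain ⟨M, hM⟩ := hc.exists_bound_of_continuous hcont
  have hM0 : 0 ≤ M := (norm_nonneg _).trans (hM 0)
  obtain ⟨K, hK⟩ := LocallyLipschitzOn.exists_lipschitzOnWith_of_compact
    (isCompact_closedBall (0 : EuclideanSpace ℝ (Fin n)) (r + 1)) (f := f) (by
      intro x _
      obtain ⟨K, t, ht, hK⟩ := hall x
      exact ⟨K, t, mem_nhdsWithin_of_mem_nhds ht, hK⟩)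
  rw [lipschitzOnWith_iff_dist_le_mul] at hK
  refine ⟨K + ⟨M, hM0⟩, ?_⟩
  have key : ∀ x y, x ∈ closedBall (0 : EuclideanSpace ℝ (Fin n)) (r + 1) →
      y ∉ closedBall (0 : EuclideanSpace ℝ (Fin n)) (r + 1) →
      dist (f x) (f y) ≤ (K + M) * dist x y := by
    intro x y hx hy
    have hfy : f y = 0 := by
      apply image_eq_zero_of_notMem_tsupport
      intro h'
      apply hy
      have := hr h'
      simp at this ⊢; linarith
    by_cases hfx : f x = 0
    · rw [hfx, hfy, dist_self]; positivity
    · have hx' := hr (subset_tsupport f hfx)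
      have h1 : 1 ≤ dist x y := by
        simp at hx' hy
        have := norm_sub_norm_le y x
        rw [dist_comm, dist_eq_norm]; linarith
      have h2 := hM x
      rw [hfy, dist_zero_right]
      have : (0 : ℝ) ≤ K := K.2
      nlinarith
  apply LipschitzWith.of_dist_le_mul
  intro x y
  change dist (f x) (f y) ≤ (K + M) * dist x y
  by_cases hx : x ∈ closedBall (0 : EuclideanSpace ℝ (Fin n)) (r + 1) <;>
  by_cases hy : y ∈ closedBall (0 : EuclideanSpace ℝ (Fin n)) (r + 1)
  · refine (hK x hx y hy).trans ?_
    gcongr; linarith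
  · exact key x y hx hy
  · rw [dist_comm, dist_comm x]; exact key y x hy hx
  · have h0 : ∀ z, z ∉ closedBall (0 : EuclideanSpace ℝ (Fin n)) (r + 1) → f z = 0 := by
      intro z hz
      apply image_eq_zero_of_notMem_tsupport
      intro h'
      apply hz
      have := hr h'
      simp at this ⊢; linarith
    rw [h0 x hx, h0 y hy, dist_self]; positivity

theorem hasDerivAt_max_comp {K K' : ℝ → ℝ} (hK : ∀ m ≥ 0, HasDerivAt K (K' m) m)
    (h0 : K 0 = 0) (h0' : K' 0 = 0) (r : ℝ) :
    HasDerivAt (fun r => K (max r 0)) (K' (max r 0)) r := by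
  rcases lt_trichotomy r 0 with h | h | h
  · rw [max_eq_right h.le, h0']
    have : (fun r => K (max r 0)) =ᶠ[𝓝 r] fun _ => 0 := by
      filter_upwards [Iio_mem_nhds h] with s hs
      rw [max_eq_right (le_of_lt hs), h0]
    exact (hasDerivAt_const r (0 : ℝ)).congr_of_eventuallyEq this
  · subst h
    have h1 : HasDerivWithinAt (fun r => K (max r 0)) (K' (max 0 0)) (Iic 0) 0 := by
      rw [max_self, h0']
      refine (hasDerivWithinAt_const (0 : ℝ) _ (0 : ℝ)).congr ?_ ?_
      · intro s hs; rw [max_eq_right hs, h0]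
      · rw [max_self, h0]
    have h2 : HasDerivWithinAt (fun r => K (max r 0)) (K' (max 0 0)) (Ici 0) 0 := by
      rw [max_self]
      refine (hK 0 le_rfl).hasDerivWithinAt.congr ?_ ?_
      · intro s hs; rw [max_eq_left hs]
      · rw [max_self]
    have := h1.union h2
    rwa [Iic_union_Ici, hasDerivWithinAt_univ] at this
  · rw [max_eq_left h.le]
    have : (fun r => K (max r 0)) =ᶠ[𝓝 r] K := by
      filter_upwards [Ioi_mem_nhds h] with s hs
      rw [max_eq_left (le_of_lt hs)]
    exact (hK r h.le).congr_of_eventuallyEq this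

theorem inner_grad (f : EuclideanSpace ℝ (Fin n) → ℝ) (x y : EuclideanSpace ℝ (Fin n)) :
    ⟪y, gradient f x⟫ = fderiv ℝ f x y := by
  rw [real_inner_comm, gradient, InnerProductSpace.toDual_symm_apply]

theorem norm_grad (f : EuclideanSpace ℝ (Fin n) → ℝ) (x : EuclideanSpace ℝ (Fin n)) :
    ‖gradient f x‖ = ‖fderiv ℝ f x‖ := by
  rw [gradient, LinearIsometryEquiv.norm_map]

theorem measurable_grad (f : EuclideanSpace ℝ (Fin n) → ℝ) : Measurable (gradient f) := by
  unfold gradient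
  exact (LinearIsometryEquiv.continuous _).measurable.comp (measurable_fderiv ℝ f)

theorem grad_eq_zero_of_notMem {f : EuclideanSpace ℝ (Fin n) → ℝ} {x : EuclideanSpace ℝ (Fin n)}
    (hx : x ∉ tsupport f) : gradient f x = 0 := by
  rw [gradient, fderiv_of_notMem_tsupport ℝ hx, map_zero]

theorem intOn_bdd {E : Type*} [NormedAddCommGroup E] {P : Set (EuclideanSpace ℝ (Fin n))}
    (hP : volume P ≠ ∞) (hPm : MeasurableSet P) {f : EuclideanSpace ℝ (Fin n) → E}
    (hf : AEStronglyMeasurable f (volume.restrict P)) (M : ℝ) (hM : ∀ x ∈ P, ‖f x‖ ≤ M) :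
    IntegrableOn f P := by
  have : IsFiniteMeasure (volume.restrict P) := ⟨by simpa using hP.lt_top⟩
  exact Integrable.of_bound hf M ((ae_restrict_mem hPm).mono hM)

theorem energy_alg {G K' d η lam p w Lam C0 F' q r c v : ℝ} (hlam : 0 < lam) (hG0 : 0 ≤ G)
    (hC0 : 0 ≤ C0) (hw0 : 0 < w) (hv : 0 < v) (hvw : v * w ≤ 1) (hη : 0 ≤ η)
    (hF'le : F' ≤ -(G * w ^ 2)) (hX1 : lam * p ^ 2 ≤ q) (hq0 : 0 ≤ q) (hinn : r ≤ Lam * p * d)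
    (hcb : |c| ≤ C0) (hK' : K' = 2 * Lam ^ 2 / lam + C0) :
    η ^ 2 * F' * q + 2 * (G * w) * η * r - c * (v * (η * η * (G * w))) ≤
      G * (K' * (d ^ 2 + η ^ 2)) - lam / 2 * (G * (η * (p * w)) ^ 2) := by
  have t1 : η ^ 2 * F' * q ≤ - (G * w ^ 2) * η ^ 2 * (lam * p ^ 2) := by
    have a1 : η ^ 2 * F' * q ≤ η ^ 2 * (-(G * w ^ 2)) * q := by gcongr
    have a2 : 0 ≤ η ^ 2 * (G * w ^ 2) := by positivity
    have a3 := mul_le_mul_of_nonneg_left hX1 a2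
    linarith
  have t2 : 2 * (G * w) * η * r ≤ 2 * (G * w) * η * (Lam * p * d) :=
    mul_le_mul_of_nonneg_left hinn (by positivity)
  have t3 : -(c * (v * (η * η * (G * w)))) ≤ C0 * (G * η ^ 2) := by
    have b1 : v * (η * η * (G * w)) = (v * w) * (G * η ^ 2) := by ring
    have b2 : 0 ≤ v * (η * η * (G * w)) := by positivity
    have b3 : v * (η * η * (G * w)) ≤ G * η ^ 2 := by
      rw [b1]
      exact mul_le_of_le_one_left (by positivity) hvw
    have b4 : - c ≤ C0 := (neg_le_abs _).trans hcb
    calc -(c * (v * (η * η * (G * w)))) = (- c) * (v * (η * η * (G * w))) := by ring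
      _ ≤ C0 * (v * (η * η * (G * w))) := by gcongr
      _ ≤ _ := by gcongr
  have t4 : 2 * (w * p * η) * (Lam * d) ≤
      lam / 2 * (w * p * η) ^ 2 + 2 * Lam ^ 2 / lam * d ^ 2 := by
    have e : lam / 2 * (w * p * η) ^ 2 + 2 * Lam ^ 2 / lam * d ^ 2
      - 2 * (w * p * η) * (Lam * d)
      = (lam * (w * p * η) - 2 * (Lam * d)) ^ 2 / (2 * lam) := by field_simp; ring
    have : 0 ≤ (lam * (w * p * η) - 2 * (Lam * d)) ^ 2 / (2 * lam) := by positivity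
    linarith
  have t5 := mul_le_mul_of_nonneg_left t4 hG0
  have t6 : 0 ≤ G * (C0 * d ^ 2) := by positivity
  have t7 : 0 ≤ G * (2 * Lam ^ 2 / lam * η ^ 2) := by positivity
  rw [hK']
  set z := 2 * Lam ^ 2 / lam
  ring_nf at t1 t2 t3 t5 t6 t7 ⊢
  linarith

/-- Local data for the strong maximum principle. -/
structure LocSol (x0 : EuclideanSpace ℝ (Fin n)) (R : ℝ) (v : EuclideanSpace ℝ (Fin n) → ℝ)
    (X : EuclideanSpace ℝ (Fin n) → EuclideanSpace ℝ (Fin n)) (c : EuclideanSpace ℝ (Fin n) → ℝ)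
    (L : NNReal) (lam Lam C0 : ℝ) : Prop where
  hR : 0 < R
  nonneg : ∀ x ∈ ball x0 R, 0 ≤ v x
  lip : LipschitzOnWith L v (ball x0 R)
  c1 : ContDiffOn ℝ 1 v (ball x0 R ∩ {x | 0 < v x})
  Xc : ContinuousOn X (ball x0 R)
  lam_pos : 0 < lam
  Lam_nonneg : 0 ≤ Lam
  C0_nonneg : 0 ≤ C0
  ell1 : ∀ x ∈ ball x0 R, 0 < v x → lam * ‖gradient v x‖ ^ 2 ≤ ⟪X x, gradient v x⟫
  ell2 : ∀ x ∈ ball x0 R, 0 < v x → ‖X x‖ ≤ Lam * ‖gradient v x‖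
  cc : ContinuousOn c (ball x0 R)
  cb : ∀ x ∈ ball x0 R, |c x| ≤ C0
  weak : ∀ ξ : EuclideanSpace ℝ (Fin n) → ℝ, IsTestOn (ball x0 R) ξ →
    ∫ x in ball x0 R ∩ {x | 0 < v x}, ⟪X x, gradient ξ x⟫
      = ∫ x in ball x0 R ∩ {x | 0 < v x}, c x * (v x * ξ x)

namespace LocSol

variable {x0 : EuclideanSpace ℝ (Fin n)} {R : ℝ} {v : EuclideanSpace ℝ (Fin n) → ℝ}
    {X : EuclideanSpace ℝ (Fin n) → EuclideanSpace ℝ (Fin n)} {c : EuclideanSpace ℝ (Fin n) → ℝ}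
    {L : NNReal} {lam Lam C0 : ℝ}

theorem isOpen_P (h : LocSol x0 R v X c L lam Lam C0) :
    IsOpen (ball x0 R ∩ {x | 0 < v x}) :=
  h.lip.continuousOn.isOpen_inter_preimage isOpen_ball isOpen_Ioi

theorem isOpen_lt (h : LocSol x0 R v X c L lam Lam C0) (s : ℝ) :
    IsOpen (ball x0 R ∩ {x | v x < s}) :=
  h.lip.continuousOn.isOpen_inter_preimage isOpen_ball isOpen_Iio

theorem diff (h : LocSol x0 R v X c L lam Lam C0) {x} (hx : x ∈ ball x0 R) (hv : 0 < v x) :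
    DifferentiableAt ℝ v x :=
  (h.c1.contDiffAt (h.isOpen_P.mem_nhds ⟨hx, hv⟩)).differentiableAt (by simp)

theorem grad_le (h : LocSol x0 R v X c L lam Lam C0) {x} (hx : x ∈ ball x0 R) :
    ‖gradient v x‖ ≤ L := by
  rw [norm_grad]
  exact norm_fderiv_le_of_lipschitzOn ℝ (isOpen_ball.mem_nhds hx) h.lip

theorem v_le (h : LocSol x0 R v X c L lam Lam C0) {x} (hx : x ∈ ball x0 R) :
    v x ≤ v x0 + L * R := by
  have := h.lip.dist_le_mul x hx x0 (mem_ball_self h.hR)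
  rw [Real.dist_eq] at this
  have h2 := le_abs_self (v x - v x0)
  have h3 : (L : ℝ) * dist x x0 ≤ L * R := by
    gcongr; exact (mem_ball.1 hx).le
  linarith

set_option maxHeartbeats 2000000 in
theorem energy (h : LocSol x0 R v X c L lam Lam C0) {η : EuclideanSpace ℝ (Fin n) → ℝ}
    (hη : ContDiff ℝ 1 η) {ρ : ℝ} (hηs : tsupport η ⊆ closedBall x0 ρ) (hρ : ρ < R)
    (hη0 : ∀ x, 0 ≤ η x) (hη1 : ∀ x, η x ≤ 1) {D : ℝ} (hD : ∀ x, ‖fderiv ℝ η x‖ ≤ D)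
    {s s' ε : ℝ} (hs : 0 < s) (hss : s < s') (hε : 0 < ε) :
    ∫ x in (ball x0 R ∩ {x | 0 < v x}) ∩ {x | v x < s},
      (η x * (‖gradient v x‖ / (v x + ε))) ^ 2
      ≤ 2 / lam * (2 * Lam ^ 2 / lam + C0) * (s' / (s' - s)) ^ 2 * (1 + D ^ 2) *
        volume.real ({x | v x < s'} ∩ closedBall x0 ρ) := by
  have hlam := h.lam_pos
  set P := ball x0 R ∩ {x | 0 < v x} with hP
  have hPo : IsOpen P := h.isOpen_P
  have hcB : closedBall x0 ρ ⊆ ball x0 R := closedBall_subset_ball hρ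
  have hvc : ContinuousOn v (ball x0 R) := h.lip.continuousOn
  have hPm : MeasurableSet P := hPo.measurableSet
  have hPfin : volume P ≠ ∞ := (measure_mono inter_subset_left).trans_lt measure_ball_lt_top |>.ne
  set ξ : EuclideanSpace ℝ (Fin n) → ℝ :=
    fun x => η x * η x * ((max (s' - v x) 0) ^ 2 * (v x + ε)⁻¹) with hξ
  have hsub : tsupport ξ ⊆ tsupport η := by
    apply closure_mono
    intro x hx hx'
    apply hx
    simp [hξ, hx']
  have hηcs : HasCompactSupport η :=
    HasCompactSupport.of_support_subset_isCompact (isCompact_closedBall x0 ρ)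
      ((subset_tsupport η).trans hηs)
  have hξcs : HasCompactSupport ξ :=
    HasCompactSupport.of_support_subset_isCompact hηcs.isCompact ((subset_tsupport ξ).trans hsub)
  have hvlip : ∀ x ∈ ball x0 R, LipAt v x := fun x hx =>
    ⟨L, ball x0 R, isOpen_ball.mem_nhds hx, h.lip⟩
  have hξlip : ∃ K, LipschitzWith K ξ := by
    apply lip_of_lipAt hξcs
    intro x hx
    have hxb : x ∈ ball x0 R := hcB (hηs (hsub hx))
    have hηx : LipAt η x := LipAt.of_contDiffAt hη.contDiffAt
    have h1 := (hvlip x hxb).max_sub s'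
    have h2 : LipAt (fun y => (max (s' - v y) 0) ^ 2) x :=
      h1.comp (G := fun t => t ^ 2) (contDiff_id.pow 2).contDiffAt
    have h3 : LipAt (fun y => (v y + ε)⁻¹) x := by
      apply (hvlip x hxb).comp (G := fun t => (t + ε)⁻¹)
      apply ContDiffAt.inv
      · exact (contDiff_id.add contDiff_const).contDiffAt
      · have := h.nonneg x hxb; simp; linarith
    exact (hηx.mul hηx).mul (h2.mul h3)
  have htest : IsTestOn (ball x0 R) ξ := ⟨hξlip, hξcs, (hsub.trans hηs).trans hcB⟩
  have hweak := h.weak ξ htest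
  obtain ⟨Kξ, hKξ⟩ := hξlip
  have hξc : Continuous ξ := hKξ.continuous
  obtain ⟨Mξ, hMξ⟩ := hξcs.exists_bound_of_continuous hξc
  -- integrability
  have hi1 : IntegrableOn (fun x => ⟪X x, gradient ξ x⟫) P := by
    refine intOn_bdd hPfin hPm ?_ ((Lam * L) * Kξ) ?_
    · exact ((h.Xc.mono inter_subset_left).aestronglyMeasurable hPm).inner (𝕜 := ℝ)
        (measurable_grad ξ).aestronglyMeasurable
    · intro x hx
      refine (norm_inner_le_norm _ _).trans ?_
      have h1 := h.ell2 x hx.1 hx.2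
      have h2 := h.grad_le hx.1
      have h3 : ‖gradient ξ x‖ ≤ Kξ := by
        rw [norm_grad]; exact norm_fderiv_le_of_lipschitz ℝ hKξ
      have h4 : ‖X x‖ ≤ Lam * L := h1.trans (by gcongr; exact h.Lam_nonneg)
      exact mul_le_mul h4 h3 (norm_nonneg _) ((norm_nonneg _).trans h4)
  have hi2 : IntegrableOn (fun x => c x * (v x * ξ x)) P := by
    refine intOn_bdd hPfin hPm ?_ (C0 * ((v x0 + L * R) * Mξ)) ?_
    · exact (((h.cc.mono inter_subset_left)).mul ((hvc.mono inter_subset_left).mul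
        hξc.continuousOn)).aestronglyMeasurable hPm
    · intro x hx
      rw [norm_mul, norm_mul]
      have h1 := h.cb x hx.1
      have h2 := h.v_le hx.1
      have h2' : ‖v x‖ ≤ v x0 + L * R := by rw [Real.norm_of_nonneg (le_of_lt hx.2)]; exact h2
      have h3 := hMξ x
      exact mul_le_mul h1 (mul_le_mul h2' h3 (norm_nonneg _) ((norm_nonneg _).trans h2'))
        (by positivity) h.C0_nonneg
  set K' := 2 * Lam ^ 2 / lam + C0 with hK'
  have hK'0 : 0 ≤ K' := by have := h.C0_nonneg; positivity
  set N := {x | v x < s'} ∩ closedBall x0 ρ with hN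
  have hgc : ContinuousOn (gradient v) P := by
    have h1 : ContinuousOn (fderiv ℝ v) P := h.c1.continuousOn_fderiv_of_isOpen hPo (by simp)
    exact (LinearIsometryEquiv.continuous _).comp_continuousOn h1
  set A1 : EuclideanSpace ℝ (Fin n) → ℝ := fun x => (η x * (‖gradient v x‖ / (v x + ε))) ^ 2
    with hA1
  have hA1c : ContinuousOn A1 P := by
    apply ContinuousOn.pow
    apply hη.continuous.continuousOn.mul
    apply hgc.norm.div
    · exact (hvc.mono inter_subset_left).add continuousOn_const
    · intro x hx
      have := hx.2; simp at this; linarith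
  have hi3 : IntegrableOn A1 P := by
    refine intOn_bdd hPfin hPm ?_ ((1 * (L / ε)) ^ 2) ?_
    · exact hA1c.aestronglyMeasurable hPm
    · intro x hx
      have hx2 : 0 < v x := hx.2
      rw [Real.norm_of_nonneg (by positivity)]
      have := h.grad_le hx.1
      have h0 := hη0 x
      have h1 := hη1 x
      simp only [hA1]
      gcongr
      linarith
  have hPs : MeasurableSet (P ∩ {x | v x < s}) := by
    have : P ∩ {x | v x < s} = P ∩ (ball x0 R ∩ {x | v x < s}) := by
      ext x; simp only [hP, mem_inter_iff]; tauto
    rw [this]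
    exact hPm.inter (h.isOpen_lt s).measurableSet
  have hNm : MeasurableSet N := by
    have : N = (ball x0 R ∩ {x | v x < s'}) ∩ closedBall x0 ρ := by
      ext x; simp only [hN, mem_inter_iff]
      constructor
      · intro hx; exact ⟨⟨hcB hx.2, hx.1⟩, hx.2⟩
      · intro hx; exact ⟨hx.1.2, hx.2⟩
    rw [this]
    exact (h.isOpen_lt s').measurableSet.inter measurableSet_closedBall
  have hNfin : volume N ≠ ∞ :=
    ((measure_mono inter_subset_right).trans_lt measure_closedBall_lt_top).ne
  -- the pointwise inequality
  have hpt : ∀ x ∈ P, ⟪X x, gradient ξ x⟫ - c x * (v x * ξ x) ≤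
      K' * s' ^ 2 * (1 + D ^ 2) * N.indicator (fun _ => (1 : ℝ)) x
        - lam / 2 * (s' - s) ^ 2 * ((P ∩ {x | v x < s}).indicator A1 x) := by
    intro x hx
    have hxb := hx.1
    have hxv : 0 < v x := hx.2
    have hdv := (h.diff hxb hxv).hasFDerivAt
    set G := (max (s' - v x) 0) ^ 2 with hG
    have hG0 : 0 ≤ G := by positivity
    set F := G * (v x + ε)⁻¹ with hF
    set F' := -(2 * max (s' - v x) 0) * (v x + ε)⁻¹ - G * ((v x + ε)⁻¹) ^ 2 with hF'
    have hdF : HasDerivAt (fun t : ℝ => (max (s' - t) 0) ^ 2 * (t + ε)⁻¹) F' (v x) := by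
      have h1 : HasDerivAt (fun r : ℝ => (max r 0) ^ 2) (2 * max (s' - v x) 0) (s' - v x) :=
        hasDerivAt_max_comp (K := fun m => m ^ 2) (K' := fun m => 2 * m)
          (fun m _ => by simpa using hasDerivAt_pow 2 m) (by simp) (by simp) _
      have h2 : HasDerivAt (fun t : ℝ => s' - t) (-1) (v x) := by
        simpa using (hasDerivAt_id (v x)).const_sub s'
      have h3 := h1.comp (v x) h2
      have h4 : HasDerivAt (fun t : ℝ => (t + ε)⁻¹) (-1 / (v x + ε) ^ 2) (v x) := by
        exact ((hasDerivAt_id (v x)).add_const ε).fun_inv (by simp; linarith)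
      have h5 := h3.mul h4
      refine h5.congr_deriv ?_
      simp only [hF', hG, Function.comp]
      have : v x + ε ≠ 0 := by positivity
      field_simp
      ring
    have hdη : HasFDerivAt η (fderiv ℝ η x) x := (hη.differentiable (by simp) x).hasFDerivAt
    have hdξ := (hdη.mul hdη).mul (hdF.comp_hasFDerivAt x hdv)
    have hfξ : ⟪X x, gradient ξ x⟫ =
        η x ^ 2 * F' * ⟪X x, gradient v x⟫ + 2 * F * η x * ⟪X x, gradient η x⟫ := by
      rw [inner_grad, inner_grad, inner_grad, hξ]
      have := hdξ.fderiv
      have h2 : fderiv ℝ (fun x => η x * η x * ((max (s' - v x) 0) ^ 2 * (v x + ε)⁻¹)) x = _ := this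
      rw [h2]
      simp only [add_apply, smul_apply, smul_eq_mul, hF, hG,
        Pi.mul_apply, Function.comp]
      ring
    have hX1 := h.ell1 x hxb hxv
    have hX2 := h.ell2 x hxb hxv
    have hcb := h.cb x hxb
    set p := ‖gradient v x‖ with hp
    set w := (v x + ε)⁻¹ with hw
    have hw0 : 0 < w := by positivity
    have hvw : v x * w ≤ 1 := by
      rw [hw, ← div_eq_mul_inv, div_le_one (by positivity)]; linarith
    have hη0x := hη0 x
    have hη1x := hη1 x
    set d := ‖gradient η x‖ with hd
    have hdD : d ≤ D := by rw [hd, norm_grad]; exact hD x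
    have hd0 : 0 ≤ d := norm_nonneg _
    have hp0 : 0 ≤ p := norm_nonneg _
    have hinn : ⟪X x, gradient η x⟫ ≤ Lam * p * d := by
      refine (real_inner_le_norm _ _).trans ?_
      gcongr
    have hF'le : F' ≤ -(G * w ^ 2) := by
      have : 0 ≤ 2 * max (s' - v x) 0 * w := by positivity
      rw [hF']; linarith
    have hq0 : 0 ≤ ⟪X x, gradient v x⟫ := le_trans (by positivity) hX1
    -- Young
    have hY : ⟪X x, gradient ξ x⟫ - c x * (v x * ξ x) ≤
        G * (K' * (d ^ 2 + η x ^ 2)) - lam / 2 * (G * (η x * (p * w)) ^ 2) := by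
      rw [hfξ]
      exact energy_alg hlam hG0 h.C0_nonneg hw0 hxv hvw hη0x hF'le hX1 hq0 hinn hcb hK'
    refine hY.trans ?_
    have hA1x : A1 x = (η x * (p * w)) ^ 2 := by simp only [hA1, hw, div_eq_mul_inv, hp]
    have u1 : G * (K' * (d ^ 2 + η x ^ 2)) ≤
        K' * s' ^ 2 * (1 + D ^ 2) * N.indicator (fun _ => (1 : ℝ)) x := by
      by_cases hxN : x ∈ N
      · rw [indicator_of_mem hxN, mul_one]
        have hGs : G ≤ s' ^ 2 := by
          rw [hG]; apply pow_le_pow_left₀ (le_max_right _ _)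
          apply max_le <;> linarith
        have : d ^ 2 + η x ^ 2 ≤ 1 + D ^ 2 := by nlinarith
        calc G * (K' * (d ^ 2 + η x ^ 2)) ≤ s' ^ 2 * (K' * (1 + D ^ 2)) := by gcongr
          _ = _ := by ring
      · rw [indicator_of_notMem hxN, mul_zero]
        rw [hN, mem_inter_iff, not_and_or] at hxN
        rcases hxN with hxN | hxN
        · have : G = 0 := by
            simp at hxN
            rw [hG, max_eq_right (by linarith)]; simp
          rw [this]; simp
        · have hxs : x ∉ tsupport η := fun hh => hxN (hηs hh)
          have : d = 0 := by rw [hd, grad_eq_zero_of_notMem hxs, norm_zero]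
          rw [this, image_eq_zero_of_notMem_tsupport hxs]; simp
    have u2 : lam / 2 * (s' - s) ^ 2 * ((P ∩ {x | v x < s}).indicator A1 x) ≤
        lam / 2 * (G * (η x * (p * w)) ^ 2) := by
      by_cases hxs : x ∈ P ∩ {x | v x < s}
      · rw [indicator_of_mem hxs, hA1x]
        have hxs2 : v x < s := hxs.2
        have : (s' - s) ^ 2 ≤ G := by
          rw [hG]; apply pow_le_pow_left₀ (by linarith)
          exact le_max_of_le_left (by linarith)
        have h3 : 0 ≤ (η x * (p * w)) ^ 2 := by positivity
        calc lam / 2 * (s' - s) ^ 2 * (η x * (p * w)) ^ 2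
            ≤ lam / 2 * G * (η x * (p * w)) ^ 2 := by gcongr
          _ = _ := by ring
      · rw [indicator_of_notMem hxs, mul_zero]; positivity
    linarith
  have hint1 : IntegrableOn (N.indicator (fun _ => (1 : ℝ))) P :=
    ((integrable_indicator_iff hNm).2 (integrableOn_const hNfin)).integrableOn
  have hint2 : IntegrableOn ((P ∩ {x | v x < s}).indicator A1) P := hi3.indicator hPs
  have h0 : 0 = ∫ x in P, (⟪X x, gradient ξ x⟫ - c x * (v x * ξ x)) := by
    rw [integral_sub hi1 hi2, hweak, sub_self]
  have h1 : (0 : ℝ) ≤ ∫ x in P, (K' * s' ^ 2 * (1 + D ^ 2) * N.indicator (fun _ => (1 : ℝ)) x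
        - lam / 2 * (s' - s) ^ 2 * ((P ∩ {x | v x < s}).indicator A1 x)) := by
    rw [h0]
    exact setIntegral_mono_on (hi1.sub hi2) ((hint1.const_mul _).sub (hint2.const_mul _)) hPm hpt
  rw [integral_sub (hint1.const_mul _) (hint2.const_mul _), integral_const_mul,
    integral_const_mul] at h1
  have h2 : ∫ x in P, (P ∩ {x | v x < s}).indicator A1 x = ∫ x in P ∩ {x | v x < s}, A1 x := by
    rw [setIntegral_indicator hPs]; congr 2; ext x; simp
  have h3 : ∫ x in P, N.indicator (fun _ => (1 : ℝ)) x ≤ volume.real N := by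
    rw [setIntegral_indicator hNm]
    simp only [integral_const, smul_eq_mul, mul_one, measureReal_restrict_apply_univ]
    exact measureReal_mono inter_subset_right hNfin
  rw [h2] at h1
  set I := ∫ x in P ∩ {x | v x < s}, A1 x
  have hss0 : 0 < s' - s := by linarith
  have h4 : lam / 2 * (s' - s) ^ 2 * I ≤ K' * s' ^ 2 * (1 + D ^ 2) * volume.real N := by
    have : K' * s' ^ 2 * (1 + D ^ 2) * ∫ x in P, N.indicator (fun _ => (1 : ℝ)) x
      ≤ K' * s' ^ 2 * (1 + D ^ 2) * volume.real N := by gcongr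
    linarith
  have h5 : I ≤ (K' * s' ^ 2 * (1 + D ^ 2) * volume.real N) / (lam / 2 * (s' - s) ^ 2) := by
    rw [le_div_iff₀ (by positivity)]; linarith
  refine h5.trans (le_of_eq ?_)
  field_simp

end LocSol
theorem cutoff_exists {M : ℝ} (hM : ∀ t, |deriv Real.smoothTransition t| ≤ M)
    (x0 : EuclideanSpace ℝ (Fin n)) {ri ro : ℝ} (hi : 0 ≤ ri) (hio : ri < ro) :
    ∃ η : EuclideanSpace ℝ (Fin n) → ℝ, ContDiff ℝ 1 η ∧ tsupport η ⊆ closedBall x0 ro ∧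
      (∀ x, 0 ≤ η x) ∧ (∀ x, η x ≤ 1) ∧ (∀ x ∈ closedBall x0 ri, η x = 1) ∧
      ∀ x, ‖fderiv ℝ η x‖ ≤ 2 * M / (ro - ri) := by
  have hden : 0 < ro ^ 2 - ri ^ 2 := by nlinarith
  have hM0 : 0 ≤ M := (abs_nonneg _).trans (hM 0)
  set hh : EuclideanSpace ℝ (Fin n) → ℝ := fun x => (ro ^ 2 - ‖x - x0‖ ^ 2) / (ro ^ 2 - ri ^ 2)
    with hhd
  have hhC : ContDiff ℝ 1 hh := by
    apply ContDiff.div_const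
    exact contDiff_const.sub ((contDiff_id.sub contDiff_const).norm_sq ℝ)
  have hsup : tsupport (fun x => Real.smoothTransition (hh x)) ⊆ closedBall x0 ro := by
    apply closure_minimal _ isClosed_closedBall
    intro x hx
    by_contra hxc
    apply hx
    apply Real.smoothTransition.zero_of_nonpos
    simp [dist_eq_norm] at hxc
    apply div_nonpos_of_nonpos_of_nonneg _ hden.le
    nlinarith
  refine ⟨fun x => Real.smoothTransition (hh x), Real.smoothTransition.contDiff.comp hhC, hsup,
    fun x => Real.smoothTransition.nonneg _, fun x => Real.smoothTransition.le_one _, ?_, ?_⟩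
  · intro x hx
    apply Real.smoothTransition.one_of_one_le
    rw [mem_closedBall, dist_eq_norm] at hx
    rw [hhd]; simp only
    rw [le_div_iff₀ hden]
    have := norm_nonneg (x - x0)
    nlinarith
  · intro x
    by_cases hx : x ∈ tsupport (fun x => Real.smoothTransition (hh x))
    · have hx2 := hsup hx
      rw [mem_closedBall, dist_eq_norm] at hx2
      have h1 : HasFDerivAt hh ((ro ^ 2 - ri ^ 2)⁻¹ • (-((2 : ℕ) • (innerSL ℝ (x - x0) : EuclideanSpace ℝ (Fin n) →L[ℝ] ℝ)))) x := by
        have h2 : HasFDerivAt (fun x => ‖x - x0‖ ^ 2)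
            ((2 : ℕ) • (innerSL ℝ (x - x0) : EuclideanSpace ℝ (Fin n) →L[ℝ] ℝ)) x := by
          have := ((hasFDerivAt_id x).sub_const x0).norm_sq
          simpa using this
        have h3 := (h2.const_sub (ro ^ 2)).const_mul ((ro ^ 2 - ri ^ 2)⁻¹)
        refine h3.congr_of_eventuallyEq (Filter.Eventually.of_forall fun y => ?_)
        simp only [hhd]; rw [div_eq_inv_mul]
      have hS : HasDerivAt Real.smoothTransition (deriv Real.smoothTransition (hh x)) (hh x) :=
        ((Real.smoothTransition.contDiff (n := 1)).differentiable (by simp) _).hasDerivAt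
      have h4 := (hS.comp_hasFDerivAt x h1).fderiv
      have h5 : fderiv ℝ (fun x => Real.smoothTransition (hh x)) x = _ := h4
      rw [h5, norm_smul, norm_smul, norm_neg, two_nsmul, ← two_smul ℝ, norm_smul,
        innerSL_apply_norm, Real.norm_eq_abs, Real.norm_eq_abs, abs_of_pos (inv_pos.2 hden)]
      have h6 := hM (hh x)
      have h7 : (ro ^ 2 - ri ^ 2)⁻¹ * (‖(2 : ℝ)‖ * ‖x - x0‖) ≤ 2 / (ro - ri) := by
        rw [inv_mul_eq_div, div_le_div_iff₀ hden (by linarith)]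
        simp only [Real.norm_ofNat]
        have : (0 : ℝ) < ro - ri := by linarith
        nlinarith [mul_nonneg this.le (norm_nonneg (x - x0)), mul_nonneg this.le (sub_nonneg.2 hx2)]
      calc _ ≤ M * (2 / (ro - ri)) := by
            apply mul_le_mul h6 h7 _ hM0
            have := inv_pos.2 hden
            positivity
        _ = _ := by ring
    · rw [fderiv_of_notMem_tsupport ℝ hx, norm_zero]
      have : 0 < ro - ri := by linarith
      positivity

theorem translate_le {g : EuclideanSpace ℝ (Fin n) → ℝ} {B A : Set (EuclideanSpace ℝ (Fin n))}
    (hB : Convex ℝ B) (hBo : IsOpen B) (hg : ContDiffOn ℝ 1 g B) (hA : MeasurableSet A)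
    (h : EuclideanSpace ℝ (Fin n)) (hA1 : ∀ x ∈ A, x ∈ B) (hA2 : ∀ x ∈ A, x + h ∈ B) :
    ∫⁻ x in A, ‖g (x + h) - g x‖ₑ ≤ ‖h‖ₑ * ∫⁻ x in B, ‖fderiv ℝ g x‖ₑ := by
  have hmem : ∀ x ∈ A, ∀ t ∈ Icc (0 : ℝ) 1, x + t • h ∈ B := by
    intro x hx t ht
    have := hB (hA1 x hx) (hA2 x hx) (sub_nonneg.2 ht.2) ht.1 (by ring)
    convert this using 1
    module
  have hpt : ∀ x ∈ A, ‖g (x + h) - g x‖ₑ ≤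
      ∫⁻ t in Icc (0 : ℝ) 1, ‖h‖ₑ * ‖fderiv ℝ g (x + t • h)‖ₑ := by
    intro x hx
    have hl : ContDiff ℝ 1 (fun t : ℝ => x + t • h) :=
      contDiff_const.add (contDiff_id.smul contDiff_const)
    have hc : ContDiffOn ℝ 1 (fun t : ℝ => g (x + t • h)) (Icc 0 1) :=
      hg.comp hl.contDiffOn (fun t ht => hmem x hx t ht)
    have h1 := enorm_sub_le_lintegral_deriv_of_contDiffOn_Icc hc zero_le_one
    simp only [one_smul, zero_smul, add_zero] at h1
    refine h1.trans ?_
    apply setLIntegral_mono' measurableSet_Icc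
    intro t ht
    have hd : HasFDerivAt g (fderiv ℝ g (x + t • h)) (x + t • h) :=
      ((hg.contDiffAt (hBo.mem_nhds (hmem x hx t ht))).differentiableAt (by simp)).hasFDerivAt
    have hl' : HasDerivAt (fun t : ℝ => x + t • h) h t := by
      simpa using ((hasDerivAt_id t).smul_const h).const_add x
    have := (hd.comp_hasDerivAt t hl').deriv
    have h2 : deriv (fun t : ℝ => g (x + t • h)) t = fderiv ℝ g (x + t • h) h := this
    rw [h2, mul_comm]
    exact ContinuousLinearMap.le_opENorm _ _
  have hmeas : Measurable (fun p : EuclideanSpace ℝ (Fin n) × ℝ =>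
      ‖fderiv ℝ g (p.1 + p.2 • h)‖ₑ) := by
    have h1 : Measurable (fun p : EuclideanSpace ℝ (Fin n) × ℝ => p.1 + p.2 • h) := by fun_prop
    exact ((measurable_fderiv ℝ g).comp h1).enorm
  calc ∫⁻ x in A, ‖g (x + h) - g x‖ₑ
      ≤ ∫⁻ x in A, ∫⁻ t in Icc (0 : ℝ) 1, ‖h‖ₑ * ‖fderiv ℝ g (x + t • h)‖ₑ :=
        setLIntegral_mono' hA hpt
    _ = ∫⁻ t in Icc (0 : ℝ) 1, ∫⁻ x in A, ‖h‖ₑ * ‖fderiv ℝ g (x + t • h)‖ₑ := by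
        apply lintegral_lintegral_swap
        exact (hmeas.const_mul _).aemeasurable
    _ ≤ ∫⁻ t in Icc (0 : ℝ) 1, ‖h‖ₑ * ∫⁻ x in B, ‖fderiv ℝ g x‖ₑ := by
        apply setLIntegral_mono' measurableSet_Icc
        intro t ht
        rw [lintegral_const_mul' _ _ enorm_ne_top]
        apply mul_le_mul_right
        have hm : Measurable fun x => ‖fderiv ℝ g x‖ₑ := (measurable_fderiv ℝ g).enorm
        rw [← lintegral_indicator hA, ← lintegral_indicator hBo.measurableSet,
          ← lintegral_add_right_eq_self (fun x => B.indicator (fun x => ‖fderiv ℝ g x‖ₑ) x) (t • h)]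
        apply lintegral_mono
        intro x
        by_cases hx : x ∈ A
        · simp only [indicator_of_mem hx]
          rw [indicator_of_mem (hmem x hx t ht)]
        · simp [indicator_of_notMem hx]
    _ = _ := by simp

namespace LocSol

variable {x0 : EuclideanSpace ℝ (Fin n)} {R : ℝ} {v : EuclideanSpace ℝ (Fin n) → ℝ}
    {X : EuclideanSpace ℝ (Fin n) → EuclideanSpace ℝ (Fin n)} {c : EuclideanSpace ℝ (Fin n) → ℝ}
    {L : NNReal} {lam Lam C0 : ℝ}

theorem comp_c1 (h : LocSol x0 R v X c L lam Lam C0) {τ : ℝ → ℝ} {a : ℝ} (ha : 0 < a)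
    (hτ : ∀ t > 0, ContDiffAt ℝ 1 τ t) (hτ1 : ∀ t, 0 ≤ t → t ≤ a → τ t = 1) :
    ContDiffOn ℝ 1 (fun x => τ (v x)) (ball x0 R) ∧
    (∀ x ∈ ball x0 R, 0 < v x → fderiv ℝ (fun x => τ (v x)) x = deriv τ (v x) • fderiv ℝ v x) ∧
    (∀ x ∈ ball x0 R, v x < a → fderiv ℝ (fun x => τ (v x)) x = 0) := by
  have key : ∀ x ∈ ball x0 R, v x < a → (fun x => τ (v x)) =ᶠ[𝓝 x] fun _ => 1 := by
    intro x hx hxa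
    filter_upwards [(h.isOpen_lt a).mem_nhds ⟨hx, hxa⟩] with y hy
    exact hτ1 _ (h.nonneg y hy.1) (le_of_lt hy.2)
  refine ⟨?_, ?_, ?_⟩
  · intro x hx
    by_cases hv : 0 < v x
    · exact ((hτ _ hv).comp x (h.c1.contDiffAt (h.isOpen_P.mem_nhds ⟨hx, hv⟩))).contDiffWithinAt
    · exact (contDiffAt_const.congr_of_eventuallyEq
        (key x hx (lt_of_le_of_lt (not_lt.1 hv) ha))).contDiffWithinAt
  · intro x hx hv
    exact (((hτ _ hv).differentiableAt (by simp)).hasDerivAt.comp_hasFDerivAt x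
      (h.diff hx hv).hasFDerivAt).fderiv
  · intro x hx hxa
    rw [(key x hx hxa).fderiv_eq]; simp

end LocSol
namespace LocSol

variable {x0 : EuclideanSpace ℝ (Fin n)} {R : ℝ} {v : EuclideanSpace ℝ (Fin n) → ℝ}
    {X : EuclideanSpace ℝ (Fin n) → EuclideanSpace ℝ (Fin n)} {c : EuclideanSpace ℝ (Fin n) → ℝ}
    {L : NNReal} {lam Lam C0 : ℝ}

theorem hgc (h : LocSol x0 R v X c L lam Lam C0) :
    ContinuousOn (gradient v) (ball x0 R ∩ {x | 0 < v x}) := by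
  have h1 : ContinuousOn (fderiv ℝ v) (ball x0 R ∩ {x | 0 < v x}) :=
    h.c1.continuousOn_fderiv_of_isOpen h.isOpen_P (by simp)
  exact (LinearIsometryEquiv.continuous _).comp_continuousOn h1

theorem intA (h : LocSol x0 R v X c L lam Lam C0) {η : EuclideanSpace ℝ (Fin n) → ℝ}
    (hη : ContDiff ℝ 1 η) (hη0 : ∀ x, 0 ≤ η x) (hη1 : ∀ x, η x ≤ 1) {ε : ℝ} (hε : 0 < ε) :
    IntegrableOn (fun x => (η x * (‖gradient v x‖ / (v x + ε))) ^ 2)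
      (ball x0 R ∩ {x | 0 < v x}) := by
  have hvc : ContinuousOn v (ball x0 R) := h.lip.continuousOn
  have hPfin : volume (ball x0 R ∩ {x | 0 < v x}) ≠ ∞ :=
    (measure_mono inter_subset_left).trans_lt measure_ball_lt_top |>.ne
  refine intOn_bdd hPfin h.isOpen_P.measurableSet ?_ ((1 * (L / ε)) ^ 2) ?_
  · apply ContinuousOn.aestronglyMeasurable _ h.isOpen_P.measurableSet
    apply ContinuousOn.pow
    apply hη.continuous.continuousOn.mul
    apply h.hgc.norm.div
    · exact (hvc.mono inter_subset_left).add continuousOn_const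
    · intro x hx
      have := hx.2; simp at this; linarith
  · intro x hx
    have hx2 : 0 < v x := hx.2
    rw [Real.norm_of_nonneg (by positivity)]
    have := h.grad_le hx.1
    have h0 := hη0 x
    have h1 := hη1 x
    gcongr
    linarith

theorem meas_N (h : LocSol x0 R v X c L lam Lam C0) {ρ : ℝ} (hρ : ρ < R) (s' : ℝ) :
    MeasurableSet ({x | v x < s'} ∩ closedBall x0 ρ) := by
  have : {x | v x < s'} ∩ closedBall x0 ρ = (ball x0 R ∩ {x | v x < s'}) ∩ closedBall x0 ρ := by
    ext x; simp only [mem_inter_iff]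
    constructor
    · intro hx; exact ⟨⟨closedBall_subset_ball hρ hx.2, hx.1⟩, hx.2⟩
    · intro hx; exact ⟨hx.1.2, hx.2⟩
  rw [this]
  exact (h.isOpen_lt s').measurableSet.inter measurableSet_closedBall

theorem meas_Ps (h : LocSol x0 R v X c L lam Lam C0) (s : ℝ) :
    MeasurableSet ((ball x0 R ∩ {x | 0 < v x}) ∩ {x | v x < s}) := by
  have : (ball x0 R ∩ {x | 0 < v x}) ∩ {x | v x < s}
      = (ball x0 R ∩ {x | 0 < v x}) ∩ (ball x0 R ∩ {x | v x < s}) := by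
    ext x; simp only [mem_inter_iff]; tauto
  rw [this]
  exact h.isOpen_P.measurableSet.inter (h.isOpen_lt s).measurableSet

set_option maxHeartbeats 1000000 in
theorem dg_step (h : LocSol x0 R v X c L lam Lam C0) {M : ℝ}
    (hM : ∀ t, |deriv Real.smoothTransition t| ≤ M) {θ C : ℝ}
    (hθ : 1 < θ) (hC : 0 < C)
    (hsob : ∀ g : EuclideanSpace ℝ (Fin n) → ℝ, ContDiff ℝ 1 g → HasCompactSupport g →
      ∀ S : Set (EuclideanSpace ℝ (Fin n)), (∀ x ∈ S, 1 ≤ g x) →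
      volume.real S ≤ volume.real (ball x0 R) →
      volume.real S ≤ C * (∫ x, ‖fderiv ℝ g x‖) ^ θ)
    {s' s'' r' r'' : ℝ} (hs' : 0 < s') (hss : s' < s'') (hr' : 0 ≤ r') (hrr : r' < r'')
    (hr'' : r'' < R) :
    volume.real ({x | v x < s'} ∩ closedBall x0 r') ≤
      C * ((2 * M + 1 + 8 * M * (2 / lam * (2 * Lam ^ 2 / lam + C0))) * (s'' / (s'' - s')) ^ 3
        * (1 + (2 * M / (r'' - r')) ^ 2)
        * volume.real ({x | v x < s''} ∩ closedBall x0 r'')) ^ θ := by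
  obtain ⟨η, hηC, hηs, hη0, hη1, hηi, hηD⟩ := cutoff_exists hM x0 hr' hrr
  set D := 2 * M / (r'' - r') with hDdef
  have hM0 : 0 ≤ M := (abs_nonneg _).trans (hM 0)
  have hD0 : 0 ≤ D := (norm_nonneg _).trans (hηD 0)
  have hlam := h.lam_pos
  have hC0 := h.C0_nonneg
  set K := 2 / lam * (2 * Lam ^ 2 / lam + C0) with hK
  have hK0 : 0 ≤ K := by positivity
  set q := s'' / (s'' - s') with hq
  have hd0 : 0 < s'' - s' := by linarith
  have hq1 : 1 ≤ q := by rw [hq, le_div_iff₀ hd0]; linarith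
  set s := (s' + s'') / 2 with hs
  have hs0 : 0 < s := by rw [hs]; linarith
  have hss1 : s' < s := by rw [hs]; linarith
  have hss2 : s < s'' := by rw [hs]; linarith
  set τ : ℝ → ℝ := fun t => Real.smoothTransition ((s - t) / (s - s')) with hτ
  have hτC : ContDiff ℝ 1 τ :=
    Real.smoothTransition.contDiff.comp ((contDiff_const.sub contDiff_id).div_const _)
  have hτ1 : ∀ t, t ≤ s' → τ t = 1 := by
    intro t ht
    apply Real.smoothTransition.one_of_one_le
    rw [le_div_iff₀ (by linarith)]; linarith
  have hτ0 : ∀ t, s ≤ t → τ t = 0 := by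
    intro t ht
    apply Real.smoothTransition.zero_of_nonpos
    apply div_nonpos_of_nonpos_of_nonneg <;> linarith
  have hτd : ∀ t, |deriv τ t| ≤ M / (s - s') := by
    intro t
    have h1 : HasDerivAt (fun t => (s - t) / (s - s')) (-1 / (s - s')) t :=
      ((hasDerivAt_id t).const_sub s).div_const _
    have hS : HasDerivAt Real.smoothTransition (deriv Real.smoothTransition ((s - t) / (s - s')))
        ((s - t) / (s - s')) :=
      ((Real.smoothTransition.contDiff (n := 1)).differentiable (by simp) _).hasDerivAt
    have h2 := (hS.comp t h1).deriv
    have h2' : deriv τ t = _ := h2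
    rw [h2', abs_mul, abs_div, abs_neg, abs_one, abs_of_pos (by linarith : 0 < s - s'),
      mul_one_div]
    have := hM ((s - t) / (s - s'))
    have h3 : 0 < s - s' := by linarith
    gcongr
  have hτd0 : ∀ t, s < t → deriv τ t = 0 := by
    intro t ht
    have : τ =ᶠ[𝓝 t] fun _ => 0 := by
      filter_upwards [Ioi_mem_nhds ht] with y hy
      exact hτ0 y (le_of_lt hy)
    rw [this.deriv_eq]; simp
  obtain ⟨hc1, hc2, hc3⟩ := h.comp_c1 (τ := τ) hs' (fun t _ => hτC.contDiffAt)
    (fun t _ ht => hτ1 t ht)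
  have hcB : closedBall x0 r'' ⊆ ball x0 R := closedBall_subset_ball hr''
  set g : EuclideanSpace ℝ (Fin n) → ℝ := fun x => τ (v x) * η x with hg
  have hg0 : ∀ x ∉ tsupport η, g =ᶠ[𝓝 x] fun _ => 0 := by
    intro x hx
    filter_upwards [(isClosed_tsupport η).isOpen_compl.mem_nhds hx] with y hy
    simp [hg, image_eq_zero_of_notMem_tsupport hy]
  have hgC : ContDiff ℝ 1 g := by
    rw [contDiff_iff_contDiffAt]
    intro x
    by_cases hx : x ∈ tsupport η
    · exact (hc1.contDiffAt (isOpen_ball.mem_nhds (hcB (hηs hx)))).mul hηC.contDiffAt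
    · exact contDiffAt_const.congr_of_eventuallyEq (hg0 x hx)
  have hgcs : HasCompactSupport g := by
    apply HasCompactSupport.of_support_subset_isCompact (isCompact_closedBall x0 r'')
    intro x hx
    apply hηs
    by_contra hx'
    exact hx ((hg0 x hx').self_of_nhds)
  set N := {x | v x < s''} ∩ closedBall x0 r'' with hN
  set P := ball x0 R ∩ {x | 0 < v x} with hP
  have hNfin : volume N ≠ ∞ :=
    ((measure_mono inter_subset_right).trans_lt measure_closedBall_lt_top).ne
  have hNm : MeasurableSet N := h.meas_N hr'' s''
  have hPs : MeasurableSet (P ∩ {x | v x < s}) := h.meas_Ps s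
  set A1 : EuclideanSpace ℝ (Fin n) → ℝ := fun x => (η x * (‖gradient v x‖ / (v x + s))) ^ 2
    with hA1
  have hA1i : IntegrableOn A1 P := h.intA hηC hη0 hη1 hs0
  have hen := h.energy hηC hηs hr'' hη0 hη1 hηD hs0 hss2 hs0
  set T := M * s / (s - s') with hT
  have hT0 : 0 ≤ T := by have : 0 < s - s' := by linarith
                         positivity
  have hpt : ∀ x, ‖fderiv ℝ g x‖ ≤ (T + D) * N.indicator (fun _ => (1 : ℝ)) x
      + T * (P ∩ {x | v x < s}).indicator A1 x := by
    intro x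
    have hA10 : ∀ x, 0 ≤ A1 x := fun x => sq_nonneg _
    have hn1 : 0 ≤ N.indicator (fun _ => (1 : ℝ)) x := indicator_nonneg (fun _ _ => zero_le_one) x
    have hn2 : 0 ≤ (P ∩ {x | v x < s}).indicator A1 x := indicator_nonneg (fun y _ => hA10 y) x
    by_cases hx : x ∈ tsupport η
    · have hxc := hηs hx
      have hxb := hcB hxc
      have hd1 : HasFDerivAt (fun x => τ (v x)) (fderiv ℝ (fun x => τ (v x)) x) x :=
        ((hc1.contDiffAt (isOpen_ball.mem_nhds hxb)).differentiableAt (by simp)).hasFDerivAt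
      have hd2 : HasFDerivAt η (fderiv ℝ η x) x :=
        (hηC.differentiable (by simp) x).hasFDerivAt
      have hd3 := (hd1.mul hd2).fderiv
      have hd4 : fderiv ℝ g x = _ := hd3
      rw [hd4]
      refine (norm_add_le _ _).trans ?_
      rw [norm_smul, norm_smul, Real.norm_of_nonneg (hη0 x),
        Real.norm_of_nonneg (Real.smoothTransition.nonneg _)]
      have b1 : τ (v x) * ‖fderiv ℝ η x‖ ≤ D * N.indicator (fun _ => (1 : ℝ)) x := by
        by_cases hxs : v x < s
        · have : x ∈ N := ⟨lt_trans hxs hss2, hxc⟩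
          rw [indicator_of_mem this, mul_one]
          calc τ (v x) * ‖fderiv ℝ η x‖ ≤ 1 * D := by
                apply mul_le_mul (Real.smoothTransition.le_one _) (hηD x) (norm_nonneg _) zero_le_one
            _ = D := one_mul _
        · rw [hτ0 _ (not_lt.1 hxs), zero_mul]; positivity
      have b2 : η x * ‖fderiv ℝ (fun x => τ (v x)) x‖ ≤ T * N.indicator (fun _ => (1 : ℝ)) x
          + T * (P ∩ {x | v x < s}).indicator A1 x := by
        have hnn : 0 ≤ T * N.indicator (fun _ => (1 : ℝ)) x
          + T * (P ∩ {x | v x < s}).indicator A1 x := by positivity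
        by_cases hv0 : 0 < v x
        · rw [hc2 x hxb hv0, norm_smul, Real.norm_eq_abs]
          rcases lt_trichotomy (v x) s with hxs | hxs | hxs
          · have hxN : x ∈ N := ⟨lt_trans hxs hss2, hxc⟩
            have hxP : x ∈ P ∩ {x | v x < s} := ⟨⟨hxb, hv0⟩, hxs⟩
            rw [indicator_of_mem hxN, indicator_of_mem hxP, mul_one, ← norm_grad]
            have e1 : η x * (|deriv τ (v x)| * ‖gradient v x‖)
                ≤ η x * (M / (s - s') * ‖gradient v x‖) := by
              have := hτd (v x)
              have := hη0 x
              gcongr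
            refine e1.trans ?_
            have hp : η x * ‖gradient v x‖ ≤ s * (1 + A1 x) := by
              have e2 : η x * ‖gradient v x‖ = (v x + s) * (η x * (‖gradient v x‖ / (v x + s))) := by
                field_simp
              set y := η x * (‖gradient v x‖ / (v x + s)) with hy
              have hy0 : 0 ≤ y := by have := hη0 x; positivity
              have hA : A1 x = y ^ 2 := rfl
              rw [e2, hA]
              have : (v x + s) * y ≤ (2 * s) * y := by gcongr; linarith
              nlinarith [mul_nonneg hs0.le (sq_nonneg (y - 1))]
            calc η x * (M / (s - s') * ‖gradient v x‖)
                = M / (s - s') * (η x * ‖gradient v x‖) := by ring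
              _ ≤ M / (s - s') * (s * (1 + A1 x)) := by
                  have : 0 < s - s' := by linarith
                  gcongr
              _ = T + T * A1 x := by rw [hT]; ring
          · have : deriv τ (v x) = 0 := by
              rw [hxs]
              have : IsLocalMin τ s := by
                filter_upwards with y
                rw [hτ0 s le_rfl]; exact Real.smoothTransition.nonneg _
              exact this.deriv_eq_zero
            rw [this]; simpa using hnn
          · rw [hτd0 _ hxs]; simpa using hnn
        · rw [hc3 x hxb (by linarith)]; simpa using hnn
      calc _ ≤ D * N.indicator (fun _ => (1 : ℝ)) x + (T * N.indicator (fun _ => (1 : ℝ)) x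
          + T * (P ∩ {x | v x < s}).indicator A1 x) := add_le_add b1 b2
        _ = _ := by ring
    · rw [(hg0 x hx).fderiv_eq]
      simp only [fderiv_fun_const, Pi.zero_apply, norm_zero]
      positivity
  have hi1 : Integrable (N.indicator (fun _ => (1 : ℝ))) :=
    (integrable_indicator_iff hNm).2 (integrableOn_const hNfin)
  have hi2 : Integrable ((P ∩ {x | v x < s}).indicator A1) :=
    (integrable_indicator_iff hPs).2 (hA1i.mono_set inter_subset_left)
  have hI : ∫ x, ‖fderiv ℝ g x‖ ≤ (T + D) * volume.real N + T * ∫ x in P ∩ {x | v x < s}, A1 x := by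
    calc ∫ x, ‖fderiv ℝ g x‖ ≤ ∫ x, ((T + D) * N.indicator (fun _ => (1 : ℝ)) x
      + T * (P ∩ {x | v x < s}).indicator A1 x) := by
          apply integral_mono_of_nonneg (Filter.Eventually.of_forall fun x => norm_nonneg _)
            ((hi1.const_mul _).add (hi2.const_mul _)) (Filter.Eventually.of_forall hpt)
      _ = _ := by
          rw [integral_add (hi1.const_mul _) (hi2.const_mul _), integral_const_mul,
            integral_const_mul, integral_indicator hNm, integral_indicator hPs]
          simp
  have hTq : T ≤ 2 * M * q := by
    rw [hT, hq, div_le_iff₀ (by linarith)]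
    have : s - s' = (s'' - s') / 2 := by rw [hs]; ring
    rw [this]
    have e : 2 * M * (s'' / (s'' - s')) * ((s'' - s') / 2) = M * s'' := by field_simp
    rw [e]; gcongr
  have hq2 : s'' / (s'' - s) = 2 * q := by
    have : s'' - s = (s'' - s') / 2 := by rw [hs]; ring
    rw [this, hq]; field_simp
  rw [hq2] at hen
  set Y := volume.real N with hY
  have hY0 : 0 ≤ Y := measureReal_nonneg
  have hI2 : ∫ x, ‖fderiv ℝ g x‖ ≤ (2 * M + 1 + 8 * M * K) * q ^ 3 * (1 + D ^ 2) * Y := by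
    refine hI.trans ?_
    have c1 : T * ∫ x in P ∩ {x | v x < s}, A1 x ≤
        (2 * M * q) * (K * (2 * q) ^ 2 * (1 + D ^ 2) * Y) :=
      mul_le_mul hTq hen (integral_nonneg fun x => sq_nonneg _) (by positivity)
    have hq3 : q ≤ q ^ 3 := by nlinarith [mul_nonneg (sub_nonneg.2 hq1) (sub_nonneg.2 hq1), sq_nonneg q]
    have hq31 : 1 ≤ q ^ 3 := one_le_pow₀ hq1
    have hD1 : D ≤ 1 + D ^ 2 := by nlinarith [sq_nonneg (D - 1)]
    have hD2 : 1 ≤ 1 + D ^ 2 := by nlinarith [sq_nonneg D]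
    have c2 : (T + D) ≤ (2 * M + 1) * q ^ 3 * (1 + D ^ 2) := by
      have d1 : 2 * M * q ≤ 2 * M * q ^ 3 * (1 + D ^ 2) := by
        calc 2 * M * q ≤ 2 * M * q ^ 3 * 1 := by rw [mul_one]; gcongr
          _ ≤ _ := by gcongr
      have d2 : D ≤ q ^ 3 * (1 + D ^ 2) := by
        calc D ≤ 1 * (1 + D ^ 2) := by rw [one_mul]; exact hD1
          _ ≤ _ := by gcongr
      calc T + D ≤ 2 * M * q ^ 3 * (1 + D ^ 2) + q ^ 3 * (1 + D ^ 2) := by linarith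
        _ = _ := by ring
    have c3 := mul_le_mul_of_nonneg_right c2 hY0
    calc (T + D) * Y + T * ∫ x in P ∩ {x | v x < s}, A1 x
        ≤ (2 * M + 1) * q ^ 3 * (1 + D ^ 2) * Y
          + (2 * M * q) * (K * (2 * q) ^ 2 * (1 + D ^ 2) * Y) := add_le_add c3 c1
      _ = _ := by ring
  have hfin := hsob g hgC hgcs ({x | v x < s'} ∩ closedBall x0 r') (by
      intro x hx
      have : g x = 1 := by
        simp only [hg]
        rw [hτ1 _ (le_of_lt hx.1), hηi x hx.2, mul_one]
      rw [this]) (by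
      apply measureReal_mono _ measure_ball_lt_top.ne
      exact inter_subset_right.trans (closedBall_subset_ball (hrr.trans hr'')))
  refine hfin.trans ?_
  have : 0 ≤ ∫ x, ‖fderiv ℝ g x‖ := integral_nonneg fun x => norm_nonneg _
  gcongr

end LocSol
namespace LocSol

variable {x0 : EuclideanSpace ℝ (Fin n)} {R : ℝ} {v : EuclideanSpace ℝ (Fin n) → ℝ}
    {X : EuclideanSpace ℝ (Fin n) → EuclideanSpace ℝ (Fin n)} {c : EuclideanSpace ℝ (Fin n) → ℝ}
    {L : NNReal} {lam Lam C0 : ℝ}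

theorem dg (h : LocSol x0 R v X c L lam Lam C0) (hn : n ≠ 0) {r : ℝ} (hr : 0 < r) (hrR : r < R) :
    ∃ δ > 0, ∀ l > 0, volume.real ({x | v x < l} ∩ closedBall x0 r) ≤ δ →
      ∀ x ∈ ball x0 (r / 2), l / 2 ≤ v x := by
  obtain ⟨M, hM1, hM⟩ := st_deriv_bdd
  obtain ⟨θ, hθ, C, hC, hsob⟩ := sob hn (volume.real (ball x0 R)) measureReal_nonneg
  have hlam := h.lam_pos
  have hC0 := h.C0_nonneg
  set C1 := 2 * M + 1 + 8 * M * (2 / lam * (2 * Lam ^ 2 / lam + C0)) with hC1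
  have hC1p : 0 < C1 := by positivity
  set C2 := C1 * 64 * (1 + 64 * M ^ 2 / r ^ 2) with hC2
  have hC2p : 0 < C2 := by positivity
  set C3 := C * C2 ^ θ with hC3
  have hC3p : 0 < C3 := by positivity
  set σ : ℝ := (32 : ℝ) ^ (-(θ / (θ - 1))) with hσ
  have hσ0 : 0 < σ := by positivity
  have hθ1 : 0 < θ - 1 := by linarith
  have hσ1 : σ < 1 := by
    rw [hσ]; apply Real.rpow_lt_one_of_one_lt_of_neg (by norm_num)
    have : 0 < θ / (θ - 1) := by positivity
    linarith
  set δ := (σ / C3) ^ (1 / (θ - 1)) with hδ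
  have hδ0 : 0 < δ := by positivity
  refine ⟨δ, hδ0, ?_⟩
  intro l hl hY0
  set S : ℕ → Set (EuclideanSpace ℝ (Fin n)) := fun i =>
    {x | v x < l * (1 + (1 / 2) ^ i) / 2} ∩ closedBall x0 (r * (1 + (1 / 2) ^ i) / 2) with hS
  have hhalf : ∀ i : ℕ, (0 : ℝ) < (1 / 2) ^ i := fun i => by positivity
  have hhalf1 : ∀ i : ℕ, ((1 : ℝ) / 2) ^ i ≤ 1 := fun i =>
    pow_le_one₀ (by norm_num) (by norm_num)
  have hrec : ∀ i, volume.real (S (i + 1)) ≤ C3 * (32 ^ i * volume.real (S i)) ^ θ := by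
    intro i
    have hp := hhalf i
    have hp1 := hhalf1 i
    set p : ℝ := (1 / 2) ^ i with hpd
    have hps : ((1 : ℝ) / 2) ^ (i + 1) = p / 2 := by rw [pow_succ]; ring
    have h1 := h.dg_step hM hθ hC hsob (s' := l * (1 + p / 2) / 2) (s'' := l * (1 + p) / 2)
      (r' := r * (1 + p / 2) / 2) (r'' := r * (1 + p) / 2) (by positivity) (by nlinarith)
      (by positivity) (by nlinarith) (by nlinarith)
    simp only [hS]
    rw [hps]
    refine h1.trans ?_
    set Y := volume.real ({x | v x < l * (1 + p) / 2} ∩ closedBall x0 (r * (1 + p) / 2)) with hY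
    have hY0 : 0 ≤ Y := measureReal_nonneg
    have e1 : l * (1 + p) / 2 / (l * (1 + p) / 2 - l * (1 + p / 2) / 2) = 2 * (1 + p) * p⁻¹ := by
      have : l * (1 + p) / 2 - l * (1 + p / 2) / 2 = l * p / 4 := by ring
      rw [this]; field_simp; ring
    have e2 : 2 * M / (r * (1 + p) / 2 - r * (1 + p / 2) / 2) = 8 * M / r * p⁻¹ := by
      have : r * (1 + p) / 2 - r * (1 + p / 2) / 2 = r * p / 4 := by ring
      rw [this]; field_simp; ring
    rw [e1, e2]
    have hpi : 1 ≤ p⁻¹ := (one_le_inv₀ hp).2 hp1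
    have hpp : (p⁻¹) ^ 5 = 32 ^ i := by
      rw [hpd, ← inv_pow, ← pow_mul, mul_comm, pow_mul]; norm_num
    have hb : C1 * (2 * (1 + p) * p⁻¹) ^ 3 * (1 + (8 * M / r * p⁻¹) ^ 2) * Y
        ≤ C2 * (32 ^ i * Y) := by
      have f1 : (2 * (1 + p) * p⁻¹) ^ 3 ≤ (4 * p⁻¹) ^ 3 := by gcongr; linarith
      have f2 : 1 + (8 * M / r * p⁻¹) ^ 2 ≤ (1 + 64 * M ^ 2 / r ^ 2) * (p⁻¹) ^ 2 := by
        have : 1 ≤ (p⁻¹) ^ 2 := one_le_pow₀ hpi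
        have e : (8 * M / r * p⁻¹) ^ 2 = 64 * M ^ 2 / r ^ 2 * (p⁻¹) ^ 2 := by ring
        rw [e]; linarith
      calc C1 * (2 * (1 + p) * p⁻¹) ^ 3 * (1 + (8 * M / r * p⁻¹) ^ 2) * Y
          ≤ C1 * (4 * p⁻¹) ^ 3 * ((1 + 64 * M ^ 2 / r ^ 2) * (p⁻¹) ^ 2) * Y := by gcongr
        _ = C2 * ((p⁻¹) ^ 5 * Y) := by rw [hC2]; ring
        _ = _ := by rw [hpp]
    calc C * (C1 * (2 * (1 + p) * p⁻¹) ^ 3 * (1 + (8 * M / r * p⁻¹) ^ 2) * Y) ^ θ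
        ≤ C * (C2 * (32 ^ i * Y)) ^ θ := by gcongr
      _ = C3 * (32 ^ i * Y) ^ θ := by
        rw [Real.mul_rpow hC2p.le (by positivity), hC3]; ring
  have hfc := fast_conv (fun i => volume.real (S i)) (fun i => measureReal_nonneg) C3 32 θ hC3p
    (by norm_num) hθ hrec δ σ hδ0 hσ (by
      rw [hδ, ← Real.rpow_mul (by positivity), one_div, inv_mul_cancel₀ hθ1.ne', Real.rpow_one]
      apply le_of_eq; field_simp) (by
      simp only [hS, pow_zero]
      convert hY0 using 3 <;> ring_nf)
  have hz : volume.real ({x | v x < l / 2} ∩ closedBall x0 (r / 2)) ≤ 0 := by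
    have hlim : Tendsto (fun i : ℕ => δ * σ ^ i) atTop (𝓝 (δ * 0)) :=
      (tendsto_pow_atTop_nhds_zero_of_lt_one hσ0.le hσ1).const_mul δ
    rw [mul_zero] at hlim
    apply ge_of_tendsto' hlim
    intro i
    refine le_trans ?_ (hfc i)
    apply measureReal_mono
    · intro x hx
      have hp := hhalf i
      refine ⟨?_, ?_⟩
      · have h1 : v x < l / 2 := hx.1
        show v x < l * (1 + (1 / 2) ^ i) / 2
        have := mul_pos hl hp
        linarith
      · apply closedBall_subset_closedBall _ hx.2
        have := mul_pos hr hp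
        linarith
    · exact ((measure_mono inter_subset_right).trans_lt measure_closedBall_lt_top).ne
  intro x hx
  by_contra hlt
  have hxb : x ∈ ball x0 R := ball_subset_ball (by linarith) hx
  have hop : IsOpen ((ball x0 R ∩ {x | v x < l / 2}) ∩ ball x0 (r / 2)) :=
    (h.isOpen_lt _).inter isOpen_ball
  have hpos := hop.measure_pos volume ⟨x, ⟨hxb, not_le.1 hlt⟩, hx⟩
  have hfin : volume ({x | v x < l / 2} ∩ closedBall x0 (r / 2)) ≠ ∞ :=
    ((measure_mono inter_subset_right).trans_lt measure_closedBall_lt_top).ne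
  have h0 : volume ({x | v x < l / 2} ∩ closedBall x0 (r / 2)) = 0 := by
    have := le_antisymm hz measureReal_nonneg
    rwa [measureReal_eq_zero_iff hfin] at this
  refine absurd (measure_mono_null ?_ h0) hpos.ne'
  intro y hy
  exact ⟨hy.1.2, ball_subset_closedBall hy.2⟩

set_option maxHeartbeats 1000000 in
theorem log_step (h : LocSol x0 R v X c L lam Lam C0) {R1 : ℝ} (hR1 : 0 < R1) (hR1R : R1 < R)
    {b : ℝ} (hb : 0 < b) : ∃ K : ℝ, ∀ N > 0, ∃ g : EuclideanSpace ℝ (Fin n) → ℝ,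
      ContDiffOn ℝ 1 g (ball x0 R1) ∧ (∀ x ∈ ball x0 R1, v x = 0 → g x = 1) ∧
      (∀ x ∈ ball x0 R1, b ≤ v x → g x = 0) ∧
      ∫⁻ x in ball x0 R1, ‖fderiv ℝ g x‖ₑ ≤ ENNReal.ofReal (K / N) := by
  obtain ⟨M, hM1, hM⟩ := st_deriv_bdd
  obtain ⟨η, hηC, hηs, hη0, hη1, hηi, hηD⟩ :=
    cutoff_exists hM x0 hR1.le (by linarith : R1 < (R1 + R) / 2)
  set D := 2 * M / ((R1 + R) / 2 - R1)
  set s := v x0 + L * R + 1 with hs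
  have hvx0 := h.nonneg x0 (mem_ball_self h.hR)
  have hs0 : 0 < s := by have := h.hR; positivity
  set E := 2 / lam * (2 * Lam ^ 2 / lam + C0) * ((s + 1) / (s + 1 - s)) ^ 2 * (1 + D ^ 2) *
        volume.real ({x | v x < s + 1} ∩ closedBall x0 ((R1 + R) / 2)) with hE
  refine ⟨M * (volume.real (ball x0 R) + E), ?_⟩
  intro N hN
  set a := b * Real.exp (-N) / 2 with ha
  have ha0 : 0 < a := by positivity
  have hab : 2 * a < b := by
    have : Real.exp (-N) < 1 := by rw [Real.exp_lt_one_iff]; linarith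
    rw [ha]; nlinarith
  have hlog : Real.log b - Real.log (2 * a) = N := by
    rw [ha, mul_div_cancel₀ _ (by norm_num : (2 : ℝ) ≠ 0),
      Real.log_mul hb.ne' (Real.exp_pos _).ne', Real.log_exp]; ring
  set τ : ℝ → ℝ := fun t => Real.smoothTransition ((Real.log b - Real.log (t + a)) / N) with hτ
  have hτC : ∀ t > 0, ContDiffAt ℝ 1 τ t := by
    intro t ht
    apply Real.smoothTransition.contDiff.contDiffAt.comp
    apply ContDiffAt.div_const
    apply contDiffAt_const.sub
    apply ContDiffAt.log
    · exact (contDiff_id.add contDiff_const).contDiffAt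
    · simp; linarith
  have hτ1 : ∀ t, 0 ≤ t → t ≤ a → τ t = 1 := by
    intro t ht hta
    apply Real.smoothTransition.one_of_one_le
    rw [le_div_iff₀ hN]
    have := Real.log_le_log (by linarith) (by linarith : t + a ≤ 2 * a)
    linarith
  have hτ0 : ∀ t, b ≤ t → τ t = 0 := by
    intro t ht
    apply Real.smoothTransition.zero_of_nonpos
    apply div_nonpos_of_nonpos_of_nonneg _ hN.le
    have := Real.log_le_log hb (by linarith : b ≤ t + a)
    linarith
  have hτd : ∀ t > 0, |deriv τ t| ≤ M / N * (t + a)⁻¹ := by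
    intro t ht
    have hta : 0 < t + a := by linarith
    have h1 : HasDerivAt (fun t => (Real.log b - Real.log (t + a)) / N) (-(1 / (t + a)) / N) t :=
      ((((hasDerivAt_id t).add_const a).log hta.ne').const_sub _).div_const _
    have hS : HasDerivAt Real.smoothTransition
        (deriv Real.smoothTransition ((Real.log b - Real.log (t + a)) / N))
        ((Real.log b - Real.log (t + a)) / N) :=
      ((Real.smoothTransition.contDiff (n := 1)).differentiable (by simp) _).hasDerivAt
    have h2 := (hS.comp t h1).deriv
    have h2' : deriv τ t = _ := h2
    rw [h2', abs_mul, abs_div, abs_neg, abs_of_pos hN,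
      abs_of_pos (by positivity : (0 : ℝ) < 1 / (t + a))]
    calc _ ≤ M * (1 / (t + a) / N) := by gcongr; exact hM _
      _ = _ := by ring
  obtain ⟨hc1, hc2, hc3⟩ := h.comp_c1 (τ := τ) ha0 hτC hτ1
  have hsub : ball x0 R1 ⊆ ball x0 R := ball_subset_ball hR1R.le
  refine ⟨fun x => τ (v x), hc1.mono hsub, ?_, ?_, ?_⟩
  · intro x hx hv
    simp only [hv]; exact hτ1 0 le_rfl ha0.le
  · intro x hx hv
    exact hτ0 _ hv
  · set P := ball x0 R ∩ {x | 0 < v x} with hP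
    have hPm : MeasurableSet P := h.isOpen_P.measurableSet
    have hen := h.energy hηC hηs (by linarith) hη0 hη1 hηD hs0 (by linarith : s < s + 1) ha0
    rw [← hE] at hen
    have hPs : (ball x0 R ∩ {x | 0 < v x}) ∩ {x | v x < s} = P := by
      apply inter_eq_left.2
      intro x hx
      have := h.v_le hx.1
      show v x < s
      rw [hs]; linarith
    rw [hPs] at hen
    set A1 : EuclideanSpace ℝ (Fin n) → ℝ := fun x => (η x * (‖gradient v x‖ / (v x + a))) ^ 2
      with hA1
    have hA1i : IntegrableOn A1 P := h.intA hηC hη0 hη1 ha0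
    have hpt : ∀ x ∈ ball x0 R1, ‖fderiv ℝ (fun x => τ (v x)) x‖ₑ ≤
        ENNReal.ofReal (M / N * (1 + P.indicator A1 x)) := by
      intro x hx
      rw [← ofReal_norm]
      apply ENNReal.ofReal_le_ofReal
      have hA10 : 0 ≤ P.indicator A1 x := indicator_nonneg (fun y _ => sq_nonneg _) x
      by_cases hv : 0 < v x
      · have hxP : x ∈ P := ⟨hsub hx, hv⟩
        rw [hc2 x (hsub hx) hv, norm_smul, Real.norm_eq_abs, indicator_of_mem hxP, ← norm_grad]
        have h1 := hτd _ hv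
        have h2 : A1 x = (‖gradient v x‖ * (v x + a)⁻¹) ^ 2 := by
          simp only [hA1, hηi x (ball_subset_closedBall hx), one_mul, div_eq_mul_inv]
        rw [h2]
        set y := ‖gradient v x‖ * (v x + a)⁻¹ with hy
        have hMN : 0 ≤ M / N := by positivity
        calc |deriv τ (v x)| * ‖gradient v x‖ ≤ M / N * (v x + a)⁻¹ * ‖gradient v x‖ := by gcongr
          _ = M / N * y := by rw [hy]; ring
          _ ≤ M / N * (1 + y ^ 2) := by
            gcongr; nlinarith [sq_nonneg (y - 1)]
      · rw [hc3 x (hsub hx) (by linarith), norm_zero]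
        positivity
    have hi : IntegrableOn (fun x => M / N * (1 + P.indicator A1 x)) (ball x0 R) := by
      apply Integrable.const_mul
      apply Integrable.add
      · exact integrableOn_const measure_ball_lt_top.ne
      · exact ((integrable_indicator_iff hPm).2 hA1i).integrableOn
    calc ∫⁻ x in ball x0 R1, ‖fderiv ℝ (fun x => τ (v x)) x‖ₑ
        ≤ ∫⁻ x in ball x0 R1, ENNReal.ofReal (M / N * (1 + P.indicator A1 x)) :=
          setLIntegral_mono' measurableSet_ball hpt
      _ ≤ ∫⁻ x in ball x0 R, ENNReal.ofReal (M / N * (1 + P.indicator A1 x)) :=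
          lintegral_mono_set hsub
      _ = ENNReal.ofReal (∫ x in ball x0 R, M / N * (1 + P.indicator A1 x)) := by
          rw [ofReal_integral_eq_lintegral_ofReal hi]
          filter_upwards with x
          have hA10 : 0 ≤ P.indicator A1 x := indicator_nonneg (fun y _ => sq_nonneg _) x
          show 0 ≤ M / N * (1 + P.indicator A1 x)
          positivity
      _ ≤ _ := by
          apply ENNReal.ofReal_le_ofReal
          have hc0 : Integrable (fun _ : EuclideanSpace ℝ (Fin n) => (1 : ℝ))
              (volume.restrict (ball x0 R)) := integrableOn_const measure_ball_lt_top.ne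
          have hc1 : Integrable (fun x => P.indicator A1 x) (volume.restrict (ball x0 R)) :=
            ((integrable_indicator_iff hPm).2 hA1i).integrableOn
          rw [integral_const_mul, integral_add hc0 hc1, setIntegral_indicator hPm]
          have : ball x0 R ∩ P = P := inter_eq_right.2 inter_subset_left
          rw [this]
          simp only [integral_const, smul_eq_mul, mul_one, measureReal_restrict_apply_univ]
          calc M / N * (volume.real (ball x0 R) + ∫ x in P, A1 x)
              ≤ M / N * (volume.real (ball x0 R) + E) := by gcongr
            _ = _ := by ring

theorem null_zero (h : LocSol x0 R v X c L lam Lam C0) {R1 r : ℝ} (hr : 0 < r) (hrR : r < R1)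
    (hR1R : R1 < R) {x1 : EuclideanSpace ℝ (Fin n)} (hx1 : x1 ∈ ball x0 R1) (hv1 : 0 < v x1) :
    volume ({x | v x = 0} ∩ closedBall x0 r) = 0 := by
  have hR1 : 0 < R1 := hr.trans hrR
  set b := v x1 / 2 with hb
  have hb0 : 0 < b := by positivity
  obtain ⟨K, hK⟩ := h.log_step hR1 hR1R hb0
  have hopen : IsOpen (ball x0 R1 ∩ {x | b < v x}) :=
    (h.lip.continuousOn.mono (ball_subset_ball hR1R.le)).isOpen_inter_preimage isOpen_ball isOpen_Ioi
  obtain ⟨δ1, hδ1, hsub1⟩ := Metric.isOpen_iff.1 hopen x1 ⟨hx1, by show b < v x1; linarith⟩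
  set δ := min δ1 (R1 - r) with hδ
  have hδ0 : 0 < δ := lt_min hδ1 (by linarith)
  apply measure_null_of_locally_null
  intro y hy
  refine ⟨_, inter_mem_nhdsWithin _ (ball_mem_nhds y hδ0), ?_⟩
  set T := ({x | v x = 0} ∩ closedBall x0 r) ∩ ball y δ with hT
  set hh := y - x1 with hhd
  have hBsub : ∀ x ∈ ball x1 δ, x + hh ∈ ball x0 R1 := by
    intro x hx
    rw [mem_ball, dist_eq_norm] at hx ⊢
    have hy2 := hy.2
    rw [mem_closedBall, dist_eq_norm] at hy2
    have e : x + hh - x0 = (x - x1) + (y - x0) := by rw [hhd]; abel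
    rw [e]
    have := norm_add_le (x - x1) (y - x0)
    have := min_le_right δ1 (R1 - r)
    linarith
  have hBs1 : ∀ x ∈ ball x1 δ, x ∈ ball x0 R1 ∧ b < v x := fun x hx =>
    hsub1 (ball_subset_ball (min_le_left _ _) hx)
  have key : ∀ N > 0, volume T ≤ ‖hh‖ₑ * ENNReal.ofReal (K / N) := by
    intro N hN
    obtain ⟨g, hg, hg1, hg0, hgI⟩ := hK N hN
    have ht := translate_le (convex_ball x0 R1) isOpen_ball hg measurableSet_ball (A := ball x1 δ) hh
      (fun x hx => (hBs1 x hx).1) hBsub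
    refine le_trans ?_ (ht.trans (mul_le_mul_right hgI _))
    have e1 : volume T = volume ((fun x => x + hh) ⁻¹' T) := by
      rw [measure_preimage_add_right]
    rw [e1]
    have hTs : (fun x => x + hh) ⁻¹' T ⊆ ball x1 δ := by
      intro x hx
      have := hx.2
      rw [mem_ball, dist_eq_norm] at this ⊢
      convert this using 2
      show x - x1 = x + hh - y
      rw [hhd]; abel
    have hTm : MeasurableSet T := by
      have e : T = (ball x0 R ∩ v ⁻¹' {0}) ∩ closedBall x0 r ∩ ball y δ := by
        ext x
        simp only [hT, mem_inter_iff, mem_ofPred_eq, mem_preimage, mem_singleton_iff]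
        constructor
        · intro hx
          exact ⟨⟨⟨closedBall_subset_ball (hrR.trans hR1R) hx.1.2, hx.1.1⟩, hx.1.2⟩, hx.2⟩
        · intro hx; exact ⟨⟨hx.1.1.2, hx.1.2⟩, hx.2⟩
      have hm : MeasurableSet (ball x0 R ∩ v ⁻¹' {0}) := by
        have : ball x0 R ∩ v ⁻¹' {0} = ball x0 R \ (ball x0 R ∩ v ⁻¹' {0}ᶜ) := by
          ext x; simp
        rw [this]
        exact measurableSet_ball.diff (h.lip.continuousOn.isOpen_inter_preimage isOpen_ball
          isOpen_compl_singleton).measurableSet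
      rw [e]
      exact (hm.inter measurableSet_closedBall).inter measurableSet_ball
    have hTm2 : MeasurableSet ((fun x => x + hh) ⁻¹' T) := (measurable_add_const hh) hTm
    calc volume ((fun x => x + hh) ⁻¹' T)
        = ∫⁻ x in ball x1 δ, ((fun x => x + hh) ⁻¹' T).indicator 1 x := by
          rw [lintegral_indicator_one hTm2, Measure.restrict_apply hTm2, inter_eq_left.2 hTs]
      _ ≤ ∫⁻ x in ball x1 δ, ‖g (x + hh) - g x‖ₑ := by
          apply setLIntegral_mono' measurableSet_ball
          intro x hx
          by_cases hxT : x ∈ (fun x => x + hh) ⁻¹' T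
          · rw [indicator_of_mem hxT, hg1 _ (hBsub x hx) hxT.1.1,
              hg0 x (hBs1 x hx).1 (hBs1 x hx).2.le]
            simp
          · rw [indicator_of_notMem hxT]; exact zero_le
  apply le_antisymm _ zero_le
  have hlim : Tendsto (fun N : ℝ => ‖hh‖ₑ * ENNReal.ofReal (K / N)) atTop (𝓝 (‖hh‖ₑ * ENNReal.ofReal 0)) := by
    apply ENNReal.Tendsto.const_mul _ (Or.inr enorm_ne_top)
    apply ENNReal.tendsto_ofReal
    exact tendsto_const_nhds.div_atTop tendsto_id
  simp only [ENNReal.ofReal_zero, mul_zero] at hlim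
  apply ge_of_tendsto hlim
  filter_upwards [eventually_gt_atTop 0] with N hN
  exact key N hN

theorem smp (h : LocSol x0 R v X c L lam Lam C0) (hn : n ≠ 0) {x1 : EuclideanSpace ℝ (Fin n)}
    (hx1 : x1 ∈ ball x0 (R / 2)) (hv1 : 0 < v x1) : 0 < v x0 := by
  have hR := h.hR
  have hnull := h.null_zero (R1 := R / 2) (r := R / 4) (by linarith) (by linarith) (by linarith)
    hx1 hv1
  obtain ⟨δ, hδ, hdg⟩ := h.dg hn (r := R / 4) (by linarith) (by linarith)
  have hlim : Tendsto (fun k : ℕ => volume ({x | v x < 1 / ((k : ℝ) + 1)} ∩ closedBall x0 (R / 4)))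
      atTop (𝓝 (volume (⋂ k : ℕ, {x | v x < 1 / ((k : ℝ) + 1)} ∩ closedBall x0 (R / 4)))) := by
    apply tendsto_measure_iInter_atTop
    · intro k
      exact (h.meas_N (by linarith) _).nullMeasurableSet
    · intro k l hkl x hx
      refine ⟨?_, hx.2⟩
      have h1 : v x < 1 / ((l : ℝ) + 1) := hx.1
      show v x < 1 / ((k : ℝ) + 1)
      refine h1.trans_le ?_
      have : (k : ℝ) ≤ l := by exact_mod_cast hkl
      gcongr
    · exact ⟨0, ((measure_mono inter_subset_right).trans_lt measure_closedBall_lt_top).ne⟩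
  have hz : volume (⋂ k : ℕ, {x | v x < 1 / ((k : ℝ) + 1)} ∩ closedBall x0 (R / 4)) = 0 := by
    apply measure_mono_null _ hnull
    intro x hx
    rw [mem_iInter] at hx
    refine ⟨?_, (hx 0).2⟩
    have hxb : x ∈ ball x0 R := closedBall_subset_ball (by linarith) (hx 0).2
    apply le_antisymm _ (h.nonneg x hxb)
    apply ge_of_tendsto' tendsto_one_div_add_atTop_nhds_zero_nat
    intro k
    exact le_of_lt (hx k).1
  rw [hz] at hlim
  have hev := hlim.eventually (Iio_mem_nhds (ENNReal.ofReal_pos.2 hδ))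
  obtain ⟨k, hk⟩ := hev.exists
  have := hdg (1 / ((k : ℝ) + 1)) (by positivity) (by
    rw [measureReal_def]
    exact ENNReal.toReal_le_of_le_ofReal hδ.le (le_of_lt hk)) x0 (mem_ball_self (by linarith))
  refine lt_of_lt_of_le ?_ this
  positivity

end LocSol

theorem smp_global (hn : n ≠ 0) {U : Set (EuclideanSpace ℝ (Fin n))} (hUo : IsOpen U)
    (hU : IsPreconnected U) {v : EuclideanSpace ℝ (Fin n) → ℝ}
    {X : EuclideanSpace ℝ (Fin n) → EuclideanSpace ℝ (Fin n)} {c : EuclideanSpace ℝ (Fin n) → ℝ}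
    (hv : ContinuousOn v U)
    (h : ∀ x0 ∈ U, ∃ R L lam Lam C0, LocSol x0 R v X c L lam Lam C0)
    {x1 : EuclideanSpace ℝ (Fin n)} (hx1 : x1 ∈ U) (hv1 : 0 < v x1) : ∀ x ∈ U, 0 < v x := by
  set P := U ∩ {x | 0 < v x} with hP
  have hPo : IsOpen P := hv.isOpen_inter_preimage hUo isOpen_Ioi
  intro x hx
  have hcl : U ∩ closure P ⊆ P := by
    rintro y ⟨hyU, hy⟩
    obtain ⟨R, L, lam, Lam, C0, hL⟩ := h y hyU
    obtain ⟨z, hz1, hz2⟩ := mem_closure_iff.1 hy (ball y (R / 2)) isOpen_ball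
      (mem_ball_self (by have := hL.hR; linarith))
    exact ⟨hyU, hL.smp hn hz1 hz2.2⟩
  have := hU.subset_of_closure_inter_subset hPo ⟨x1, hx1, hx1, hv1⟩ (by
    rw [inter_comm]; exact hcl)
  exact (this hx).2
/-- `A(p)` as a continuous linear map. -/
def AopL (a : ℝ → ℝ) (p : EuclideanSpace ℝ (Fin n)) :
    EuclideanSpace ℝ (Fin n) →L[ℝ] EuclideanSpace ℝ (Fin n) :=
  a ‖p‖ • ContinuousLinearMap.id ℝ _ +
    (deriv a ‖p‖ / ‖p‖) • (innerSL ℝ p : EuclideanSpace ℝ (Fin n) →L[ℝ] ℝ).smulRight p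

theorem AopL_apply (a : ℝ → ℝ) (p v : EuclideanSpace ℝ (Fin n)) : AopL a p v = Aop a p v := by
  simp [AopL, Aop, smul_smul]

theorem Aop_inner (a : ℝ → ℝ) (p v w : EuclideanSpace ℝ (Fin n)) :
    ⟪Aop a p v, w⟫ = a ‖p‖ * ⟪v, w⟫ + deriv a ‖p‖ / ‖p‖ * ⟪p, v⟫ * ⟪p, w⟫ := by
  simp [Aop, inner_add_left, inner_smul_left]

theorem Aop_symm (a : ℝ → ℝ) (p v w : EuclideanSpace ℝ (Fin n)) :
    ⟪Aop a p v, w⟫ = ⟪Aop a p w, v⟫ := by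
  rw [Aop_inner, Aop_inner, real_inner_comm w v]; ring

theorem Aop_lower {a : ℝ → ℝ} (p q : EuclideanSpace ℝ (Fin n)) :
    min (a ‖p‖) (lam1 a ‖p‖) * ‖q‖ ^ 2 ≤ ⟪Aop a p q, q⟫ := by
  rw [Aop_inner, real_inner_self_eq_norm_sq]
  have hq : 0 ≤ ‖q‖ ^ 2 := by positivity
  rcases eq_or_ne p 0 with hp | hp
  · simp only [hp, inner_zero_left, mul_zero, add_zero]
    exact mul_le_mul_of_nonneg_right (min_le_left _ _) hq
  have hp0 : 0 < ‖p‖ := norm_pos_iff.2 hp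
  have hcs : ⟪p, q⟫ * ⟪p, q⟫ ≤ ‖p‖ ^ 2 * ‖q‖ ^ 2 := by
    have := real_inner_mul_inner_self_le p q
    rw [real_inner_self_eq_norm_sq, real_inner_self_eq_norm_sq] at this
    exact this
  rcases le_total 0 (deriv a ‖p‖) with h | h
  · have h1 := mul_le_mul_of_nonneg_right (min_le_left (a ‖p‖) (lam1 a ‖p‖)) hq
    have h2 : 0 ≤ deriv a ‖p‖ / ‖p‖ * ⟪p, q⟫ * ⟪p, q⟫ := by
      rw [mul_assoc]; have := mul_self_nonneg ⟪p, q⟫; positivity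
    linarith
  · have h1 := mul_le_mul_of_nonneg_right (min_le_right (a ‖p‖) (lam1 a ‖p‖)) hq
    have h2 : deriv a ‖p‖ / ‖p‖ * (‖p‖ ^ 2 * ‖q‖ ^ 2) ≤ deriv a ‖p‖ / ‖p‖ * (⟪p, q⟫ * ⟪p, q⟫) :=
      mul_le_mul_of_nonpos_left hcs (div_nonpos_of_nonpos_of_nonneg h hp0.le)
    have h3 : deriv a ‖p‖ / ‖p‖ * (‖p‖ ^ 2 * ‖q‖ ^ 2) = ‖p‖ * deriv a ‖p‖ * ‖q‖ ^ 2 := by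
      field_simp
    unfold lam1 at h1
    unfold lam1
    linarith

section
variable {a : ℝ → ℝ} (ha : ContDiffOn ℝ 1 a (Ici 0))

theorem Aop_pos (hapos : ∀ t ≥ (0 : ℝ), 0 < a t) (hlam : ∀ t ≥ (0 : ℝ), 0 < lam1 a t)
    (p q : EuclideanSpace ℝ (Fin n)) : 0 ≤ ⟪Aop a p q, q⟫ := by
  refine le_trans ?_ (Aop_lower p q)
  have := lt_min (hapos _ (norm_nonneg p)) (hlam _ (norm_nonneg p))
  positivity

theorem a_contDiffAt (ha : ContDiffOn ℝ 1 a (Ici 0)) {t : ℝ} (ht : 0 < t) : ContDiffAt ℝ 1 a t :=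
  ha.contDiffAt (Ici_mem_nhds ht)

theorem a1_cont (ha : ContDiffOn ℝ 1 a (Ici 0)) : ContinuousOn (derivWithin a (Ici 0)) (Ici 0) :=
  ha.continuousOn_derivWithin (uniqueDiffOn_Ici 0) (by simp)

theorem a1_eq {t : ℝ} (ht : 0 < t) : deriv a t = derivWithin a (Ici 0) t :=
  (derivWithin_of_mem_nhds (Ici_mem_nhds ht)).symm

theorem anorm_cont (ha : ContDiffOn ℝ 1 a (Ici 0)) :
    Continuous fun p : EuclideanSpace ℝ (Fin n) => a ‖p‖ :=
  ha.continuousOn.comp_continuous continuous_norm (fun p => norm_nonneg p)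

theorem a1norm_cont (ha : ContDiffOn ℝ 1 a (Ici 0)) :
    Continuous fun p : EuclideanSpace ℝ (Fin n) => derivWithin a (Ici 0) ‖p‖ :=
  (a1_cont ha).comp_continuous continuous_norm (fun p => norm_nonneg p)

theorem lam1norm_cont (ha : ContDiffOn ℝ 1 a (Ici 0)) :
    Continuous fun p : EuclideanSpace ℝ (Fin n) => lam1 a ‖p‖ := by
  have h1 : Continuous fun p : EuclideanSpace ℝ (Fin n) =>
      a ‖p‖ + ‖p‖ * derivWithin a (Ici 0) ‖p‖ :=
    (anorm_cont ha).add (continuous_norm.mul (a1norm_cont ha))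
  convert h1 using 2 with p
  unfold lam1
  rcases (norm_nonneg p).eq_or_lt with hp | hp
  · rw [← hp]; simp
  · rw [a1_eq hp]

theorem AopL_cont (ha : ContDiffOn ℝ 1 a (Ici 0)) :
    Continuous fun p : EuclideanSpace ℝ (Fin n) => AopL a p := by
  unfold AopL
  apply ((anorm_cont ha).smul continuous_const).add
  have hbd : ∀ p : EuclideanSpace ℝ (Fin n), ‖(deriv a ‖p‖ / ‖p‖) •
      (innerSL ℝ p : EuclideanSpace ℝ (Fin n) →L[ℝ] ℝ).smulRight p‖
      ≤ |derivWithin a (Ici 0) ‖p‖| * ‖p‖ := by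
    intro p
    rcases (norm_nonneg p).eq_or_lt with hp | hp
    · rw [← hp]; simp
    · rw [norm_smul, ContinuousLinearMap.norm_smulRight_apply, innerSL_apply_norm, a1_eq hp,
        Real.norm_eq_abs, abs_div, abs_norm]
      apply le_of_eq; field_simp
  rw [continuous_iff_continuousAt]
  intro p
  rcases eq_or_ne p 0 with hp | hp
  · subst hp
    unfold ContinuousAt
    have h0 : (deriv a ‖(0 : EuclideanSpace ℝ (Fin n))‖ / ‖(0 : EuclideanSpace ℝ (Fin n))‖) •
      (innerSL ℝ (0 : EuclideanSpace ℝ (Fin n)) : EuclideanSpace ℝ (Fin n) →L[ℝ] ℝ).smulRight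
        (0 : EuclideanSpace ℝ (Fin n)) = 0 := by simp
    beta_reduce
    rw [h0]
    apply squeeze_zero_norm hbd
    have : Continuous fun p : EuclideanSpace ℝ (Fin n) => |derivWithin a (Ici 0) ‖p‖| * ‖p‖ :=
      (a1norm_cont ha).abs.mul continuous_norm
    have h2 := this.tendsto 0
    simpa using h2
  · have hp0 : 0 < ‖p‖ := norm_pos_iff.2 hp
    have h1 : ContinuousAt (fun p : EuclideanSpace ℝ (Fin n) =>
        (derivWithin a (Ici 0) ‖p‖ / ‖p‖) •
          (innerSL ℝ p : EuclideanSpace ℝ (Fin n) →L[ℝ] ℝ).smulRight p) p := by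
      apply ContinuousAt.fun_smul
      · exact (a1norm_cont ha).continuousAt.div continuous_norm.continuousAt hp0.ne'
      · have h2 : Continuous fun p : EuclideanSpace ℝ (Fin n) =>
          ContinuousLinearMap.smulRightL ℝ (EuclideanSpace ℝ (Fin n)) (EuclideanSpace ℝ (Fin n))
            (innerSL ℝ p) p := by fun_prop
        exact h2.continuousAt
    refine h1.congr ?_
    have : ∀ᶠ q in 𝓝 p, q ≠ 0 := isOpen_ne.mem_nhds hp
    filter_upwards [this] with q hq
    rw [a1_eq (norm_pos_iff.2 hq)]

theorem Psi_hasFDerivAt (ha : ContDiffOn ℝ 1 a (Ici 0)) (p : EuclideanSpace ℝ (Fin n)) :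
    HasFDerivAt (fun p : EuclideanSpace ℝ (Fin n) => a ‖p‖ • p) (AopL a p) p := by
  rcases eq_or_ne p 0 with hp | hp
  · subst hp
    have e : AopL a (0 : EuclideanSpace ℝ (Fin n)) = a 0 • ContinuousLinearMap.id ℝ _ := by
      simp [AopL]
    rw [e, hasFDerivAt_iff_isLittleO_nhds_zero]
    simp only [zero_add, norm_zero, smul_zero, sub_zero]
    have h1 : (fun h : EuclideanSpace ℝ (Fin n) => a ‖h‖ - a 0) =o[𝓝 0] fun _ => (1 : ℝ) := by
      rw [Asymptotics.isLittleO_one_iff]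
      have := ((anorm_cont (n := n) ha).fun_sub (continuous_const (y := a 0))).tendsto 0
      simpa using this
    have h2 := h1.smul_isBigO (Asymptotics.isBigO_refl (fun h : EuclideanSpace ℝ (Fin n) => h) (𝓝 0))
    refine (h2.congr (fun h => ?_) (fun h => ?_))
    · simp [sub_smul]
    · simp
  · have hp0 : 0 < ‖p‖ := norm_pos_iff.2 hp
    have hn : HasFDerivAt (fun p : EuclideanSpace ℝ (Fin n) => ‖p‖)
        (‖p‖⁻¹ • (innerSL ℝ p : EuclideanSpace ℝ (Fin n) →L[ℝ] ℝ)) p := by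
      have h1 : HasFDerivAt (fun p : EuclideanSpace ℝ (Fin n) => ‖p‖ ^ 2)
          ((2 : ℕ) • (innerSL ℝ p : EuclideanSpace ℝ (Fin n) →L[ℝ] ℝ)) p :=
        (hasStrictFDerivAt_norm_sq p).hasFDerivAt
      have h2 := h1.sqrt (by positivity)
      have h3 : (fun p : EuclideanSpace ℝ (Fin n) => √(‖p‖ ^ 2)) = fun p => ‖p‖ := by
        funext p; exact Real.sqrt_sq (norm_nonneg p)
      rw [h3] at h2
      refine h2.congr_fderiv ?_
      rw [Real.sqrt_sq (norm_nonneg p)]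
      ext v
      simp
      field_simp
    have h1 := (((a_contDiffAt ha hp0).differentiableAt (by simp)).hasDerivAt.comp_hasFDerivAt p hn)
    have h2 := h1.smul (hasFDerivAt_id p)
    refine h2.congr_fderiv ?_
    ext v
    simp [AopL, div_eq_mul_inv]
    ring

theorem Psi_contDiff (ha : ContDiffOn ℝ 1 a (Ici 0)) :
    ContDiff ℝ 1 (fun p : EuclideanSpace ℝ (Fin n) => a ‖p‖ • p) := by
  rw [contDiff_one_iff_fderiv]
  refine ⟨fun p => (Psi_hasFDerivAt ha p).differentiableAt, ?_⟩
  have : fderiv ℝ (fun p : EuclideanSpace ℝ (Fin n) => a ‖p‖ • p) = AopL a :=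
    funext fun p => (Psi_hasFDerivAt ha p).fderiv
  rw [this]; exact AopL_cont ha

theorem Aop_ell (ha : ContDiffOn ℝ 1 a (Ici 0)) (hapos : ∀ t ≥ (0 : ℝ), 0 < a t)
    (hlam : ∀ t ≥ (0 : ℝ), 0 < lam1 a t) {K : Set (EuclideanSpace ℝ (Fin n))} (hK : IsCompact K) :
    ∃ lam Lam, 0 < lam ∧ 0 ≤ Lam ∧ ∀ p ∈ K, ∀ q, lam * ‖q‖ ^ 2 ≤ ⟪Aop a p q, q⟫ ∧
      ‖Aop a p q‖ ≤ Lam * ‖q‖ := by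
  obtain ⟨Lam, hLam⟩ := hK.exists_bound_of_continuousOn (AopL_cont ha).continuousOn
  have hupper : ∀ p ∈ K, ∀ q, ‖Aop a p q‖ ≤ max Lam 0 * ‖q‖ := by
    intro p hp q
    rw [← AopL_apply]
    refine (ContinuousLinearMap.le_opNorm _ _).trans ?_
    gcongr
    exact (hLam p hp).trans (le_max_left _ _)
  rcases K.eq_empty_or_nonempty with hKe | hKn
  · exact ⟨1, 0, one_pos, le_rfl, by simp [hKe]⟩
  · obtain ⟨p0, hp0, hmin⟩ := hK.exists_isMinOn hKn
      ((anorm_cont ha).min (lam1norm_cont ha)).continuousOn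
    refine ⟨min (a ‖p0‖) (lam1 a ‖p0‖), max Lam 0,
      lt_min (hapos _ (norm_nonneg _)) (hlam _ (norm_nonneg _)), le_max_right _ _, ?_⟩
    intro p hp q
    refine ⟨le_trans ?_ (Aop_lower p q), hupper p hp q⟩
    have : min (a ‖p0‖) (lam1 a ‖p0‖) ≤ min (a ‖p‖) (lam1 a ‖p‖) := hmin hp
    gcongr

end
/-- Directional derivative of `u`. -/
def Wf (u : EuclideanSpace ℝ (Fin n) → ℝ) (e : EuclideanSpace ℝ (Fin n)) :
    EuclideanSpace ℝ (Fin n) → ℝ := fun x => ⟪gradient u x, e⟫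

/-- The flux of the linearised equation. -/
def Xf (a : ℝ → ℝ) (u : EuclideanSpace ℝ (Fin n) → ℝ) (e : EuclideanSpace ℝ (Fin n)) :
    EuclideanSpace ℝ (Fin n) → EuclideanSpace ℝ (Fin n) :=
  fun x => Aop a (gradient u x) (gradient (Wf u e) x)

section lin
variable {a f : ℝ → ℝ} {Ω : Set (EuclideanSpace ℝ (Fin n))} {u : EuclideanSpace ℝ (Fin n) → ℝ}
  {e : EuclideanSpace ℝ (Fin n)}

theorem grad_contDiffOn (hΩ : IsOpen Ω) (hu2 : ContDiffOn ℝ 2 u Ω) :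
    ContDiffOn ℝ 1 (gradient u) Ω := by
  have h1 : ContDiffOn ℝ 1 (fderiv ℝ u) Ω := hu2.fderiv_of_isOpen hΩ (by norm_num)
  exact ((InnerProductSpace.toDual ℝ (EuclideanSpace ℝ (Fin n))).symm.contDiff).comp_contDiffOn h1

theorem Wf_contDiffOn (hΩ : IsOpen Ω) (hu2 : ContDiffOn ℝ 2 u Ω) :
    ContDiffOn ℝ 1 (Wf u e) Ω :=
  (grad_contDiffOn hΩ hu2).inner ℝ contDiffOn_const

theorem grad_cont_of_c1 {w : EuclideanSpace ℝ (Fin n) → ℝ} (hΩ : IsOpen Ω)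
    (hw : ContDiffOn ℝ 1 w Ω) : ContinuousOn (gradient w) Ω := by
  have h1 : ContinuousOn (fderiv ℝ w) Ω := hw.continuousOn_fderiv_of_isOpen hΩ (by norm_num)
  exact ((InnerProductSpace.toDual ℝ (EuclideanSpace ℝ (Fin n))).symm.continuous).comp_continuousOn h1

theorem Wf_grad_cont (hΩ : IsOpen Ω) (hu2 : ContDiffOn ℝ 2 u Ω) :
    ContinuousOn (gradient (Wf u e)) Ω :=
  grad_cont_of_c1 hΩ (Wf_contDiffOn hΩ hu2)

theorem AopL_apply_cont {p q : EuclideanSpace ℝ (Fin n) → EuclideanSpace ℝ (Fin n)}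
    (ha : ContDiffOn ℝ 1 a (Ici 0)) {K : Set (EuclideanSpace ℝ (Fin n))}
    (hp : ContinuousOn p K) (hq : ContinuousOn q K) :
    ContinuousOn (fun x => Aop a (p x) (q x)) K := by
  have h1 : ContinuousOn (fun x => AopL a (p x) (q x)) K :=
    ((AopL_cont ha).comp_continuousOn hp).clm_apply hq
  refine h1.congr (fun x _ => ?_)
  exact (AopL_apply _ _ _).symm

theorem Xf_cont (ha : ContDiffOn ℝ 1 a (Ici 0)) (hΩ : IsOpen Ω) (hu2 : ContDiffOn ℝ 2 u Ω) :
    ContinuousOn (Xf a u e) Ω :=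
  AopL_apply_cont ha (grad_contDiffOn hΩ hu2).continuousOn (Wf_grad_cont hΩ hu2)

theorem fderiv_grad_e (hΩ : IsOpen Ω) (hu2 : ContDiffOn ℝ 2 u Ω)
    {x : EuclideanSpace ℝ (Fin n)} (hx : x ∈ Ω) :
    fderiv ℝ (gradient u) x e = gradient (Wf u e) x := by
  have hg : DifferentiableAt ℝ (gradient u) x :=
    ((grad_contDiffOn hΩ hu2).contDiffAt (hΩ.mem_nhds hx)).differentiableAt (by norm_num)
  have hf : DifferentiableAt ℝ (fderiv ℝ u) x :=
    ((hu2.fderiv_of_isOpen hΩ (m := 1) (by norm_num)).contDiffAt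
      (hΩ.mem_nhds hx)).differentiableAt (by norm_num)
  have key : ∀ y z : EuclideanSpace ℝ (Fin n),
      ⟪fderiv ℝ (gradient u) x y, z⟫ = fderiv ℝ (fderiv ℝ u) x y z := by
    intro y z
    have h1 : HasFDerivAt (fun x => fderiv ℝ u x z)
        ((ContinuousLinearMap.apply ℝ ℝ z).comp (fderiv ℝ (fderiv ℝ u) x)) x :=
      (ContinuousLinearMap.apply ℝ ℝ z).hasFDerivAt.comp x hf.hasFDerivAt
    have h2 : HasFDerivAt (fun x => ⟪z, gradient u x⟫)
        ((innerSL ℝ z).comp (fderiv ℝ (gradient u) x)) x :=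
      (innerSL ℝ z).hasFDerivAt.comp x hg.hasFDerivAt
    have h3 : (fun x => ⟪z, gradient u x⟫) = fun x => fderiv ℝ u x z := by
      funext x; exact inner_grad u x z
    rw [h3] at h2
    have h4 := congrArg (fun L => L y) (h2.unique h1)
    simp only [ContinuousLinearMap.comp_apply, innerSL_apply_apply,
      ContinuousLinearMap.apply_apply] at h4
    rw [real_inner_comm]; exact h4
  have hsym : IsSymmSndFDerivAt ℝ u x :=
    (hu2.contDiffAt (hΩ.mem_nhds hx)).isSymmSndFDerivAt
      (by simp [minSmoothness_of_isRCLikeNormedField])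
  refine ext_inner_left ℝ (fun y => ?_)
  rw [inner_grad, real_inner_comm, key]
  have h5 : HasFDerivAt (Wf u e) ((innerSL ℝ e).comp (fderiv ℝ (gradient u) x)) x := by
    have h2 : HasFDerivAt (fun x => ⟪e, gradient u x⟫)
        ((innerSL ℝ e).comp (fderiv ℝ (gradient u) x)) x :=
      (innerSL ℝ e).hasFDerivAt.comp x hg.hasFDerivAt
    have h3 : (fun x => ⟪e, gradient u x⟫) = Wf u e := by
      funext x; exact real_inner_comm _ _
    rwa [h3] at h2
  rw [h5.fderiv]
  simp only [ContinuousLinearMap.comp_apply, innerSL_apply_apply]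
  rw [real_inner_comm, key]
  exact hsym.eq _ _

theorem flux_hasFDerivAt (ha : ContDiffOn ℝ 1 a (Ici 0)) (hΩ : IsOpen Ω)
    (hu2 : ContDiffOn ℝ 2 u Ω) {x : EuclideanSpace ℝ (Fin n)} (hx : x ∈ Ω) :
    HasFDerivAt (fun x => a ‖gradient u x‖ • gradient u x)
      ((AopL a (gradient u x)).comp (fderiv ℝ (gradient u) x)) x := by
  have hg : DifferentiableAt ℝ (gradient u) x :=
    ((grad_contDiffOn hΩ hu2).contDiffAt (hΩ.mem_nhds hx)).differentiableAt (by norm_num)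
  exact (Psi_hasFDerivAt ha (gradient u x)).comp x hg.hasFDerivAt

theorem linearized (ha : ContDiffOn ℝ 1 a (Ici 0)) (hf : ContDiff ℝ 1 f) (hΩ : IsOpen Ω)
    (hu2 : ContDiffOn ℝ 2 u Ω) (hsol : IsWeakSolution a f Ω u)
    {ξ : EuclideanSpace ℝ (Fin n) → ℝ} (hξ : IsTestOn Ω ξ) :
    ∫ x in Ω, ⟪Xf a u e x, gradient ξ x⟫ = ∫ x in Ω, deriv f (u x) * (Wf u e x * ξ x) := by
  obtain ⟨⟨Kl, hKl⟩, hcs, hsub⟩ := hξ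
  set S := tsupport ξ with hS
  have hSc : IsCompact S := hcs
  obtain ⟨δ, hδ, hδs⟩ := hSc.exists_cthickening_subset_open hΩ hsub
  set K := cthickening δ S with hK
  have hKc : IsCompact K := hSc.cthickening
  set t0 : ℝ := δ / (‖e‖ + 1) with ht0
  have ht0p : 0 < t0 := by positivity
  have hmem : ∀ t : ℝ, |t| < t0 → ∀ x ∈ S, x + t • e ∈ K := by
    intro t ht x hx
    apply mem_cthickening_of_dist_le _ x δ S hx
    rw [dist_eq_norm, add_sub_cancel_left, norm_smul, Real.norm_eq_abs]
    have h1 : |t| * (‖e‖ + 1) ≤ δ := by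
      rw [ht0, lt_div_iff₀ (by positivity)] at ht; exact ht.le
    nlinarith [abs_nonneg t]
  have hucont : ContinuousOn u Ω := hu2.continuousOn
  have hgcont : ContinuousOn (gradient u) Ω := (grad_contDiffOn hΩ hu2).continuousOn
  set F : EuclideanSpace ℝ (Fin n) → EuclideanSpace ℝ (Fin n) :=
    fun x => a ‖gradient u x‖ • gradient u x with hF
  have hFcont : ContinuousOn F Ω := ((anorm_cont ha).comp_continuousOn hgcont).smul hgcont
  have hfcont : ContinuousOn (fun x => f (u x)) Ω := hf.continuous.comp_continuousOn hucont
  have hf'cont : ContinuousOn (fun x => deriv f (u x)) Ω :=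
    (hf.continuous_deriv (by norm_num)).comp_continuousOn hucont
  have hWcont : ContinuousOn (Wf u e) Ω := (Wf_contDiffOn hΩ hu2).continuousOn
  have hXcont : ContinuousOn (Xf a u e) Ω := Xf_cont ha hΩ hu2
  have hgξ : ∀ x, ‖gradient ξ x‖ ≤ Kl := fun x => by
    rw [norm_grad]; exact norm_fderiv_le_of_lipschitz ℝ hKl
  have hξ0 : ∀ x, x ∉ S → ξ x = 0 := fun x hx => image_eq_zero_of_notMem_tsupport hx
  have hgξ0 : ∀ x, x ∉ S → gradient ξ x = 0 := fun x hx => grad_eq_zero_of_notMem hx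
  obtain ⟨Mξ, hMξ⟩ := hcs.exists_bound_of_continuous hKl.continuous
  obtain ⟨MX, hMX⟩ := hKc.exists_bound_of_continuousOn (hXcont.mono hδs)
  obtain ⟨Mw, hMw⟩ := hKc.exists_bound_of_continuousOn ((hf'cont.mul hWcont).mono hδs)
  have hcomp : ∀ t : ℝ, |t| < t0 → ContinuousOn (fun x => x + t • e) S ∧
      MapsTo (fun x => x + t • e) S Ω := fun t ht =>
    ⟨by fun_prop, fun x hx => hδs (hmem t ht x hx)⟩
  set Φ : ℝ → EuclideanSpace ℝ (Fin n) → ℝ := fun t x =>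
    ⟪F (x + t • e), gradient ξ x⟫ - f (u (x + t • e)) * ξ x with hΦ
  set Φ' : ℝ → EuclideanSpace ℝ (Fin n) → ℝ := fun t x =>
    ⟪Xf a u e (x + t • e), gradient ξ x⟫ -
      (deriv f (u (x + t • e)) * Wf u e (x + t • e)) * ξ x with hΦ'
  have hSm : MeasurableSet S := hSc.measurableSet
  have hSfin : volume S ≠ ∞ := hSc.measure_lt_top.ne
  have hgm : AEStronglyMeasurable (gradient ξ) (volume.restrict S) :=
    (measurable_grad ξ).aestronglyMeasurable
  have hξm : AEStronglyMeasurable ξ (volume.restrict S) := hKl.continuous.aestronglyMeasurable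
  have hm1 : ∀ t : ℝ, |t| < t0 → AEStronglyMeasurable (fun x => ⟪F (x + t • e), gradient ξ x⟫)
      (volume.restrict S) := fun t ht =>
    ((hFcont.comp (hcomp t ht).1 (hcomp t ht).2).aestronglyMeasurable hSm).inner (𝕜 := ℝ) hgm
  have hm2 : ∀ t : ℝ, |t| < t0 → AEStronglyMeasurable (fun x => f (u (x + t • e)) * ξ x)
      (volume.restrict S) := fun t ht =>
    ((hfcont.comp (hcomp t ht).1 (hcomp t ht).2).aestronglyMeasurable hSm).mul hξm
  obtain ⟨MF, hMF⟩ := hKc.exists_bound_of_continuousOn (hFcont.mono hδs)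
  obtain ⟨Mf, hMf⟩ := hKc.exists_bound_of_continuousOn (hfcont.mono hδs)
  have hi1 : ∀ t : ℝ, |t| < t0 → IntegrableOn (fun x => ⟪F (x + t • e), gradient ξ x⟫) S := by
    intro t ht
    apply intOn_bdd hSfin hSm (hm1 t ht) (MF * Kl)
    intro x hx
    exact (norm_inner_le_norm _ _).trans (mul_le_mul (hMF _ (hmem t ht x hx)) (hgξ x)
      (norm_nonneg _) ((norm_nonneg _).trans (hMF _ (hmem t ht x hx))))
  have hi2 : ∀ t : ℝ, |t| < t0 → IntegrableOn (fun x => f (u (x + t • e)) * ξ x) S := by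
    intro t ht
    apply intOn_bdd hSfin hSm (hm2 t ht) (Mf * Mξ)
    intro x hx
    rw [norm_mul]
    exact (mul_le_mul (hMf _ (hmem t ht x hx)) (hMξ x)
      (norm_nonneg _) ((norm_nonneg _).trans (hMf _ (hmem t ht x hx))))
  have hn1 : AEStronglyMeasurable (fun x => ⟪Xf a u e x, gradient ξ x⟫) (volume.restrict S) :=
    ((hXcont.mono hsub).aestronglyMeasurable hSm).inner (𝕜 := ℝ) hgm
  have hn2 : AEStronglyMeasurable (fun x => (deriv f (u x) * Wf u e x) * ξ x) (volume.restrict S) :=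
    (((hf'cont.mul hWcont).mono hsub).aestronglyMeasurable hSm).mul hξm
  have hSK : S ⊆ K := self_subset_cthickening S
  have hj1 : IntegrableOn (fun x => ⟪Xf a u e x, gradient ξ x⟫) S := by
    apply intOn_bdd hSfin hSm hn1 (MX * Kl)
    intro x hx
    exact (norm_inner_le_norm _ _).trans (mul_le_mul (hMX _ (hSK hx)) (hgξ x)
      (norm_nonneg _) ((norm_nonneg _).trans (hMX _ (hSK hx))))
  have hj2 : IntegrableOn (fun x => (deriv f (u x) * Wf u e x) * ξ x) S := by
    apply intOn_bdd hSfin hSm hn2 (Mw * Mξ)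
    intro x hx
    rw [norm_mul]
    exact (mul_le_mul (hMw _ (hSK hx)) (hMξ x)
      (norm_nonneg _) ((norm_nonneg _).trans (hMw _ (hSK hx))))
  -- the function of `t` vanishes near zero
  have hzero : ∀ t : ℝ, |t| < t0 → ∫ x in S, Φ t x = 0 := by
    intro t ht
    have htest : IsTestOn Ω (fun x => ξ (x - t • e)) := by
      have hts : tsupport (fun x => ξ (x - t • e)) ⊆ (fun x => x + t • e) '' S := by
        apply closure_minimal
        · intro x hx
          exact ⟨x - t • e, subset_tsupport ξ hx, by simp⟩
        · exact (hSc.image_of_continuousOn (hcomp t ht).1).isClosed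
      have hic : IsCompact ((fun x => x + t • e) '' S) := hSc.image_of_continuousOn (hcomp t ht).1
      refine ⟨⟨Kl, ?_⟩, ?_, ?_⟩
      · intro x y
        have := hKl (x - t • e) (y - t • e)
        simpa using this
      · exact hic.of_isClosed_subset (isClosed_tsupport _) hts
      · exact hts.trans (image_subset_iff.2 (hcomp t ht).2)
    have hgr : ∀ x, gradient (fun x => ξ (x - t • e)) x = gradient ξ (x - t • e) := by
      intro x
      unfold gradient
      rw [fderiv_comp_sub]
    have hnm : ∀ x, x ∉ Ω → x - t • e ∉ S := by
      intro x hx hx2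
      have := (hcomp t ht).2 hx2
      simp only [sub_add_cancel] at this
      exact hx this
    have h := hsol _ htest
    have e1 : ∫ x in Ω, a ‖gradient u x‖ * ⟪gradient u x, gradient (fun x => ξ (x - t • e)) x⟫
        = ∫ x in S, ⟪F (x + t • e), gradient ξ x⟫ := by
      rw [setIntegral_eq_integral_of_forall_compl_eq_zero
        (fun x hx => by rw [hgr, hgξ0 _ (hnm x hx)]; simp),
        ← integral_add_right_eq_self _ (t • e)]
      rw [setIntegral_eq_integral_of_forall_compl_eq_zero
        (fun x hx => by rw [hgξ0 _ hx]; simp)]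
      congr 1; funext x
      rw [hgr]
      simp only [hF, inner_smul_left, add_sub_cancel_right]
      simp
    have e2 : ∫ x in Ω, f (u x) * (fun x => ξ (x - t • e)) x
        = ∫ x in S, f (u (x + t • e)) * ξ x := by
      rw [setIntegral_eq_integral_of_forall_compl_eq_zero
        (fun x hx => by simp only []; rw [hξ0 _ (hnm x hx)]; simp),
        ← integral_add_right_eq_self _ (t • e)]
      rw [setIntegral_eq_integral_of_forall_compl_eq_zero
        (fun x hx => by rw [hξ0 _ hx]; simp)]
      congr 1; funext x
      simp
    rw [e1, e2] at h
    simp only [hΦ]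
    rw [integral_sub (hi1 t ht) (hi2 t ht), h, sub_self]
  have habs0 : |(0 : ℝ)| < t0 := by simpa using ht0p
  have hball : ball (0 : ℝ) t0 ∈ 𝓝 (0 : ℝ) := ball_mem_nhds _ ht0p
  have hbt : ∀ t ∈ ball (0 : ℝ) t0, |t| < t0 := fun t ht => by
    simpa [dist_eq_norm] using ht
  have hD := (hasDerivAt_integral_of_dominated_loc_of_deriv_le (μ := volume.restrict S)
    (F := Φ) (F' := Φ') (x₀ := (0 : ℝ)) (bound := fun _ => MX * Kl + Mw * Mξ) hball
    (by
      filter_upwards [hball] with t ht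
      exact (hm1 t (hbt t ht)).sub (hm2 t (hbt t ht)))
    ((hi1 0 habs0).sub (hi2 0 habs0))
    (by
      simp only [hΦ', zero_smul, add_zero]
      exact hn1.sub hn2)
    (by
      filter_upwards [ae_restrict_mem hSm] with x hx t ht
      have hk := hmem t (hbt t ht) x hx
      simp only [hΦ']
      refine (norm_sub_le _ _).trans (add_le_add ?_ ?_)
      · exact (norm_inner_le_norm _ _).trans (mul_le_mul (hMX _ hk) (hgξ x)
          (norm_nonneg _) ((norm_nonneg _).trans (hMX _ hk)))
      · rw [norm_mul]
        exact (mul_le_mul (hMw _ hk) (hMξ x) (norm_nonneg _) ((norm_nonneg _).trans (hMw _ hk))))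
    (by
      have : IntegrableOn (fun _ : EuclideanSpace ℝ (Fin n) => MX * Kl + Mw * Mξ) S :=
        integrableOn_const hSfin
      exact this)
    (by
      filter_upwards [ae_restrict_mem hSm] with x hx t ht
      have hk : x + t • e ∈ Ω := hδs (hmem t (hbt t ht) x hx)
      have hl : HasDerivAt (fun t : ℝ => x + t • e) e t := by
        have := ((hasDerivAt_id t).smul_const e).const_add x
        simpa using this
      have d1 : HasDerivAt (fun t : ℝ => F (x + t • e)) (Xf a u e (x + t • e)) t := by
        have := (flux_hasFDerivAt ha hΩ hu2 hk).comp_hasDerivAt t hl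
        have h2 : ((AopL a (gradient u (x + t • e))).comp (fderiv ℝ (gradient u) (x + t • e))) e
            = Xf a u e (x + t • e) := by
          rw [ContinuousLinearMap.comp_apply, fderiv_grad_e hΩ hu2 hk, AopL_apply]; rfl
        rw [h2] at this
        exact this
      have d2 : HasDerivAt (fun t : ℝ => u (x + t • e)) (Wf u e (x + t • e)) t := by
        have hud : DifferentiableAt ℝ u (x + t • e) :=
          (hu2.contDiffAt (hΩ.mem_nhds hk)).differentiableAt (by norm_num)
        have := hud.hasFDerivAt.comp_hasDerivAt t hl
        rw [← inner_grad, real_inner_comm] at this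
        exact this
      have d3 : HasDerivAt (fun t : ℝ => f (u (x + t • e)))
          (deriv f (u (x + t • e)) * Wf u e (x + t • e)) t :=
        ((hf.differentiable (by norm_num)) _).hasDerivAt.comp t d2
      have d4 : HasDerivAt (fun t : ℝ => ⟪F (x + t • e), gradient ξ x⟫)
          ⟪Xf a u e (x + t • e), gradient ξ x⟫ t := by
        have := d1.inner ℝ (hasDerivAt_const t (gradient ξ x))
        simpa using this
      exact d4.sub (d3.mul_const (ξ x)))).2
  have hev : (fun t => ∫ x in S, Φ t x) =ᶠ[𝓝 0] fun _ => (0 : ℝ) := by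
    filter_upwards [hball] with t ht
    exact hzero t (hbt t ht)
  have h0 : ∫ x in S, Φ' 0 x = 0 :=
    (hD.congr_of_eventuallyEq hev.symm).unique (hasDerivAt_const (0 : ℝ) (0 : ℝ))
  simp only [hΦ', zero_smul, add_zero] at h0
  rw [integral_sub hj1 hj2] at h0
  have hnS : ∀ x, x ∉ Ω → x ∉ S := fun x hx h => hx (hsub h)
  rw [setIntegral_eq_integral_of_forall_compl_eq_zero
    (fun x hx => by rw [hgξ0 _ (hnS x hx)]; simp),
    setIntegral_eq_integral_of_forall_compl_eq_zero
    (fun x hx => by rw [hξ0 _ (hnS x hx)]; simp)]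
  rw [setIntegral_eq_integral_of_forall_compl_eq_zero
    (fun x hx => by rw [hgξ0 _ hx]; simp),
    setIntegral_eq_integral_of_forall_compl_eq_zero
    (fun x hx => by rw [hξ0 _ hx]; simp)] at h0
  simp only [mul_assoc] at h0
  linarith

end lin
/-- The standing hypotheses. -/
structure Setup (a f : ℝ → ℝ) (Ω : Set (EuclideanSpace ℝ (Fin n)))
    (u : EuclideanSpace ℝ (Fin n) → ℝ) (Du : EuclideanSpace ℝ (Fin n) → EuclideanSpace ℝ (Fin n))
    (Ω₀ : Set (EuclideanSpace ℝ (Fin n))) (e : EuclideanSpace ℝ (Fin n)) : Prop where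
  hΩ : IsOpen Ω
  ha : ContDiffOn ℝ 1 a (Ici 0)
  hapos : ∀ t ≥ (0 : ℝ), 0 < a t
  hlam : ∀ t ≥ (0 : ℝ), 0 < lam1 a t
  hf : ContDiff ℝ 1 f
  hu2 : ContDiffOn ℝ 2 u Ω
  hucl : ContinuousOn u (closure Ω)
  hDu : ∀ x ∈ Ω, Du x = gradient u x
  hDuc : ContinuousOn Du (closure Ω)
  hsol : IsWeakSolution a f Ω u
  hstab : IsStable a f Ω u
  hΩ₀o : IsOpen Ω₀
  hsub : Ω₀ ⊆ Ω
  hfr : frontier Ω₀ ⊆ frontier Ω ∪ {x ∈ Ω | gradient u x = 0}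
  he1 : ∀ p ∈ closure Ω₀ ∩ frontier Ω, 0 ≤ ⟪Du p, e⟫

/-- `H(m) = m²/(m+ε)`. -/
def Hf (ε m : ℝ) : ℝ := m ^ 2 / (m + ε)
/-- `H'(m)`. -/
def Hf1 (ε m : ℝ) : ℝ := 1 - ε ^ 2 / (m + ε) ^ 2
/-- `H''(m)`. -/
def Hf2 (ε m : ℝ) : ℝ := 2 * ε ^ 2 / (m + ε) ^ 3

theorem Hf_hasDerivAt {ε m : ℝ} (hε : 0 < ε) (hm : 0 ≤ m) : HasDerivAt (Hf ε) (Hf1 ε m) m := by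
  have h : m + ε ≠ 0 := by positivity
  have h1 : HasDerivAt (fun m : ℝ => m ^ 2 / (m + ε))
      (((2 : ℕ) * m ^ 1 * (m + ε) - m ^ 2 * 1) / (m + ε) ^ 2) m := by
    have := ((hasDerivAt_pow 2 m).fun_div ((hasDerivAt_id m).add_const ε) h)
    simpa using this
  refine h1.congr_deriv ?_
  unfold Hf1; field_simp; push_cast; ring

theorem Hf1_hasDerivAt {ε m : ℝ} (hε : 0 < ε) (hm : 0 ≤ m) : HasDerivAt (Hf1 ε) (Hf2 ε m) m := by
  have h : m + ε ≠ 0 := by positivity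
  have h1 : HasDerivAt (fun m : ℝ => (m + ε) ^ 2) ((2 : ℕ) * (m + ε) ^ 1 * 1) m :=
    ((hasDerivAt_id m).add_const ε).fun_pow 2
  have h2 : HasDerivAt (fun m : ℝ => 1 - ε ^ 2 / (m + ε) ^ 2)
      (-((0 * (m + ε) ^ 2 - ε ^ 2 * ((2 : ℕ) * (m + ε) ^ 1 * 1)) / ((m + ε) ^ 2) ^ 2)) m :=
    (((hasDerivAt_const m (ε ^ 2)).fun_div h1 (by positivity)).const_sub 1)
  refine h2.congr_deriv ?_
  unfold Hf2; field_simp; push_cast; ring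

theorem Hf_bds {ε m : ℝ} (hε : 0 < ε) (hm : 0 ≤ m) :
    0 ≤ Hf ε m ∧ Hf ε m ≤ m ∧ 0 ≤ Hf1 ε m ∧ Hf1 ε m ≤ 1 ∧ 0 ≤ Hf2 ε m := by
  have h : 0 < m + ε := by positivity
  refine ⟨by unfold Hf; positivity, ?_, ?_, ?_, by unfold Hf2; positivity⟩
  · unfold Hf; rw [div_le_iff₀ h]; nlinarith
  · unfold Hf1; rw [sub_nonneg, div_le_one (by positivity)]; nlinarith
  · unfold Hf1
    have : 0 ≤ ε ^ 2 / (m + ε) ^ 2 := by positivity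
    linarith

/-- truncated negative part -/
def Tf (ε s : ℝ) : ℝ := Hf ε (max (-ε - s) 0)
/-- its derivative -/
def Tf1 (ε s : ℝ) : ℝ := - Hf1 ε (max (-ε - s) 0)
/-- product -/
def Pf (ε s : ℝ) : ℝ := Tf ε s * Tf1 ε s
/-- derivative of the product -/
def Pf1 (ε s : ℝ) : ℝ := Hf1 ε (max (-ε - s) 0) ^ 2 +
  Hf ε (max (-ε - s) 0) * Hf2 ε (max (-ε - s) 0)

theorem Tf_hasDerivAt {ε : ℝ} (hε : 0 < ε) (s : ℝ) : HasDerivAt (Tf ε) (Tf1 ε s) s := by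
  have h1 := hasDerivAt_max_comp (K := Hf ε) (K' := Hf1 ε) (fun m hm => Hf_hasDerivAt hε hm)
    (by simp [Hf]) (by simp [Hf1, hε.ne']) (-ε - s)
  have h2 : HasDerivAt (fun s : ℝ => -ε - s) (-1) s := by
    simpa using (hasDerivAt_id s).const_sub (-ε)
  have h3 := h1.comp s h2
  refine h3.congr_deriv ?_
  simp [Tf1]

theorem Pf_hasDerivAt {ε : ℝ} (hε : 0 < ε) (s : ℝ) : HasDerivAt (Pf ε) (Pf1 ε s) s := by
  have h1 := hasDerivAt_max_comp (K := fun m => Hf ε m * Hf1 ε m)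
    (K' := fun m => Hf1 ε m * Hf1 ε m + Hf ε m * Hf2 ε m)
    (fun m hm => (Hf_hasDerivAt hε hm).fun_mul (Hf1_hasDerivAt hε hm))
    (by simp [Hf]) (by simp [Hf1, Hf, hε.ne']) (-ε - s)
  have h2 : HasDerivAt (fun s : ℝ => -ε - s) (-1) s := by
    simpa using (hasDerivAt_id s).const_sub (-ε)
  have h3 := (h1.comp s h2).neg
  have h4 : (-((fun r => (fun m => Hf ε m * Hf1 ε m) (max r 0)) ∘ fun s => -ε - s)) = Pf ε := by
    funext s; simp [Pf, Tf, Tf1]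
  rw [h4] at h3
  refine h3.congr_deriv ?_
  simp only [Pf1]; ring

theorem m_cont (ε : ℝ) : Continuous fun s : ℝ => max (-ε - s) 0 := by fun_prop

theorem Hf_cont {ε : ℝ} (hε : 0 < ε) : Continuous fun s : ℝ => Hf ε (max (-ε - s) 0) := by
  unfold Hf
  refine Continuous.div (by fun_prop) (by fun_prop) (fun s => ?_)
  have := le_max_right (-ε - s) 0; positivity

theorem Hf1_cont {ε : ℝ} (hε : 0 < ε) : Continuous fun s : ℝ => Hf1 ε (max (-ε - s) 0) := by
  unfold Hf1
  refine continuous_const.sub (Continuous.div (by fun_prop) (by fun_prop) (fun s => ?_))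
  have := le_max_right (-ε - s) 0; positivity

theorem Hf2_cont {ε : ℝ} (hε : 0 < ε) : Continuous fun s : ℝ => Hf2 ε (max (-ε - s) 0) := by
  unfold Hf2
  refine Continuous.div (by fun_prop) (by fun_prop) (fun s => ?_)
  have := le_max_right (-ε - s) 0; positivity

theorem c1_of {G G' : ℝ → ℝ} (h : ∀ s, HasDerivAt G (G' s) s) (hc : Continuous G') :
    ContDiff ℝ 1 G := by
  rw [contDiff_one_iff_deriv]
  refine ⟨fun s => (h s).differentiableAt, ?_⟩
  have : deriv G = G' := funext fun s => (h s).deriv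
  rwa [this]

theorem Tf_c1 {ε : ℝ} (hε : 0 < ε) : ContDiff ℝ 1 (Tf ε) :=
  c1_of (Tf_hasDerivAt hε) (Hf1_cont hε).neg

theorem Pf1_cont {ε : ℝ} (hε : 0 < ε) : Continuous (Pf1 ε) :=
  ((Hf1_cont hε).pow 2).add ((Hf_cont hε).mul (Hf2_cont hε))

theorem Pf_c1 {ε : ℝ} (hε : 0 < ε) : ContDiff ℝ 1 (Pf ε) :=
  c1_of (Pf_hasDerivAt hε) (Pf1_cont hε)

theorem Tf_zero {ε s : ℝ} (h : -ε ≤ s) : Tf ε s = 0 := by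
  unfold Tf; rw [max_eq_right (by linarith)]; simp [Hf]

theorem Pf_zero {ε s : ℝ} (h : -ε ≤ s) : Pf ε s = 0 := by
  unfold Pf; rw [Tf_zero h, zero_mul]

theorem Tf1_zero {ε s : ℝ} (hε : 0 < ε) (h : -ε ≤ s) : Tf1 ε s = 0 := by
  unfold Tf1; rw [max_eq_right (by linarith)]; simp [Hf1, hε.ne']

theorem Tf_bds {ε : ℝ} (hε : 0 < ε) (s : ℝ) : 0 ≤ Tf ε s ∧ Tf ε s ≤ |s| ∧ |Tf1 ε s| ≤ 1 ∧
    Tf1 ε s ^ 2 ≤ Pf1 ε s ∧ 0 ≤ Tf ε s * (s * Tf1 ε s - Tf ε s) ∧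
    Tf ε s * (s * Tf1 ε s - Tf ε s) ≤ 2 * ε * |s| := by
  set m := max (-ε - s) 0 with hm
  have hm0 : 0 ≤ m := le_max_right _ _
  obtain ⟨h1, h2, h3, h4, h5⟩ := Hf_bds hε hm0
  have hms : m ≤ |s| := max_le (by linarith [neg_abs_le s, neg_le_abs s]) (abs_nonneg s)
  have hT : Tf ε s = Hf ε m := rfl
  have hT1 : Tf1 ε s = - Hf1 ε m := rfl
  have hP1 : Pf1 ε s = Hf1 ε m ^ 2 + Hf ε m * Hf2 ε m := rfl
  refine ⟨hT ▸ h1, hT ▸ h2.trans hms, ?_, ?_, ?_⟩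
  · rw [hT1, abs_neg, abs_of_nonneg h3]; exact h4
  · rw [hT1, hP1]; nlinarith [mul_nonneg h1 h5]
  · rcases le_total (-ε) s with h | h
    · rw [Tf_zero h]; simp; positivity
    · have hs : s = -(m + ε) := by rw [hm, max_eq_left (by linarith)]; ring
      have hpos : 0 < m + ε := by positivity
      have key : s * Tf1 ε s - Tf ε s = 2 * ε * (m / (m + ε)) := by
        rw [hT1, hT, hs]; unfold Hf Hf1; field_simp; ring
      have hq0 : 0 ≤ m / (m + ε) := by positivity
      have hq1 : m / (m + ε) ≤ 1 := by rw [div_le_one hpos]; linarith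
      rw [key, hT]
      refine ⟨by positivity, ?_⟩
      have : Hf ε m * (m / (m + ε)) ≤ |s| * 1 := mul_le_mul (h2.trans hms) hq1 hq0 (abs_nonneg s)
      nlinarith

theorem Tf_lim {ε : ℕ → ℝ} (hε : ∀ j, 0 < ε j) (hl : Tendsto ε atTop (𝓝 0)) {s : ℝ} (hs : s < 0) :
    Tendsto (fun j => Tf (ε j) s) atTop (𝓝 (-s)) ∧
    Tendsto (fun j => Tf1 (ε j) s) atTop (𝓝 (-1)) := by
  have hm : Tendsto (fun j => max (-ε j - s) 0) atTop (𝓝 (-s)) := by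
    have h1 : Tendsto (fun j => max (-ε j - s) 0) atTop (𝓝 (max (-0 - s) 0)) :=
      ((hl.neg.sub_const s).max tendsto_const_nhds)
    have : max (-0 - s) 0 = -s := by rw [max_eq_left (by linarith)]; ring
    rwa [this] at h1
  have hd : Tendsto (fun j => max (-ε j - s) 0 + ε j) atTop (𝓝 (-s)) := by
    simpa using hm.add hl
  have hs' : -s ≠ 0 := by linarith
  constructor
  · have := (hm.pow 2).div hd hs'
    have h2 : (-s) ^ 2 / (-s) = -s := by field_simp
    rw [h2] at this
    exact this
  · have := ((hl.pow 2).div (hd.pow 2) (pow_ne_zero 2 hs')).const_sub 1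
    have h3 := this.neg
    have h2 : -(1 - (0 : ℝ) ^ 2 / (-s) ^ 2) = -1 := by simp
    rw [h2] at h3
    exact h3

theorem grad_ae {φ : EuclideanSpace ℝ (Fin n) → ℝ} {K} (h : LipschitzWith K φ) :
    ∀ᵐ x, DifferentiableAt ℝ φ x := h.ae_differentiableAt

theorem grad_mul_comp {w φ : EuclideanSpace ℝ (Fin n) → ℝ} {G G' : ℝ → ℝ}
    (hG : ∀ s, HasDerivAt G (G' s) s) {x : EuclideanSpace ℝ (Fin n)}
    (hw : DifferentiableAt ℝ w x) (hφ : DifferentiableAt ℝ φ x) :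
    gradient (fun y => G (w y) * φ y) x =
      (G' (w x) * φ x) • gradient w x + G (w x) • gradient φ x := by
  have h1 : HasFDerivAt (fun y => G (w y)) (G' (w x) • fderiv ℝ w x) x :=
    (hG (w x)).comp_hasFDerivAt x hw.hasFDerivAt
  have h2 := (h1.mul hφ.hasFDerivAt).fderiv
  refine ext_inner_left ℝ (fun y => ?_)
  rw [inner_grad]
  have h3 : fderiv ℝ (fun y => G (w y) * φ y) x = _ := h2
  rw [h3]
  simp only [inner_add_right, inner_smul_right, inner_grad, add_apply, smul_apply, smul_eq_mul]
  ring

theorem grad_add_smul {φ ψ : EuclideanSpace ℝ (Fin n) → ℝ} {x : EuclideanSpace ℝ (Fin n)} (t : ℝ)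
    (hφ : DifferentiableAt ℝ φ x) (hψ : DifferentiableAt ℝ ψ x) :
    gradient (fun y => φ y + t * ψ y) x = gradient φ x + t • gradient ψ x := by
  have h2 := (hφ.hasFDerivAt.add (hψ.hasFDerivAt.const_mul t)).fderiv
  refine ext_inner_left ℝ (fun y => ?_)
  rw [inner_grad]
  have h3 : fderiv ℝ (fun y => φ y + t * ψ y) x = _ := h2
  rw [h3]
  simp only [inner_add_right, inner_smul_right, inner_grad, add_apply, smul_apply, smul_eq_mul]

theorem grad_sq {φ : EuclideanSpace ℝ (Fin n) → ℝ} {x : EuclideanSpace ℝ (Fin n)}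
    (hφ : DifferentiableAt ℝ φ x) :
    gradient (fun y => φ y * φ y) x = (2 * φ x) • gradient φ x := by
  have h2 := (hφ.hasFDerivAt.mul hφ.hasFDerivAt).fderiv
  refine ext_inner_left ℝ (fun y => ?_)
  rw [inner_grad]
  have h3 : fderiv ℝ (fun y => φ y * φ y) x = _ := h2
  rw [h3]
  simp only [inner_add_right, inner_smul_right, inner_grad, add_apply, smul_apply, smul_eq_mul]
  ring

namespace Setup
variable {a f : ℝ → ℝ} {Ω Ω₀ : Set (EuclideanSpace ℝ (Fin n))} {u : EuclideanSpace ℝ (Fin n) → ℝ}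
  {Du : EuclideanSpace ℝ (Fin n) → EuclideanSpace ℝ (Fin n)} {e : EuclideanSpace ℝ (Fin n)}

theorem w_diff (h : Setup a f Ω u Du Ω₀ e) {x : EuclideanSpace ℝ (Fin n)} (hx : x ∈ Ω) :
    ContDiffAt ℝ 1 (Wf u e) x := (Wf_contDiffOn h.hΩ h.hu2).contDiffAt (h.hΩ.mem_nhds hx)

theorem clsub (h : Setup a f Ω u Du Ω₀ e) : closure Ω₀ ⊆ closure Ω := closure_mono h.hsub

theorem fr_nonneg (h : Setup a f Ω u Du Ω₀ e) {x : EuclideanSpace ℝ (Fin n)}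
    (hx : x ∈ closure Ω₀) (hx0 : x ∉ Ω₀) : 0 ≤ ⟪Du x, e⟫ := by
  have hxf : x ∈ frontier Ω₀ := by rw [h.hΩ₀o.frontier_eq]; exact ⟨hx, hx0⟩
  rcases h.hfr hxf with h1 | h1
  · exact h.he1 x ⟨hx, h1⟩
  · rw [h.hDu x h1.1, h1.2]; simp

/-- The compact set carrying the truncated test functions. -/
theorem K_compact (h : Setup a f Ω u Du Ω₀ e) {ψ : EuclideanSpace ℝ (Fin n) → ℝ}
    (hψ : HasCompactSupport ψ) {ε : ℝ} (hε : 0 < ε) :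
    IsCompact ((closure Ω₀ ∩ tsupport ψ) ∩ {x | ⟪Du x, e⟫ ≤ -ε}) ∧
      ((closure Ω₀ ∩ tsupport ψ) ∩ {x | ⟪Du x, e⟫ ≤ -ε}) ⊆ Ω₀ := by
  constructor
  · have hc : IsCompact (closure Ω₀ ∩ tsupport ψ) := hψ.isCompact.inter_left isClosed_closure
    have hcont : ContinuousOn (fun x => ⟪Du x, e⟫) (closure Ω₀ ∩ tsupport ψ) :=
      (h.hDuc.mono (inter_subset_left.trans h.clsub)).inner (𝕜 := ℝ) continuousOn_const
    exact hc.of_isClosed_subset (hcont.preimage_isClosed_of_isClosed hc.isClosed isClosed_Iic)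
      inter_subset_left
  · rintro x ⟨⟨hx, -⟩, hx2⟩
    by_contra hx0
    have := h.fr_nonneg hx hx0
    simp only [mem_ofPred_eq] at hx2
    linarith

theorem test_supp (h : Setup a f Ω u Du Ω₀ e) {ψ : EuclideanSpace ℝ (Fin n) → ℝ}
    (hψ : HasCompactSupport ψ) {ε : ℝ} (hε : 0 < ε) {G : ℝ → ℝ} (hG0 : ∀ s, -ε ≤ s → G s = 0) :
    tsupport (Ω₀.indicator fun x => G (Wf u e x) * ψ x) ⊆
      ((closure Ω₀ ∩ tsupport ψ) ∩ {x | ⟪Du x, e⟫ ≤ -ε}) := by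
  apply closure_minimal _ (h.K_compact hψ hε).1.isClosed
  intro x hx
  rw [Function.mem_support] at hx
  have hx0 : x ∈ Ω₀ := mem_of_indicator_ne_zero hx
  rw [indicator_of_mem hx0] at hx
  refine ⟨⟨subset_closure hx0, subset_tsupport ψ (right_ne_zero_of_mul hx)⟩, ?_⟩
  by_contra hc
  simp only [mem_ofPred_eq, not_le] at hc
  apply left_ne_zero_of_mul hx
  apply hG0
  rw [h.hDu x (h.hsub hx0)] at hc
  exact hc.le

theorem test_of (h : Setup a f Ω u Du Ω₀ e) {ψ : EuclideanSpace ℝ (Fin n) → ℝ}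
    (hψ : HasCompactSupport ψ) {L} (hψL : LipschitzWith L ψ) {ε : ℝ} (hε : 0 < ε) {G : ℝ → ℝ}
    (hG : ContDiff ℝ 1 G) (hG0 : ∀ s, -ε ≤ s → G s = 0) :
    IsTestOn Ω (Ω₀.indicator fun x => G (Wf u e x) * ψ x) := by
  have hs := h.test_supp hψ hε hG0
  have hK := h.K_compact hψ hε
  have hcs : HasCompactSupport (Ω₀.indicator fun x => G (Wf u e x) * ψ x) :=
    hK.1.of_isClosed_subset (isClosed_tsupport _) hs
  refine ⟨lip_of_lipAt hcs ?_, hcs, hs.trans (hK.2.trans h.hsub)⟩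
  intro x hx
  have hx0 : x ∈ Ω₀ := hK.2 (hs hx)
  have h1 : LipAt (fun x => G (Wf u e x) * ψ x) x :=
    ((LipAt.of_contDiffAt (h.w_diff (h.hsub hx0))).comp hG.contDiffAt).mul (LipAt.of_lip hψL)
  obtain ⟨K, t, ht, hKt⟩ := h1
  refine ⟨K, t ∩ Ω₀, inter_mem ht (h.hΩ₀o.mem_nhds hx0), ?_⟩
  intro y hy z hz
  rw [indicator_of_mem hy.2, indicator_of_mem hz.2]
  exact hKt hy.1 hz.1

theorem test_grad (h : Setup a f Ω u Du Ω₀ e) {ψ : EuclideanSpace ℝ (Fin n) → ℝ}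
    {G G' : ℝ → ℝ} (hG : ∀ s, HasDerivAt G (G' s) s) {x : EuclideanSpace ℝ (Fin n)} (hx : x ∈ Ω₀)
    (hψ : DifferentiableAt ℝ ψ x) :
    gradient (Ω₀.indicator fun x => G (Wf u e x) * ψ x) x =
      (G' (Wf u e x) * ψ x) • gradient (Wf u e) x + G (Wf u e x) • gradient ψ x := by
  rw [← grad_mul_comp hG ((h.w_diff (h.hsub hx)).differentiableAt (by norm_num)) hψ]
  apply Filter.EventuallyEq.gradient_eq
  filter_upwards [h.hΩ₀o.mem_nhds hx] with y hy
  rw [indicator_of_mem hy]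

end Setup
/-- Bounded measurable on `P`. -/
def BM {E : Type*} [NormedAddCommGroup E] (P : Set (EuclideanSpace ℝ (Fin n)))
    (g : EuclideanSpace ℝ (Fin n) → E) : Prop :=
  AEStronglyMeasurable g (volume.restrict P) ∧ ∃ M, 0 ≤ M ∧ ∀ x ∈ P, ‖g x‖ ≤ M

namespace BM
variable {E : Type*} [NormedAddCommGroup E] {P P' : Set (EuclideanSpace ℝ (Fin n))}

theorem of_cont {g : EuclideanSpace ℝ (Fin n) → E} [SecondCountableTopologyEither
    (EuclideanSpace ℝ (Fin n)) E] (hP : IsCompact P) (hg : ContinuousOn g P) :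
    BM P g := by
  obtain ⟨M, hM⟩ := hP.exists_bound_of_continuousOn hg
  exact ⟨hg.aestronglyMeasurable hP.measurableSet, max M 0, le_max_right _ _,
    fun x hx => (hM x hx).trans (le_max_left _ _)⟩

theorem mono {g : EuclideanSpace ℝ (Fin n) → E} (h : BM P g) (hs : P' ⊆ P) : BM P' g := by
  obtain ⟨h1, M, h0, hM⟩ := h
  exact ⟨h1.mono_measure (Measure.restrict_mono hs le_rfl), M, h0, fun x hx => hM x (hs hx)⟩

theorem congr {g g' : EuclideanSpace ℝ (Fin n) → E} (h : BM P g) (hP : MeasurableSet P)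
    (hs : ∀ x ∈ P, g' x = g x) : BM P g' := by
  obtain ⟨h1, M, h0, hM⟩ := h
  refine ⟨h1.congr ?_, M, h0, fun x hx => by rw [hs x hx]; exact hM x hx⟩
  filter_upwards [ae_restrict_mem hP] with x hx
  exact (hs x hx).symm

theorem mul {g g' : EuclideanSpace ℝ (Fin n) → ℝ} (h : BM P g) (h' : BM P g') :
    BM P (fun x => g x * g' x) := by
  obtain ⟨h1, M, h0, hM⟩ := h
  obtain ⟨h1', M', h0', hM'⟩ := h'
  refine ⟨h1.mul h1', M * M', by positivity, fun x hx => ?_⟩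
  rw [norm_mul]
  exact mul_le_mul (hM x hx) (hM' x hx) (norm_nonneg _) h0

theorem sub {g g' : EuclideanSpace ℝ (Fin n) → ℝ} (h : BM P g) (h' : BM P g') :
    BM P (fun x => g x - g' x) := by
  obtain ⟨h1, M, h0, hM⟩ := h
  obtain ⟨h1', M', h0', hM'⟩ := h'
  exact ⟨h1.sub h1', M + M', by positivity, fun x hx =>
    (norm_sub_le _ _).trans (add_le_add (hM x hx) (hM' x hx))⟩

theorem inner {g g' : EuclideanSpace ℝ (Fin n) → EuclideanSpace ℝ (Fin n)} (h : BM P g)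
    (h' : BM P g') : BM P (fun x => ⟪g x, g' x⟫) := by
  obtain ⟨h1, M, h0, hM⟩ := h
  obtain ⟨h1', M', h0', hM'⟩ := h'
  refine ⟨h1.inner (𝕜 := ℝ) h1', M * M', by positivity, fun x hx => ?_⟩
  exact (norm_inner_le_norm _ _).trans (mul_le_mul (hM x hx) (hM' x hx) (norm_nonneg _) h0)

theorem grad {φ : EuclideanSpace ℝ (Fin n) → ℝ} {L} (h : LipschitzWith L φ) :
    BM P (gradient φ) :=
  ⟨(measurable_grad φ).aestronglyMeasurable, L, L.2, fun x _ => by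
    rw [norm_grad]; exact norm_fderiv_le_of_lipschitz ℝ h⟩

theorem aop {a : ℝ → ℝ} {p q : EuclideanSpace ℝ (Fin n) → EuclideanSpace ℝ (Fin n)}
    (ha : ContDiffOn ℝ 1 a (Ici 0)) (hP : IsCompact P) (hp : ContinuousOn p P) (hq : BM P q) :
    BM P (fun x => Aop a (p x) (q x)) := by
  obtain ⟨h1, M, h0, hM⟩ := of_cont hP ((AopL_cont ha).comp_continuousOn hp)
  obtain ⟨h1', M', h0', hM'⟩ := hq
  have h2 : (fun x => Aop a (p x) (q x)) = fun x => AopL a (p x) (q x) := by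
    funext x; exact (AopL_apply _ _ _).symm
  rw [h2]
  refine ⟨?_, M * M', by positivity, fun x hx => ?_⟩
  · have hc : Continuous fun z : (EuclideanSpace ℝ (Fin n) →L[ℝ] EuclideanSpace ℝ (Fin n)) ×
        EuclideanSpace ℝ (Fin n) => z.1 z.2 := isBoundedBilinearMap_apply.continuous
    exact hc.comp_aestronglyMeasurable (h1.prodMk h1')
  · exact (ContinuousLinearMap.le_opNorm _ _).trans
      (mul_le_mul (hM x hx) (hM' x hx) (norm_nonneg _) h0)

theorem int {g : EuclideanSpace ℝ (Fin n) → E} (h : BM P g) (hP : MeasurableSet P)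
    (hv : volume P ≠ ∞) : IntegrableOn g P := by
  obtain ⟨h1, M, h0, hM⟩ := h
  exact intOn_bdd hv hP h1 M hM

end BM

/-- The second variation form. -/
def Qf (a f : ℝ → ℝ) (Ω : Set (EuclideanSpace ℝ (Fin n))) (u ζ ξ : EuclideanSpace ℝ (Fin n) → ℝ) :
    ℝ :=
  ∫ x in Ω, (⟪Aop a (gradient u x) (gradient ζ x), gradient ξ x⟫ - deriv f (u x) * (ζ x * ξ x))

theorem Aop_add (a : ℝ → ℝ) (p v w : EuclideanSpace ℝ (Fin n)) :
    Aop a p (v + w) = Aop a p v + Aop a p w := by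
  simp only [← AopL_apply, map_add]

theorem Aop_smul (a : ℝ → ℝ) (p v : EuclideanSpace ℝ (Fin n)) (t : ℝ) :
    Aop a p (t • v) = t • Aop a p v := by
  simp only [← AopL_apply, map_smul]

namespace Setup
variable {a f : ℝ → ℝ} {Ω Ω₀ : Set (EuclideanSpace ℝ (Fin n))} {u : EuclideanSpace ℝ (Fin n) → ℝ}
  {Du : EuclideanSpace ℝ (Fin n) → EuclideanSpace ℝ (Fin n)} {e : EuclideanSpace ℝ (Fin n)}

theorem u_cont (h : Setup a f Ω u Du Ω₀ e) : ContinuousOn u Ω := h.hu2.continuousOn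
theorem g_cont (h : Setup a f Ω u Du Ω₀ e) : ContinuousOn (gradient u) Ω :=
  (grad_contDiffOn h.hΩ h.hu2).continuousOn
theorem f_cont (h : Setup a f Ω u Du Ω₀ e) : Continuous (deriv f) :=
  h.hf.continuous_deriv (by norm_num)
theorem w_cont (h : Setup a f Ω u Du Ω₀ e) : ContinuousOn (Wf u e) Ω :=
  (Wf_contDiffOn h.hΩ h.hu2).continuousOn

theorem int1 (h : Setup a f Ω u Du Ω₀ e) {ζ ξ : EuclideanSpace ℝ (Fin n) → ℝ} (hζ : IsTestOn Ω ζ)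
    (hξ : IsTestOn Ω ξ) :
    IntegrableOn (fun x => ⟪Aop a (gradient u x) (gradient ζ x), gradient ξ x⟫) Ω := by
  obtain ⟨⟨K, hK⟩, hc, hs⟩ := hζ
  obtain ⟨⟨K', hK'⟩, hc', hs'⟩ := hξ
  have hcc : IsCompact (tsupport ζ) := hc
  have h1 : BM (tsupport ζ) (fun x => ⟪Aop a (gradient u x) (gradient ζ x), gradient ξ x⟫) :=
    (BM.aop h.ha hcc (h.g_cont.mono hs) (BM.grad hK)).inner (BM.grad hK')
  refine (h1.int hcc.measurableSet hcc.measure_lt_top.ne).of_forall_sdiff_eq_zero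
    h.hΩ.measurableSet (fun x hx => ?_)
  rw [Aop_symm, grad_eq_zero_of_notMem hx.2]; simp

theorem int2 (h : Setup a f Ω u Du Ω₀ e) {ζ ξ : EuclideanSpace ℝ (Fin n) → ℝ} (hζ : IsTestOn Ω ζ)
    (hξ : IsTestOn Ω ξ) :
    IntegrableOn (fun x => deriv f (u x) * (ζ x * ξ x)) Ω := by
  obtain ⟨⟨K, hK⟩, hc, hs⟩ := hζ
  obtain ⟨⟨K', hK'⟩, hc', hs'⟩ := hξ
  have hcc : IsCompact (tsupport ζ) := hc
  have h1 : BM (tsupport ζ) (fun x => deriv f (u x) * (ζ x * ξ x)) :=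
    BM.of_cont hcc ((h.f_cont.comp_continuousOn (h.u_cont.mono hs)).mul
      (hK.continuous.mul hK'.continuous).continuousOn)
  refine (h1.int hcc.measurableSet hcc.measure_lt_top.ne).of_forall_sdiff_eq_zero
    h.hΩ.measurableSet (fun x hx => ?_)
  rw [image_eq_zero_of_notMem_tsupport hx.2]; simp

theorem intQ (h : Setup a f Ω u Du Ω₀ e) {ζ ξ : EuclideanSpace ℝ (Fin n) → ℝ} (hζ : IsTestOn Ω ζ)
    (hξ : IsTestOn Ω ξ) : IntegrableOn (fun x => ⟪Aop a (gradient u x) (gradient ζ x),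
      gradient ξ x⟫ - deriv f (u x) * (ζ x * ξ x)) Ω :=
  (h.int1 hζ hξ).sub (h.int2 hζ hξ)

theorem intL (h : Setup a f Ω u Du Ω₀ e) {σ : EuclideanSpace ℝ (Fin n) → ℝ} (hσ : IsTestOn Ω σ) :
    IntegrableOn (fun x => ⟪Xf a u e x, gradient σ x⟫) Ω ∧
    IntegrableOn (fun x => deriv f (u x) * (Wf u e x * σ x)) Ω := by
  obtain ⟨⟨K, hK⟩, hc, hs⟩ := hσ
  have hcc : IsCompact (tsupport σ) := hc
  have h1 : BM (tsupport σ) (fun x => ⟪Xf a u e x, gradient σ x⟫) :=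
    (BM.of_cont hcc ((Xf_cont h.ha h.hΩ h.hu2).mono hs)).inner (BM.grad hK)
  have h2 : BM (tsupport σ) (fun x => deriv f (u x) * (Wf u e x * σ x)) :=
    BM.of_cont hcc ((h.f_cont.comp_continuousOn (h.u_cont.mono hs)).mul
      ((h.w_cont.mono hs).mul hK.continuous.continuousOn))
  constructor
  · refine (h1.int hcc.measurableSet hcc.measure_lt_top.ne).of_forall_sdiff_eq_zero
      h.hΩ.measurableSet (fun x hx => ?_)
    rw [grad_eq_zero_of_notMem hx.2]; simp
  · refine (h2.int hcc.measurableSet hcc.measure_lt_top.ne).of_forall_sdiff_eq_zero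
      h.hΩ.measurableSet (fun x hx => ?_)
    rw [image_eq_zero_of_notMem_tsupport hx.2]; simp

theorem Q_nonneg (h : Setup a f Ω u Du Ω₀ e) {ζ : EuclideanSpace ℝ (Fin n) → ℝ}
    (hζ : IsTestOn Ω ζ) : 0 ≤ Qf a f Ω u ζ ζ := by
  unfold Qf
  rw [integral_sub (h.int1 hζ hζ) (h.int2 hζ hζ)]
  have := h.hstab ζ hζ
  simp only [pow_two] at this
  linarith

theorem test_add {ζ ξ : EuclideanSpace ℝ (Fin n) → ℝ} (hζ : IsTestOn Ω ζ)
    (hξ : IsTestOn Ω ξ) (t : ℝ) : IsTestOn Ω (fun x => ζ x + t * ξ x) := by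
  obtain ⟨⟨K, hK⟩, hc, hs⟩ := hζ
  obtain ⟨⟨K', hK'⟩, hc', hs'⟩ := hξ
  have hts : tsupport (fun x => ζ x + t * ξ x) ⊆ tsupport ζ ∪ tsupport ξ := by
    apply closure_minimal _ ((isClosed_tsupport _).union (isClosed_tsupport _))
    intro x hx
    by_contra hn
    simp only [mem_union, not_or] at hn
    apply hx
    simp only [image_eq_zero_of_notMem_tsupport hn.1, image_eq_zero_of_notMem_tsupport hn.2]
    simp
  refine ⟨⟨K + ‖t‖₊ * K', ?_⟩, ?_, hts.trans (union_subset hs hs')⟩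
  · exact hK.add ((lipschitzWith_smul t).comp hK')
  · exact (hc.isCompact.union hc'.isCompact).of_isClosed_subset (isClosed_tsupport _) hts

theorem polar (h : Setup a f Ω u Du Ω₀ e) {ζ ξ : EuclideanSpace ℝ (Fin n) → ℝ}
    (hζ : IsTestOn Ω ζ) (hξ : IsTestOn Ω ξ) :
    Qf a f Ω u ζ ξ ^ 2 ≤ Qf a f Ω u ζ ζ * Qf a f Ω u ξ ξ := by
  have key : ∀ t : ℝ, 0 ≤ Qf a f Ω u ξ ξ * (t * t) + (2 * Qf a f Ω u ζ ξ) * t +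
      Qf a f Ω u ζ ζ := by
    intro t
    have h0 := h.Q_nonneg (test_add hζ hξ t)
    have h1 : Qf a f Ω u (fun x => ζ x + t * ξ x) (fun x => ζ x + t * ξ x) =
        Qf a f Ω u ξ ξ * (t * t) + (2 * Qf a f Ω u ζ ξ) * t + Qf a f Ω u ζ ζ := by
      have i1 := (h.intQ hξ hξ).mul_const (t * t)
      have i2 := (h.intQ hζ hξ).mul_const (2 * t)
      have i3 := (h.intQ hζ hζ)
      have : ∫ x in Ω, (((⟪Aop a (gradient u x) (gradient ξ x), gradient ξ x⟫ -
            deriv f (u x) * (ξ x * ξ x)) * (t * t) +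
          (⟪Aop a (gradient u x) (gradient ζ x), gradient ξ x⟫ -
            deriv f (u x) * (ζ x * ξ x)) * (2 * t)) +
          (⟪Aop a (gradient u x) (gradient ζ x), gradient ζ x⟫ -
            deriv f (u x) * (ζ x * ζ x))) =
          Qf a f Ω u ξ ξ * (t * t) + Qf a f Ω u ζ ξ * (2 * t) + Qf a f Ω u ζ ζ := by
        rw [integral_add (Integrable.fun_add i1 i2) i3, integral_add i1 i2, integral_mul_const,
          integral_mul_const]
        rfl
      rw [show (2 * Qf a f Ω u ζ ξ) * t = Qf a f Ω u ζ ξ * (2 * t) by ring, ← this]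
      unfold Qf
      obtain ⟨K, hK⟩ := hζ.1
      obtain ⟨K', hK'⟩ := hξ.1
      apply integral_congr_ae
      filter_upwards [ae_restrict_of_ae (grad_ae hK), ae_restrict_of_ae (grad_ae hK')] with x d1 d2
      rw [grad_add_smul t d1 d2, Aop_add, Aop_smul]
      simp only [inner_add_left, inner_add_right, inner_smul_left, inner_smul_right]
      rw [Aop_symm a _ (gradient ξ x) (gradient ζ x)]
      simp only [conj_trivial]
      ring
    rwa [h1] at h0
  have := discrim_le_zero key
  unfold discrim at this
  nlinarith

/-- Energy of a cutoff. -/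
theorem en_int (h : Setup a f Ω u Du Ω₀ e) {φ : EuclideanSpace ℝ (Fin n) → ℝ} {L}
    (hL : LipschitzWith L φ) (hc : HasCompactSupport φ) :
    IntegrableOn (fun x => ‖gradient u x‖ ^ 2 *
        ⟪Aop a (gradient u x) (gradient φ x), gradient φ x⟫) Ω₀ ∧
    IntegrableOn (fun x => |deriv f (u x)| * (|Wf u e x| * φ x ^ 2)) Ω₀ := by
  set P := closure Ω₀ ∩ tsupport φ with hP
  have hPc : IsCompact P := hc.isCompact.inter_left isClosed_closure
  have hPs : P ⊆ closure Ω := inter_subset_left.trans h.clsub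
  set R := Ω₀ ∩ tsupport φ with hR
  have hRP : R ⊆ P := inter_subset_inter_left _ subset_closure
  have hRm : MeasurableSet R := h.hΩ₀o.measurableSet.inter (isClosed_tsupport _).measurableSet
  have hRv : volume R ≠ ∞ := ((measure_mono hRP).trans_lt hPc.measure_lt_top).ne
  have hDP : ContinuousOn Du P := h.hDuc.mono hPs
  have b1 : BM P (fun x => ‖Du x‖ ^ 2 * ⟪Aop a (Du x) (gradient φ x), gradient φ x⟫) :=
    (BM.of_cont hPc (hDP.norm.pow 2)).mul ((BM.aop h.ha hPc hDP (BM.grad hL)).inner (BM.grad hL))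
  have b2 : BM P (fun x => |deriv f (u x)| * (|⟪Du x, e⟫| * φ x ^ 2)) :=
    BM.of_cont hPc ((h.f_cont.comp_continuousOn (h.hucl.mono hPs)).abs.mul
      ((hDP.inner (𝕜 := ℝ) continuousOn_const).abs.mul (hL.continuous.pow 2).continuousOn))
  constructor
  · refine (((b1.mono hRP).congr hRm (fun x hx => ?_)).int hRm hRv).of_forall_sdiff_eq_zero
      h.hΩ₀o.measurableSet (fun x hx => ?_)
    · rw [h.hDu x (h.hsub hx.1)]
    · have : x ∉ tsupport φ := fun hx' => hx.2 ⟨hx.1, hx'⟩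
      rw [grad_eq_zero_of_notMem this]; simp
  · refine (((b2.mono hRP).congr hRm (fun x hx => ?_)).int hRm hRv).of_forall_sdiff_eq_zero
      h.hΩ₀o.measurableSet (fun x hx => ?_)
    · rw [h.hDu x (h.hsub hx.1)]; rfl
    · have : x ∉ tsupport φ := fun hx' => hx.2 ⟨hx.1, hx'⟩
      rw [image_eq_zero_of_notMem_tsupport this]; simp

theorem Wf_sq_le (x : EuclideanSpace ℝ (Fin n)) : |Wf u e x| ^ 2 ≤ ‖e‖ ^ 2 * ‖gradient u x‖ ^ 2 := by
  have := abs_real_inner_le_norm (gradient u x) e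
  have h2 : |Wf u e x| ≤ ‖gradient u x‖ * ‖e‖ := this
  calc |Wf u e x| ^ 2 ≤ (‖gradient u x‖ * ‖e‖) ^ 2 := by gcongr
    _ = _ := by ring

theorem Q_est (h : Setup a f Ω u Du Ω₀ e) {φ : EuclideanSpace ℝ (Fin n) → ℝ} {L}
    (hL : LipschitzWith L φ) (hc : HasCompactSupport φ) {ε : ℝ} (hε : 0 < ε) :
    Qf a f Ω u (Ω₀.indicator fun x => Tf ε (Wf u e x) * φ x)
      (Ω₀.indicator fun x => Tf ε (Wf u e x) * φ x) ≤
    ‖e‖ ^ 2 * (∫ x in Ω₀, ‖gradient u x‖ ^ 2 *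
        ⟪Aop a (gradient u x) (gradient φ x), gradient φ x⟫) +
    ε * (2 * ∫ x in Ω₀, |deriv f (u x)| * (|Wf u e x| * φ x ^ 2)) := by
  have hc2 : HasCompactSupport (fun x => φ x * φ x) := hc.mul_right
  obtain ⟨L2, hL2⟩ := lip_of_lipAt hc2 (fun x _ => (LipAt.of_lip hL).mul (LipAt.of_lip hL))
  set ζ := Ω₀.indicator fun x => Tf ε (Wf u e x) * φ x with hζd
  set σ := Ω₀.indicator fun x => Pf ε (Wf u e x) * (φ x * φ x) with hσd
  have hζ : IsTestOn Ω ζ := h.test_of hc hL hε (Tf_c1 hε) (fun s hs => Tf_zero hs)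
  have hσ : IsTestOn Ω σ := h.test_of hc2 hL2 hε (Pf_c1 hε) (fun s hs => Pf_zero hs)
  have sζ : tsupport ζ ⊆ Ω₀ :=
    (h.test_supp hc hε (G := Tf ε) (fun s hs => Tf_zero hs)).trans (h.K_compact hc hε).2
  have sσ : tsupport σ ⊆ Ω₀ :=
    (h.test_supp hc2 hε (G := Pf ε) (fun s hs => Pf_zero hs)).trans (h.K_compact hc2 hε).2
  have hlin := linearized (e := e) h.ha h.hf h.hΩ h.hu2 h.hsol hσ
  obtain ⟨l1, l2⟩ := h.intL hσ
  have l3 : IntegrableOn (fun x => ⟪Xf a u e x, gradient σ x⟫ -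
      deriv f (u x) * (Wf u e x * σ x)) Ω := l1.sub l2
  obtain ⟨e1, e2⟩ := h.en_int hL hc
  have hcalc : Qf a f Ω u ζ ζ = ∫ x in Ω, ((⟪Aop a (gradient u x) (gradient ζ x), gradient ζ x⟫ -
      deriv f (u x) * (ζ x * ζ x)) - (⟪Xf a u e x, gradient σ x⟫ -
      deriv f (u x) * (Wf u e x * σ x))) := by
    rw [integral_sub (h.intQ hζ hζ) l3, integral_sub l1 l2, hlin]
    simp [Qf]
  have hR : ‖e‖ ^ 2 * (∫ x in Ω₀, ‖gradient u x‖ ^ 2 *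
        ⟪Aop a (gradient u x) (gradient φ x), gradient φ x⟫) +
      ε * (2 * ∫ x in Ω₀, |deriv f (u x)| * (|Wf u e x| * φ x ^ 2)) =
      ∫ x in Ω, Ω₀.indicator (fun x => ‖e‖ ^ 2 * (‖gradient u x‖ ^ 2 *
        ⟪Aop a (gradient u x) (gradient φ x), gradient φ x⟫) +
        ε * (2 * (|deriv f (u x)| * (|Wf u e x| * φ x ^ 2)))) x := by
    rw [setIntegral_indicator h.hΩ₀o.measurableSet, inter_eq_right.2 h.hsub,
      integral_add (e1.const_mul _) ((e2.const_mul _).const_mul _), integral_const_mul,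
      integral_const_mul, integral_const_mul]
  have hRi : IntegrableOn (Ω₀.indicator (fun x => ‖e‖ ^ 2 * (‖gradient u x‖ ^ 2 *
        ⟪Aop a (gradient u x) (gradient φ x), gradient φ x⟫) +
        ε * (2 * (|deriv f (u x)| * (|Wf u e x| * φ x ^ 2))))) Ω := by
    have : IntegrableOn (fun x => ‖e‖ ^ 2 * (‖gradient u x‖ ^ 2 *
        ⟪Aop a (gradient u x) (gradient φ x), gradient φ x⟫) +
        ε * (2 * (|deriv f (u x)| * (|Wf u e x| * φ x ^ 2)))) Ω₀ :=
      (e1.const_mul _).add ((e2.const_mul _).const_mul _)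
    exact (this.integrable_indicator h.hΩ₀o.measurableSet).integrableOn
  rw [hcalc, hR]
  have l4 : IntegrableOn (fun x => (⟪Aop a (gradient u x) (gradient ζ x), gradient ζ x⟫ -
      deriv f (u x) * (ζ x * ζ x)) - (⟪Xf a u e x, gradient σ x⟫ -
      deriv f (u x) * (Wf u e x * σ x))) Ω := (h.intQ hζ hζ).sub l3
  apply integral_mono_ae l4 hRi
  filter_upwards [ae_restrict_of_ae (grad_ae hL)] with x dφ
  by_cases hx : x ∈ Ω₀
  · rw [indicator_of_mem hx]
    have g1 := h.test_grad (Tf_hasDerivAt hε) hx dφ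
    have g2 := h.test_grad (ψ := fun x => φ x * φ x) (Pf_hasDerivAt hε) hx (dφ.mul dφ)
    rw [grad_sq dφ] at g2
    have v1 : ζ x = Tf ε (Wf u e x) * φ x := by rw [hζd, indicator_of_mem hx]
    have v2 : σ x = Pf ε (Wf u e x) * (φ x * φ x) := by rw [hσd, indicator_of_mem hx]
    simp only [Xf]
    rw [v1, v2, hζd, hσd, g1, g2]
    obtain ⟨t1, t2, t3, t4, t5, t6⟩ := Tf_bds hε (Wf u e x)
    simp only [Aop_add, Aop_smul, inner_add_left, inner_add_right, inner_smul_left,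
      inner_smul_right, conj_trivial]
    rw [Aop_symm a _ (gradient φ x) (gradient (Wf u e) x)]
    have hα := Aop_pos h.hapos h.hlam (gradient u x) (gradient (Wf u e) x)
    have hγ := Aop_pos h.hapos h.hlam (gradient u x) (gradient φ x)
    have hw := Wf_sq_le (u := u) (e := e) x
    have hfa := le_abs_self (deriv f (u x))
    set α := ⟪Aop a (gradient u x) (gradient (Wf u e) x), gradient (Wf u e) x⟫
    set β := ⟪Aop a (gradient u x) (gradient (Wf u e) x), gradient φ x⟫
    set γ := ⟪Aop a (gradient u x) (gradient φ x), gradient φ x⟫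
    set s := Wf u e x
    have hP : Pf ε s = Tf ε s * Tf1 ε s := rfl
    rw [hP]
    have i1 : Tf ε s ^ 2 * γ ≤ (‖e‖ ^ 2 * ‖gradient u x‖ ^ 2) * γ := by
      apply mul_le_mul_of_nonneg_right _ hγ
      refine le_trans ?_ hw
      gcongr
    have i2 : deriv f (u x) * (φ x ^ 2 * (Tf ε s * (s * Tf1 ε s - Tf ε s))) ≤
        |deriv f (u x)| * (φ x ^ 2 * (2 * ε * |s|)) := by
      have := sq_nonneg (φ x)
      apply mul_le_mul hfa _ (by positivity) (abs_nonneg _)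
      exact mul_le_mul_of_nonneg_left t6 this
    have i3 : 0 ≤ (Pf1 ε s - Tf1 ε s ^ 2) * (φ x ^ 2 * α) := by
      have : 0 ≤ Pf1 ε s - Tf1 ε s ^ 2 := by linarith
      positivity
    nlinarith [i1, i2, i3]
  · rw [indicator_of_notMem hx]
    have n1 : x ∉ tsupport ζ := fun hh => hx (sζ hh)
    have n2 : x ∉ tsupport σ := fun hh => hx (sσ hh)
    rw [grad_eq_zero_of_notMem n1, grad_eq_zero_of_notMem n2, image_eq_zero_of_notMem_tsupport n1,
      image_eq_zero_of_notMem_tsupport n2]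
    simp

end Setup
namespace Setup
variable {a f : ℝ → ℝ} {Ω Ω₀ : Set (EuclideanSpace ℝ (Fin n))} {u : EuclideanSpace ℝ (Fin n) → ℝ}
  {Du : EuclideanSpace ℝ (Fin n) → EuclideanSpace ℝ (Fin n)} {e : EuclideanSpace ℝ (Fin n)}

theorem cs_young (h : Setup a f Ω u Du Ω₀ e) (p y z : EuclideanSpace ℝ (Fin n)) (T : ℝ) {s : ℝ}
    (hs : 0 < s) :
    |T * ⟪Aop a p y, z⟫| ≤ (1 / (2 * s)) * (T ^ 2 * ⟪Aop a p y, y⟫) + s / 2 * ⟪Aop a p z, z⟫ := by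
  have h1 := Aop_pos h.hapos h.hlam p (T • y - s • z)
  have h2 := Aop_pos h.hapos h.hlam p (T • y + s • z)
  have e1 : (T • y - s • z) = T • y + (-s) • z := by rw [neg_smul, sub_eq_add_neg]
  rw [e1] at h1
  simp only [Aop_add, Aop_smul, inner_add_left, inner_add_right, inner_smul_left, inner_smul_right,
    conj_trivial] at h1 h2
  rw [Aop_symm a p z y] at h1 h2
  have key : (1 / (2 * s)) * (T ^ 2 * ⟪Aop a p y, y⟫) + s / 2 * ⟪Aop a p z, z⟫ =
      (T ^ 2 * ⟪Aop a p y, y⟫ + s ^ 2 * ⟪Aop a p z, z⟫) / (2 * s) := by field_simp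
  rw [key, le_div_iff₀ (by positivity)]
  rcases abs_cases (T * ⟪Aop a p y, z⟫) with ⟨hh, _⟩ | ⟨hh, _⟩ <;> rw [hh] <;> nlinarith

theorem cross_bound (h : Setup a f Ω u Du Ω₀ e) {φ ξ : EuclideanSpace ℝ (Fin n) → ℝ} {L}
    (hL : LipschitzWith L φ) (hc : HasCompactSupport φ) (hξ : IsTestOn Ω ξ) {ε : ℝ} (hε : 0 < ε)
    {s : ℝ} (hs : 0 < s) :
    IntegrableOn (fun x => Tf ε (Wf u e x) *
      ⟪Aop a (gradient u x) (gradient φ x), gradient ξ x⟫) (Ω₀ ∩ tsupport ξ) ∧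
    |∫ x in Ω₀ ∩ tsupport ξ, Tf ε (Wf u e x) *
      ⟪Aop a (gradient u x) (gradient φ x), gradient ξ x⟫| ≤
    (1 / (2 * s)) * (‖e‖ ^ 2 * ∫ x in Ω₀, ‖gradient u x‖ ^ 2 *
        ⟪Aop a (gradient u x) (gradient φ x), gradient φ x⟫) +
      s / 2 * ∫ x in Ω, ⟪Aop a (gradient u x) (gradient ξ x), gradient ξ x⟫ := by
  have hξi := h.int1 hξ hξ
  obtain ⟨⟨K, hK⟩, hcξ, hsξ⟩ := hξ
  have hcc : IsCompact (tsupport ξ) := hcξ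
  set R := Ω₀ ∩ tsupport ξ with hR
  have hRm : MeasurableSet R := h.hΩ₀o.measurableSet.inter (isClosed_tsupport _).measurableSet
  have hRv : volume R ≠ ∞ := ((measure_mono inter_subset_right).trans_lt hcc.measure_lt_top).ne
  have hRΩ₀ : R ⊆ Ω₀ := inter_subset_left
  have hRΩ : R ⊆ Ω := hRΩ₀.trans h.hsub
  obtain ⟨e1, -⟩ := h.en_int hL hc
  have hb : BM (tsupport ξ) (fun x => Tf ε (Wf u e x) *
      ⟪Aop a (gradient u x) (gradient φ x), gradient ξ x⟫) :=
    (BM.of_cont hcc ((Tf_c1 hε).continuous.comp_continuousOn (h.w_cont.mono hsξ))).mul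
      ((BM.aop h.ha hcc (h.g_cont.mono hsξ) (BM.grad hL)).inner (BM.grad hK))
  have hi := (hb.mono (P' := R) inter_subset_right).int hRm hRv
  refine ⟨hi, ?_⟩
  have p1 : ∀ x, 0 ≤ ‖gradient u x‖ ^ 2 *
        ⟪Aop a (gradient u x) (gradient φ x), gradient φ x⟫ := fun x =>
    mul_nonneg (by positivity) (Aop_pos h.hapos h.hlam _ _)
  have p2 : ∀ x, 0 ≤ ⟪Aop a (gradient u x) (gradient ξ x), gradient ξ x⟫ := fun x =>
    Aop_pos h.hapos h.hlam _ _
  have i1 : IntegrableOn (fun x => (1 / (2 * s)) * (‖e‖ ^ 2 * (‖gradient u x‖ ^ 2 *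
        ⟪Aop a (gradient u x) (gradient φ x), gradient φ x⟫))) R :=
    ((e1.mono_set hRΩ₀).const_mul _).const_mul _
  have i2 : IntegrableOn (fun x => s / 2 *
      ⟪Aop a (gradient u x) (gradient ξ x), gradient ξ x⟫) R :=
    (hξi.mono_set hRΩ).const_mul _
  have i3 : IntegrableOn (fun x => (1 / (2 * s)) * (‖e‖ ^ 2 * (‖gradient u x‖ ^ 2 *
        ⟪Aop a (gradient u x) (gradient φ x), gradient φ x⟫)) + s / 2 *
      ⟪Aop a (gradient u x) (gradient ξ x), gradient ξ x⟫) R := i1.add i2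
  calc |∫ x in R, Tf ε (Wf u e x) * ⟪Aop a (gradient u x) (gradient φ x), gradient ξ x⟫|
      ≤ ∫ x in R, |Tf ε (Wf u e x) * ⟪Aop a (gradient u x) (gradient φ x), gradient ξ x⟫| :=
        abs_integral_le_integral_abs
    _ ≤ ∫ x in R, ((1 / (2 * s)) * (‖e‖ ^ 2 * (‖gradient u x‖ ^ 2 *
        ⟪Aop a (gradient u x) (gradient φ x), gradient φ x⟫)) + s / 2 *
      ⟪Aop a (gradient u x) (gradient ξ x), gradient ξ x⟫) := by
        refine setIntegral_mono_on hi.abs i3 hRm (fun x hx => ?_)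
        refine (h.cs_young _ _ _ _ hs).trans (add_le_add ?_ le_rfl)
        apply mul_le_mul_of_nonneg_left _ (by positivity)
        rw [← mul_assoc]
        apply mul_le_mul_of_nonneg_right _ (Aop_pos h.hapos h.hlam _ _)
        obtain ⟨t1, t2, -⟩ := Tf_bds hε (Wf u e x)
        refine le_trans ?_ (Wf_sq_le x)
        gcongr
    _ = (1 / (2 * s)) * (‖e‖ ^ 2 * ∫ x in R, ‖gradient u x‖ ^ 2 *
        ⟪Aop a (gradient u x) (gradient φ x), gradient φ x⟫) +
      s / 2 * ∫ x in R, ⟪Aop a (gradient u x) (gradient ξ x), gradient ξ x⟫ := by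
        rw [integral_add i1 i2, integral_const_mul, integral_const_mul, integral_const_mul]
    _ ≤ _ := by
        have m1 := setIntegral_mono_set e1 (ae_of_all _ p1) (HasSubset.Subset.eventuallyLE hRΩ₀)
        have m2 := setIntegral_mono_set hξi (ae_of_all _ p2) (HasSubset.Subset.eventuallyLE hRΩ)
        gcongr

theorem Q_split (h : Setup a f Ω u Du Ω₀ e) {φ ξ : EuclideanSpace ℝ (Fin n) → ℝ} {L}
    (hL : LipschitzWith L φ) (hc : HasCompactSupport φ) (hξ : IsTestOn Ω ξ) {ε : ℝ} (hε : 0 < ε) :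
    IntegrableOn (fun x => φ x * (Tf1 ε (Wf u e x) * ⟪Xf a u e x, gradient ξ x⟫ -
        deriv f (u x) * (Tf ε (Wf u e x) * ξ x))) (Ω₀ ∩ tsupport ξ) ∧
    Qf a f Ω u (Ω₀.indicator fun x => Tf ε (Wf u e x) * φ x) ξ =
      (∫ x in Ω₀ ∩ tsupport ξ, φ x * (Tf1 ε (Wf u e x) * ⟪Xf a u e x, gradient ξ x⟫ -
        deriv f (u x) * (Tf ε (Wf u e x) * ξ x))) +
      ∫ x in Ω₀ ∩ tsupport ξ, Tf ε (Wf u e x) *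
        ⟪Aop a (gradient u x) (gradient φ x), gradient ξ x⟫ := by
  have hcb := (h.cross_bound hL hc hξ hε one_pos).1
  obtain ⟨⟨K, hK⟩, hcξ, hsξ⟩ := hξ
  have hcc : IsCompact (tsupport ξ) := hcξ
  set R := Ω₀ ∩ tsupport ξ with hR
  have hRm : MeasurableSet R := h.hΩ₀o.measurableSet.inter (isClosed_tsupport _).measurableSet
  have hRv : volume R ≠ ∞ := ((measure_mono inter_subset_right).trans_lt hcc.measure_lt_top).ne
  have hRΩ₀ : R ⊆ Ω₀ := inter_subset_left
  have hRΩ : R ⊆ Ω := hRΩ₀.trans h.hsub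
  have hw := h.w_cont.mono hsξ
  have hb : BM (tsupport ξ) (fun x => φ x * (Tf1 ε (Wf u e x) * ⟪Xf a u e x, gradient ξ x⟫ -
        deriv f (u x) * (Tf ε (Wf u e x) * ξ x))) := by
    apply (BM.of_cont hcc hL.continuous.continuousOn).mul
    apply BM.sub
    · have : Continuous (Tf1 ε) := (Hf1_cont hε).neg
      exact (BM.of_cont hcc (this.comp_continuousOn hw)).mul
        ((BM.of_cont hcc ((Xf_cont h.ha h.hΩ h.hu2).mono hsξ)).inner (BM.grad hK))
    · exact BM.of_cont hcc ((h.f_cont.comp_continuousOn (h.u_cont.mono hsξ)).mul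
        (((Tf_c1 hε).continuous.comp_continuousOn hw).mul hK.continuous.continuousOn))
  have hi := (hb.mono (P' := R) inter_subset_right).int hRm hRv
  refine ⟨hi, ?_⟩
  have sζ : tsupport (Ω₀.indicator fun x => Tf ε (Wf u e x) * φ x) ⊆ Ω₀ :=
    (h.test_supp hc hε (G := Tf ε) (fun s hs => Tf_zero hs)).trans (h.K_compact hc hε).2
  unfold Qf
  rw [setIntegral_eq_of_subset_of_forall_diff_eq_zero h.hΩ.measurableSet hRΩ, ← integral_add hi hcb]
  · apply integral_congr_ae
    filter_upwards [ae_restrict_of_ae (grad_ae hL), ae_restrict_mem hRm] with x dφ hx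
    rw [h.test_grad (Tf_hasDerivAt hε) hx.1 dφ, indicator_of_mem hx.1]
    simp only [Xf, Aop_add, Aop_smul, inner_add_left, inner_smul_left, conj_trivial]
    ring
  · intro x hx
    by_cases hx0 : x ∈ Ω₀
    · have : x ∉ tsupport ξ := fun h' => hx.2 ⟨hx0, h'⟩
      rw [grad_eq_zero_of_notMem this, image_eq_zero_of_notMem_tsupport this]; simp
    · have : x ∉ tsupport (Ω₀.indicator fun x => Tf ε (Wf u e x) * φ x) := fun h' => hx0 (sζ h')
      rw [Aop_symm, grad_eq_zero_of_notMem this, image_eq_zero_of_notMem_tsupport this]; simp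

theorem w_meas : Measurable (Wf u e) := (measurable_grad u).inner (𝕜 := ℝ) measurable_const

theorem null_form (h : Setup a f Ω u Du Ω₀ e) (hmeg : ModerateEnergyGrowth a u Ω₀)
    {ξ : EuclideanSpace ℝ (Fin n) → ℝ} (hξ : IsTestOn Ω ξ) :
    ∫ x in Ω₀ ∩ {x | Wf u e x < 0}, ⟪Xf a u e x, gradient ξ x⟫ =
      ∫ x in Ω₀ ∩ {x | Wf u e x < 0}, deriv f (u x) * (Wf u e x * ξ x) := by
  obtain ⟨φ, hLip, hcs, hpos, hunif, hE⟩ := hmeg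
  choose L hL using hLip
  set E : ℕ → ℝ := fun j => ∫ x in Ω₀, ‖gradient u x‖ ^ 2 *
        ⟪Aop a (gradient u x) (gradient (φ j) x), gradient (φ j) x⟫ with hEd
  set D : ℕ → ℝ := fun j => 2 * ∫ x in Ω₀, |deriv f (u x)| * (|Wf u e x| * φ j x ^ 2) with hD
  have hE0 : ∀ j, 0 ≤ E j := fun j => integral_nonneg fun x =>
    mul_nonneg (by positivity) (Aop_pos h.hapos h.hlam _ _)
  have hD0 : ∀ j, 0 ≤ D j := fun j => mul_nonneg (by norm_num)
    (integral_nonneg fun x => by positivity)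
  set ε : ℕ → ℝ := fun j => 1 / (((j : ℝ) + 1) * (1 + D j)) with hεd
  have hε : ∀ j, 0 < ε j := fun j => by have := hD0 j; simp only [hεd]; positivity
  have hone : Tendsto (fun j : ℕ => 1 / ((j : ℝ) + 1)) atTop (𝓝 0) :=
    tendsto_one_div_add_atTop_nhds_zero_nat
  have hεle : ∀ j, ε j ≤ 1 / ((j : ℝ) + 1) := fun j => by
    have := hD0 j
    simp only [hεd]
    apply one_div_le_one_div_of_le (by positivity)
    nlinarith [(Nat.cast_nonneg j : (0 : ℝ) ≤ j)]
  have hεlim : Tendsto ε atTop (𝓝 0) := squeeze_zero (fun j => (hε j).le) hεle hone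
  have hεD : ∀ j, ε j * D j ≤ 1 / ((j : ℝ) + 1) := fun j => by
    have := hD0 j
    simp only [hεd]
    rw [div_mul_eq_mul_div, one_mul, div_le_div_iff₀ (by positivity) (by positivity)]
    nlinarith [(Nat.cast_nonneg j : (0 : ℝ) ≤ j)]
  set q : ℕ → ℝ := fun j => ‖e‖ ^ 2 * E j + 1 / ((j : ℝ) + 1) with hq
  have hq0 : ∀ j, 0 < q j := fun j => by
    have := hE0 j
    simp only [hq]; positivity
  have hqlim : Tendsto q atTop (𝓝 0) := by
    have h1 := (hE.const_mul (‖e‖ ^ 2)).add hone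
    rw [mul_zero, add_zero] at h1
    exact h1
  set ζ : ℕ → EuclideanSpace ℝ (Fin n) → ℝ := fun j =>
    Ω₀.indicator fun x => Tf (ε j) (Wf u e x) * φ j x with hζd
  have hζ : ∀ j, IsTestOn Ω (ζ j) := fun j =>
    h.test_of (hcs j) (hL j) (hε j) (Tf_c1 (hε j)) (fun s hs => Tf_zero hs)
  have hQ : ∀ j, Qf a f Ω u (ζ j) (ζ j) ≤ q j := fun j => by
    have := h.Q_est (hL j) (hcs j) (hε j)
    refine this.trans (add_le_add le_rfl (hεD j))
  have hQξ := h.Q_nonneg hξ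
  have hsq : Tendsto (fun j => √(q j)) atTop (𝓝 0) := by
    simpa using hqlim.sqrt
  have hB : Tendsto (fun j => Qf a f Ω u (ζ j) ξ) atTop (𝓝 0) := by
    have hlim : Tendsto (fun j => √(q j * Qf a f Ω u ξ ξ)) atTop (𝓝 0) := by
      simpa using (hqlim.mul_const (Qf a f Ω u ξ ξ)).sqrt
    refine squeeze_zero_norm (fun j => ?_) hlim
    apply Real.abs_le_sqrt
    exact (h.polar (hζ j) hξ).trans (mul_le_mul_of_nonneg_right (hQ j) hQξ)
  set R := Ω₀ ∩ tsupport ξ with hR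
  have hJ : Tendsto (fun j => ∫ x in R, Tf (ε j) (Wf u e x) *
        ⟪Aop a (gradient u x) (gradient (φ j) x), gradient ξ x⟫) atTop (𝓝 0) := by
    have hlim : Tendsto (fun j => √(q j) / 2 + √(q j) / 2 *
        ∫ x in Ω, ⟪Aop a (gradient u x) (gradient ξ x), gradient ξ x⟫) atTop (𝓝 0) := by
      simpa using (hsq.div_const 2).add ((hsq.div_const 2).mul_const
        (∫ x in Ω, ⟪Aop a (gradient u x) (gradient ξ x), gradient ξ x⟫))
    refine squeeze_zero_norm (fun j => ?_) hlim
    have hs : 0 < √(q j) := Real.sqrt_pos.2 (hq0 j)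
    refine ((h.cross_bound (hL j) (hcs j) hξ (hε j) hs).2).trans (add_le_add ?_ le_rfl)
    have h1 : ‖e‖ ^ 2 * E j ≤ q j := by
      simp only [hq]
      have : 0 ≤ 1 / ((j : ℝ) + 1) := by positivity
      linarith
    have h2 : √(q j) * √(q j) = q j := Real.mul_self_sqrt (hq0 j).le
    calc 1 / (2 * √(q j)) * (‖e‖ ^ 2 * E j) ≤ 1 / (2 * √(q j)) * (√(q j) * √(q j)) := by
          rw [h2]; gcongr
      _ = √(q j) / 2 := by field_simp
  have hI0 : Tendsto (fun j => ∫ x in R, φ j x * (Tf1 (ε j) (Wf u e x) *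
      ⟪Xf a u e x, gradient ξ x⟫ - deriv f (u x) * (Tf (ε j) (Wf u e x) * ξ x))) atTop (𝓝 0) := by
    have h3 := hB.sub hJ
    rw [sub_zero] at h3
    refine h3.congr (fun j => ?_)
    have h4 := (h.Q_split (hL j) (hcs j) hξ (hε j)).2
    have h5 : Qf a f Ω u (ζ j) ξ = _ := h4
    rw [h5]; ring
  have hsplit := fun j => (h.Q_split (hL j) (hcs j) hξ (hε j)).1
  obtain ⟨il1, il2⟩ := h.intL hξ
  obtain ⟨⟨K, hK⟩, hcξ, hsξ⟩ := hξ
  have hcc : IsCompact (tsupport ξ) := hcξ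
  have hRm : MeasurableSet R := h.hΩ₀o.measurableSet.inter (isClosed_tsupport _).measurableSet
  have hRv : volume R ≠ ∞ := ((measure_mono inter_subset_right).trans_lt hcc.measure_lt_top).ne
  have hRΩ₀ : R ⊆ Ω₀ := inter_subset_left
  have hRΩ : R ⊆ Ω := hRΩ₀.trans h.hsub
  set W := {x | Wf u e x < 0} with hW
  have hWm : MeasurableSet W := measurableSet_lt w_meas measurable_const
  have hP' : IsCompact (closure Ω₀ ∩ tsupport ξ) := hcc.inter_left isClosed_closure
  have hun := hunif _ hP' inter_subset_left
  have hRP : R ⊆ closure Ω₀ ∩ tsupport ξ := inter_subset_inter_left _ subset_closure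
  have hI : Tendsto (fun j => ∫ x in R, φ j x * (Tf1 (ε j) (Wf u e x) *
      ⟪Xf a u e x, gradient ξ x⟫ - deriv f (u x) * (Tf (ε j) (Wf u e x) * ξ x))) atTop
      (𝓝 (∫ x in R, W.indicator (fun x => deriv f (u x) * (Wf u e x * ξ x) -
        ⟪Xf a u e x, gradient ξ x⟫) x)) := by
    refine tendsto_integral_filter_of_dominated_convergence
      (fun x => 2 * (|⟪Xf a u e x, gradient ξ x⟫| + |deriv f (u x) * (Wf u e x * ξ x)|)) ?_ ?_ ?_ ?_
    · exact Eventually.of_forall fun j => (hsplit j).aestronglyMeasurable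
    · filter_upwards [Metric.tendstoUniformlyOn_iff.1 hun 1 one_pos] with j hj
      filter_upwards [ae_restrict_mem hRm] with x hx
      have h1 := hj x (hRP hx)
      rw [Real.dist_eq, abs_lt] at h1
      obtain ⟨t1, t2, t3, -⟩ := Tf_bds (hε j) (Wf u e x)
      rw [norm_mul, Real.norm_eq_abs, Real.norm_eq_abs, abs_of_nonneg (hpos j x)]
      apply mul_le_mul (by linarith) _ (abs_nonneg _) (by norm_num)
      refine (abs_sub _ _).trans (add_le_add ?_ ?_)
      · rw [abs_mul]; exact mul_le_of_le_one_left (abs_nonneg _) t3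
      · rw [abs_mul, abs_mul, abs_mul, abs_mul, abs_of_nonneg t1]
        gcongr
    · exact (((il1.mono_set hRΩ).abs).add ((il2.mono_set hRΩ).abs)).const_mul 2
    · filter_upwards [ae_restrict_mem hRm] with x hx
      have hφ1 : Tendsto (fun j => φ j x) atTop (𝓝 1) := hun.tendsto_at (hRP hx)
      by_cases hw : Wf u e x < 0
      · rw [indicator_of_mem (show x ∈ W from hw)]
        obtain ⟨l1, l2⟩ := Tf_lim hε hεlim hw
        have := hφ1.mul ((l2.mul_const ⟪Xf a u e x, gradient ξ x⟫).sub
          ((l1.mul_const (ξ x)).const_mul (deriv f (u x))))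
        convert this using 2
        ring
      · rw [indicator_of_notMem (show x ∉ W from hw)]
        refine tendsto_const_nhds.congr (fun j => ?_)
        have hh : -ε j ≤ Wf u e x := by
          have := hε j; push Not at hw; linarith
        rw [Tf_zero hh, Tf1_zero (hε j) hh]; simp
  have hfin := tendsto_nhds_unique hI hI0
  rw [setIntegral_indicator hWm] at hfin
  have hsub2 : R ∩ W ⊆ Ω := inter_subset_left.trans hRΩ
  rw [integral_sub (il2.mono_set hsub2) (il1.mono_set hsub2)] at hfin
  have hss : R ∩ W ⊆ Ω₀ ∩ W := inter_subset_inter_left _ hRΩ₀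
  have hnot : ∀ x ∈ (Ω₀ ∩ W) \ (R ∩ W), x ∉ tsupport ξ := fun x hx hx' =>
    hx.2 ⟨⟨hx.1.1, hx'⟩, hx.1.2⟩
  rw [setIntegral_eq_of_subset_of_forall_diff_eq_zero (h.hΩ₀o.measurableSet.inter hWm) hss,
    setIntegral_eq_of_subset_of_forall_diff_eq_zero (h.hΩ₀o.measurableSet.inter hWm) hss]
  · linarith
  · intro x hx; rw [image_eq_zero_of_notMem_tsupport (hnot x hx)]; simp
  · intro x hx; rw [grad_eq_zero_of_notMem (hnot x hx)]; simp

end Setup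
namespace Setup

variable {a f : ℝ → ℝ} {Ω Ω₀ : Set (EuclideanSpace ℝ (Fin n))}
    {u : EuclideanSpace ℝ (Fin n) → ℝ} {Du : EuclideanSpace ℝ (Fin n) → EuclideanSpace ℝ (Fin n)}
    {e : EuclideanSpace ℝ (Fin n)}

theorem locsol_gen (h : Setup a f Ω u Du Ω₀ e) {x0 : EuclideanSpace ℝ (Fin n)} {R : ℝ}
    (hR : 0 < R) (hB : closedBall x0 R ⊆ Ω) {σ : ℝ} (hσ : σ * σ = 1)
    {v : EuclideanSpace ℝ (Fin n) → ℝ} {L : NNReal} (hL : LipschitzOnWith L v (ball x0 R))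
    (hv0 : ∀ x ∈ ball x0 R, 0 ≤ v x)
    (hvw : ∀ x ∈ ball x0 R, 0 < v x → v =ᶠ[𝓝 x] fun y => σ * Wf u e y)
    (hweak : ∀ ξ : EuclideanSpace ℝ (Fin n) → ℝ, IsTestOn Ω ξ → tsupport ξ ⊆ ball x0 R →
      ∫ x in ball x0 R ∩ {x | 0 < v x}, ⟪Xf a u e x, gradient ξ x⟫
        = ∫ x in ball x0 R ∩ {x | 0 < v x}, deriv f (u x) * (Wf u e x * ξ x)) :
    ∃ R L lam Lam C0, LocSol x0 R v (fun x => σ • Xf a u e x) (fun x => deriv f (u x))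
      L lam Lam C0 := by
  have hbΩ : ball x0 R ⊆ Ω := ball_subset_closedBall.trans hB
  have hgc : ContinuousOn (gradient u) (closedBall x0 R) :=
    (grad_contDiffOn h.hΩ h.hu2).continuousOn.mono hB
  obtain ⟨lam, Lam, hl, hLam, hell⟩ := Aop_ell h.ha h.hapos h.hlam
    ((isCompact_closedBall x0 R).image_of_continuousOn hgc)
  have hcc : ContinuousOn (fun x => deriv f (u x)) (closedBall x0 R) :=
    (h.hf.continuous_deriv (by norm_num)).comp_continuousOn (h.hu2.continuousOn.mono hB)
  obtain ⟨C0, hC0⟩ := (isCompact_closedBall x0 R).exists_bound_of_continuousOn hcc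
  have hσa : |σ| = 1 := by
    have : |σ| * |σ| = 1 := by rw [abs_mul_abs_self, hσ]
    nlinarith [abs_nonneg σ]
  have hgv : ∀ x ∈ ball x0 R, 0 < v x → gradient v x = σ • gradient (Wf u e) x := by
    intro x hx hx0
    rw [(hvw x hx hx0).gradient_eq]
    have hd : DifferentiableAt ℝ (Wf u e) x := (h.w_diff (hbΩ hx)).differentiableAt (by norm_num)
    unfold gradient
    rw [fderiv_const_mul hd, map_smulₛₗ]
    simp
  refine ⟨R, L, lam, Lam, max C0 0, hR, hv0, hL, ?_, ?_, hl, hLam, le_max_right _ _, ?_, ?_, ?_,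
    ?_, ?_⟩
  · rintro x ⟨hx, hx0⟩
    have h1 : ContDiffAt ℝ 1 (fun y => σ * Wf u e y) x := contDiffAt_const.mul (h.w_diff (hbΩ hx))
    exact (h1.congr_of_eventuallyEq (hvw x hx hx0)).contDiffWithinAt
  · exact ((Xf_cont h.ha h.hΩ h.hu2).mono hbΩ).const_smul σ
  · intro x hx hx0
    rw [hgv x hx hx0, norm_smul, Real.norm_eq_abs, hσa, one_mul, real_inner_smul_left,
      real_inner_smul_right, ← mul_assoc, hσ, one_mul]
    exact (hell _ ⟨x, ball_subset_closedBall hx, rfl⟩ _).1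
  · intro x hx hx0
    rw [hgv x hx hx0, norm_smul, norm_smul, Real.norm_eq_abs, hσa, one_mul, one_mul]
    exact (hell _ ⟨x, ball_subset_closedBall hx, rfl⟩ _).2
  · exact hcc.mono ball_subset_closedBall
  · intro x hx
    exact (hC0 x (ball_subset_closedBall hx)).trans (le_max_left _ _)
  · intro ξ hξ
    have hop : IsOpen (ball x0 R ∩ {x | 0 < v x}) :=
      hL.continuousOn.isOpen_inter_preimage isOpen_ball isOpen_Ioi
    have h1 := hweak ξ ⟨hξ.1, hξ.2.1, hξ.2.2.trans hbΩ⟩ hξ.2.2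
    have h2 : ∫ x in ball x0 R ∩ {x | 0 < v x}, ⟪σ • Xf a u e x, gradient ξ x⟫
        = σ * ∫ x in ball x0 R ∩ {x | 0 < v x}, ⟪Xf a u e x, gradient ξ x⟫ := by
      rw [← integral_const_mul]
      refine integral_congr_ae (Eventually.of_forall fun x => ?_)
      simp only [real_inner_smul_left]
    have h3 : ∫ x in ball x0 R ∩ {x | 0 < v x}, deriv f (u x) * (v x * ξ x)
        = σ * ∫ x in ball x0 R ∩ {x | 0 < v x}, deriv f (u x) * (Wf u e x * ξ x) := by
      rw [← integral_const_mul]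
      refine setIntegral_congr_fun hop.measurableSet fun x hx => ?_
      have := (hvw x hx.1 hx.2).eq_of_nhds
      simp only [this]
      ring
    rw [h2, h3, h1]

theorem exists_ball (h : Setup a f Ω u Du Ω₀ e) {x0 : EuclideanSpace ℝ (Fin n)}
    {U : Set (EuclideanSpace ℝ (Fin n))} (hU : U ∈ 𝓝 x0) (hx0 : x0 ∈ Ω) :
    ∃ R > 0, closedBall x0 R ⊆ U ∧ ∃ L, LipschitzOnWith L (Wf u e) (ball x0 R) := by
  obtain ⟨K, t, ht, hK⟩ := (h.w_diff hx0).exists_lipschitzOnWith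
  obtain ⟨R, hR, hRs⟩ := Metric.nhds_basis_closedBall.mem_iff.1 (inter_mem hU ht)
  exact ⟨R, hR, hRs.trans inter_subset_left, K,
    hK.mono (ball_subset_closedBall.trans (hRs.trans inter_subset_right))⟩

/-- The extended negative part of `⟨∇u,e⟩`. -/
def vneg (Ω₀ : Set (EuclideanSpace ℝ (Fin n))) (u : EuclideanSpace ℝ (Fin n) → ℝ)
    (e : EuclideanSpace ℝ (Fin n)) : EuclideanSpace ℝ (Fin n) → ℝ :=
  Ω₀.indicator fun x => max (-Wf u e x) 0

theorem vneg_nonneg (x : EuclideanSpace ℝ (Fin n)) : 0 ≤ vneg Ω₀ u e x :=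
  indicator_nonneg (fun _ _ => le_max_right _ _) x

theorem vneg_pos {x : EuclideanSpace ℝ (Fin n)} :
    0 < vneg Ω₀ u e x ↔ x ∈ Ω₀ ∧ Wf u e x < 0 := by
  unfold vneg
  by_cases hx : x ∈ Ω₀
  · rw [indicator_of_mem hx]
    simp [hx]
  · rw [indicator_of_notMem hx]
    simp [hx]

theorem vneg_lip (h : Setup a f Ω u Du Ω₀ e) {x0 : EuclideanSpace ℝ (Fin n)} {R : ℝ}
    (hB : ball x0 R ⊆ Ω) {L : NNReal} (hL : LipschitzOnWith L (Wf u e) (ball x0 R)) :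
    LipschitzOnWith L (vneg Ω₀ u e) (ball x0 R) := by
  have hmix : ∀ y ∈ ball x0 R, ∀ z ∈ ball x0 R, y ∈ Ω₀ → z ∉ Ω₀ →
      max (-Wf u e y) 0 ≤ L * dist y z := by
    intro y hy z hz hy0 hz0
    have hseg : IsPreconnected (segment ℝ y z) := (convex_segment y z).isPreconnected
    have hsub : segment ℝ y z ⊆ ball x0 R := (convex_ball x0 R).segment_subset hy hz
    obtain ⟨q, hq, hqf⟩ : ∃ q ∈ segment ℝ y z, q ∈ frontier Ω₀ := by
      by_contra! hno
      have hcl : ∀ q ∈ segment ℝ y z, q ∉ Ω₀ → q ∈ (closure Ω₀)ᶜ := by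
        intro q hq hq0 hqc
        apply hno q hq
        rw [h.hΩ₀o.frontier_eq]
        exact ⟨hqc, hq0⟩
      obtain ⟨q, -, hq1, hq2⟩ := hseg Ω₀ (closure Ω₀)ᶜ h.hΩ₀o isClosed_closure.isOpen_compl
        (fun q hq => by
          by_cases hq0 : q ∈ Ω₀
          · exact Or.inl hq0
          · exact Or.inr (hcl q hq hq0))
        ⟨y, left_mem_segment ℝ y z, hy0⟩
        ⟨z, right_mem_segment ℝ y z, hcl z (right_mem_segment ℝ y z) hz0⟩
      exact hq2 (subset_closure hq1)
    have hw : Wf u e q = 0 := by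
      rcases h.hfr hqf with h1 | h1
      · rw [h.hΩ.frontier_eq] at h1
        exact absurd (hB (hsub hq)) h1.2
      · simp [Wf, h1.2]
    have h1 := hL.dist_le_mul y hy q (hsub hq)
    rw [hw, Real.dist_eq, sub_zero] at h1
    have h2 : dist y q ≤ dist y z := by
      have := dist_add_dist_of_mem_segment hq
      linarith [dist_nonneg (x := q) (y := z)]
    have h3 : (L : ℝ) * dist y q ≤ L * dist y z := by gcongr
    refine max_le ?_ (by positivity)
    linarith [neg_le_abs (Wf u e y)]
  refine LipschitzOnWith.of_dist_le_mul fun y hy z hz => ?_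
  unfold vneg
  by_cases hy0 : y ∈ Ω₀ <;> by_cases hz0 : z ∈ Ω₀
  · rw [indicator_of_mem hy0, indicator_of_mem hz0, Real.dist_eq]
    have h1 := hL.dist_le_mul y hy z hz
    rw [Real.dist_eq] at h1
    refine (abs_max_sub_max_le_abs _ _ _).trans ?_
    rwa [neg_sub_neg, abs_sub_comm]
  · rw [indicator_of_mem hy0, indicator_of_notMem hz0, Real.dist_eq, sub_zero,
      abs_of_nonneg (le_max_right _ _)]
    exact hmix y hy z hz hy0 hz0
  · rw [indicator_of_notMem hy0, indicator_of_mem hz0, dist_comm, dist_comm y z, Real.dist_eq,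
      sub_zero, abs_of_nonneg (le_max_right _ _)]
    exact hmix z hz y hy hz0 hy0
  · rw [indicator_of_notMem hy0, indicator_of_notMem hz0, dist_self]
    positivity

theorem vneg_locsol (h : Setup a f Ω u Du Ω₀ e) (hmeg : ModerateEnergyGrowth a u Ω₀)
    {x0 : EuclideanSpace ℝ (Fin n)} (hx0 : x0 ∈ Ω) :
    ∃ R L lam Lam C0, LocSol x0 R (vneg Ω₀ u e) (fun x => (-1 : ℝ) • Xf a u e x)
      (fun x => deriv f (u x)) L lam Lam C0 := by
  obtain ⟨R, hR, hB, L, hL⟩ := h.exists_ball (h.hΩ.mem_nhds hx0) hx0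
  have hbΩ : ball x0 R ⊆ Ω := ball_subset_closedBall.trans hB
  refine h.locsol_gen hR hB (by norm_num) (h.vneg_lip hbΩ hL) (fun x _ => vneg_nonneg x) ?_ ?_
  · intro x hx hx1
    obtain ⟨hx2, hx3⟩ := vneg_pos.1 hx1
    have hc : ContinuousAt (Wf u e) x := (h.w_diff (hbΩ hx)).continuousAt
    filter_upwards [h.hΩ₀o.mem_nhds hx2, hc.eventually_lt_const hx3] with y hy hy2
    unfold vneg
    rw [indicator_of_mem hy, max_eq_left (by linarith)]
    ring
  · intro ξ hξ hs
    have hwc : ContinuousOn (Wf u e) Ω₀ := (Wf_contDiffOn h.hΩ h.hu2).continuousOn.mono h.hsub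
    have hSm : MeasurableSet (Ω₀ ∩ {x | Wf u e x < 0}) :=
      (hwc.isOpen_inter_preimage h.hΩ₀o isOpen_Iio).measurableSet
    have hsubS : ball x0 R ∩ {x | 0 < vneg Ω₀ u e x} ⊆ Ω₀ ∩ {x | Wf u e x < 0} :=
      fun x hx => vneg_pos.1 hx.2
    have hout : ∀ x ∈ (Ω₀ ∩ {x | Wf u e x < 0}) \ (ball x0 R ∩ {x | 0 < vneg Ω₀ u e x}),
        x ∉ tsupport ξ := by
      rintro x ⟨hx1, hx2⟩ hx3
      exact hx2 ⟨hs hx3, vneg_pos.2 hx1⟩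
    have hn := h.null_form hmeg hξ
    rwa [setIntegral_eq_of_subset_of_forall_sdiff_eq_zero hSm hsubS,
      setIntegral_eq_of_subset_of_forall_sdiff_eq_zero hSm hsubS] at hn
    · intro x hx
      rw [image_eq_zero_of_notMem_tsupport (hout x hx)]
      ring
    · intro x hx
      rw [grad_eq_zero_of_notMem (hout x hx), inner_zero_right]

theorem w_locsol (h : Setup a f Ω u Du Ω₀ e) (hw : ∀ x ∈ Ω₀, 0 ≤ Wf u e x)
    {x0 : EuclideanSpace ℝ (Fin n)} (hx0 : x0 ∈ Ω₀) :
    ∃ R L lam Lam C0, LocSol x0 R (Wf u e) (fun x => (1 : ℝ) • Xf a u e x)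
      (fun x => deriv f (u x)) L lam Lam C0 := by
  obtain ⟨R, hR, hB, L, hL⟩ := h.exists_ball (h.hΩ₀o.mem_nhds hx0) (h.hsub hx0)
  have hb0 : ball x0 R ⊆ Ω₀ := ball_subset_closedBall.trans hB
  refine h.locsol_gen hR (hB.trans h.hsub) (by norm_num) hL (fun x hx => hw x (hb0 hx)) ?_ ?_
  · intro x hx hx1
    exact Eventually.of_forall fun y => by simp
  · intro ξ hξ hs
    have hsubS : ball x0 R ∩ {x | 0 < Wf u e x} ⊆ Ω := fun x hx => h.hsub (hb0 hx.1)
    have hout : ∀ x ∈ Ω \ (ball x0 R ∩ {x | 0 < Wf u e x}),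
        x ∉ tsupport ξ ∨ (Wf u e x = 0 ∧ Xf a u e x = 0) := by
      rintro x ⟨hx1, hx2⟩
      by_cases hx3 : x ∈ tsupport ξ
      · right
        have hxb := hs hx3
        have h0 : Wf u e x = 0 :=
          le_antisymm (not_lt.1 fun hc => hx2 ⟨hxb, hc⟩) (hw x (hb0 hxb))
        have hmin : IsLocalMin (Wf u e) x := by
          filter_upwards [h.hΩ₀o.mem_nhds (hb0 hxb)] with y hy
          rw [h0]
          exact hw y hy
        have hg : gradient (Wf u e) x = 0 := by
          unfold gradient
          rw [hmin.fderiv_eq_zero, map_zero]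
        refine ⟨h0, ?_⟩
        simp [Xf, hg, Aop]
      · exact Or.inl hx3
    have hn := linearized (e := e) h.ha h.hf h.hΩ h.hu2 h.hsol hξ
    rwa [setIntegral_eq_of_subset_of_forall_sdiff_eq_zero h.hΩ.measurableSet hsubS,
      setIntegral_eq_of_subset_of_forall_sdiff_eq_zero h.hΩ.measurableSet hsubS] at hn
    · intro x hx
      rcases hout x hx with h1 | h1
      · rw [image_eq_zero_of_notMem_tsupport h1]
        ring
      · rw [h1.1]
        ring
    · intro x hx
      rcases hout x hx with h1 | h1
      · rw [grad_eq_zero_of_notMem h1, inner_zero_right]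
      · rw [h1.2, inner_zero_left]

theorem concl (h : Setup a f Ω u Du Ω₀ e) (hΩc : IsPreconnected Ω) (hΩ₀c : IsPreconnected Ω₀)
    (he2 : ∃ p ∈ closure Ω₀ ∩ frontier Ω, ⟪Du p, e⟫ ≠ 0)
    (hmeg : ModerateEnergyGrowth a u Ω₀) : ∀ x ∈ Ω₀, 0 < Wf u e x := by
  obtain ⟨p, hp, hpe⟩ := he2
  have hn : n ≠ 0 := by
    rintro rfl
    apply hpe
    rw [Subsingleton.elim e 0, inner_zero_right]
  have hppos : 0 < ⟪Du p, e⟫ := lt_of_le_of_ne (h.he1 p hp) (Ne.symm hpe)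
  obtain ⟨x1, hx1, hx1p⟩ : ∃ x1 ∈ Ω₀, 0 < Wf u e x1 := by
    have hc : ContinuousWithinAt (fun x => ⟪Du x, e⟫) Ω₀ p :=
      ((h.hDuc p (h.clsub hp.1)).mono (h.hsub.trans subset_closure)).inner (𝕜 := ℝ)
        continuousWithinAt_const
    haveI : (𝓝[Ω₀] p).NeBot := mem_closure_iff_nhdsWithin_neBot.1 hp.1
    obtain ⟨x, hx1, hx2⟩ := ((hc.eventually_const_lt hppos).and self_mem_nhdsWithin).exists
    refine ⟨x, hx2, ?_⟩
    rw [h.hDu x (h.hsub hx2)] at hx1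
    exact hx1
  have hw0 : ∀ x ∈ Ω₀, 0 ≤ Wf u e x := by
    intro x hx
    by_contra hneg
    have hvx : 0 < vneg Ω₀ u e x := vneg_pos.2 ⟨hx, not_le.1 hneg⟩
    have hvc : ContinuousOn (vneg Ω₀ u e) Ω := by
      intro y hy
      obtain ⟨R, hR, hB, L, hL⟩ := h.exists_ball (h.hΩ.mem_nhds hy) hy
      exact ((h.vneg_lip (ball_subset_closedBall.trans hB) hL).continuousOn.continuousAt
        (ball_mem_nhds y hR)).continuousWithinAt
    have := smp_global hn h.hΩ hΩc hvc (fun y hy => h.vneg_locsol hmeg hy) (h.hsub hx) hvx x1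
      (h.hsub hx1)
    exact absurd (vneg_pos.1 this).2 (not_lt.2 hx1p.le)
  exact smp_global hn h.hΩ₀o hΩ₀c ((Wf_contDiffOn h.hΩ h.hu2).continuousOn.mono h.hsub)
    (fun y hy => h.w_locsol hw0 hy) hx1 hx1p

end Setup

/-- Theorem 3.5 of the paper, in `ℝⁿ` with the Killing field a constant field `e`:
monotonicity from moderate energy growth. -/
theorem monotonicity_from_moderate_energy_growth
    (n : ℕ) (Ω : Set (EuclideanSpace ℝ (Fin n)))
    (hΩ : IsCkDomain 1 Ω)
    (a : ℝ → ℝ) (ha : ContDiffOn ℝ 1 a (Ici 0))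
    (hapos : ∀ t ≥ (0 : ℝ), 0 < a t) (hlam : ∀ t ≥ (0 : ℝ), 0 < lam1 a t)
    (f : ℝ → ℝ) (hf : ContDiff ℝ 1 f)
    (u : EuclideanSpace ℝ (Fin n) → ℝ)
    (hu2 : ContDiffOn ℝ 2 u Ω) (hucl : ContinuousOn u (closure Ω))
    (Du : EuclideanSpace ℝ (Fin n) → EuclideanSpace ℝ (Fin n))
    (hDu : ∀ x ∈ Ω, Du x = gradient u x) (hDuc : ContinuousOn Du (closure Ω))
    (hnc : ¬ ∃ c : ℝ, ∀ x ∈ Ω, u x = c)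
    (hsol : IsWeakSolution a f Ω u) (hstab : IsStable a f Ω u)
    (Ω₀ : Set (EuclideanSpace ℝ (Fin n)))
    (hΩ₀o : IsOpen Ω₀) (hΩ₀c : IsConnected Ω₀) (hΩ₀sub : Ω₀ ⊆ Ω)
    (hfr : frontier Ω₀ ⊆ frontier Ω ∪ {x ∈ Ω | gradient u x = 0})
    (e : EuclideanSpace ℝ (Fin n))
    (he1 : ∀ p ∈ closure Ω₀ ∩ frontier Ω, 0 ≤ ⟪Du p, e⟫)
    (he2 : ∃ p ∈ closure Ω₀ ∩ frontier Ω, ⟪Du p, e⟫ ≠ 0)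
    (hmeg : ModerateEnergyGrowth a u Ω₀) :
    ∀ x ∈ Ω₀, 0 < ⟪gradient u x, e⟫ := by
  have h : Setup a f Ω u Du Ω₀ e :=
    ⟨hΩ.2.1, ha, hapos, hlam, hf, hu2, hucl, hDu, hDuc, hsol, hstab, hΩ₀o, hΩ₀sub, hfr, he1⟩
  exact h.concl hΩ.2.2.1.isPreconnected hΩ₀c.isPreconnected he2 hmeg
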